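/- arXiv:2402.14319 — 2 statements merged into one kernel-verified Lean document; each statement's English description precedes it below -/
import Mathlib

section
/- Let n ≥ 1, p = 1 + 2/n, and T_* ∈ (0,∞). Then there exists ε > 0 with the following property: if φ is a locally integrable function on ℝ^n with |||φ|||_{1,n/2;T^{1/2}} ≤ ε for some T ∈ (0,T_*], then there exists a solution u of the semilinear heat equation ∂_t u − Δu = |u|^{p−1}u on ℝ^n × (0,T) with initial data φ (in the Duhamel integral sense), such that sup_{t∈(0,T)} |||u(t)|||_{1,n/2;T^{1/2}} < ∞ and sup_{t∈(0,T)} t^{n/2} [log(e+1/t)]^{n/2} ‖u(t)‖_{L^∞} < ∞, and u(t) → φ as t → 0+ in the sense of distributions (i.e. ∫ u(x,t)η(x)dx → ∫ φ(x)η(x)dx for every continuous compactly supported η). -/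
open MeasureTheory Real Set ENNReal

noncomputable def logFac (s : ℝ) : ℝ := Real.log (Real.exp 1 + 1 / s)

noncomputable def zygNorm (n : ℕ) (q α : ℝ)
    (f : EuclideanSpace ℝ (Fin n) → ℝ) : ℝ≥0∞ :=
  ⨆ s : Set.Ioi (0 : ℝ),
    (ENNReal.ofReal (logFac s.1) ^ α *
      ⨆ E : {E : Set (EuclideanSpace ℝ (Fin n)) //
          MeasurableSet E ∧ volume E = ENNReal.ofReal s.1},
        ∫⁻ x in E.1, ENNReal.ofReal (|f x| ^ q)) ^ (1 / q)

noncomputable def zygNormUL (n : ℕ) (q α ρ : ℝ)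
    (f : EuclideanSpace ℝ (Fin n) → ℝ) : ℝ≥0∞ :=
  ⨆ z : EuclideanSpace ℝ (Fin n),
    zygNorm n q α ((Metric.ball z ρ).indicator f)

noncomputable def heatKernel (n : ℕ) (x : EuclideanSpace ℝ (Fin n)) (t : ℝ) : ℝ :=
  (4 * Real.pi * t) ^ (-(n : ℝ) / 2) * Real.exp (-‖x‖ ^ 2 / (4 * t))

/-- `u` is a solution of `∂ₜu − Δu = |u|^{p−1}u` on `ℝ^n × (0,T)` with initial data `φ`,
in the Duhamel integral sense. -/
def IsSolution (n : ℕ) (p T : ℝ) (φ : EuclideanSpace ℝ (Fin n) → ℝ)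
    (u : EuclideanSpace ℝ (Fin n) → ℝ → ℝ) : Prop :=
  Measurable (fun q : EuclideanSpace ℝ (Fin n) × ℝ => u q.1 q.2) ∧
  ∀ᵐ q : EuclideanSpace ℝ (Fin n) × ℝ
      ∂(volume.prod (volume.restrict (Set.Ioo 0 T))),
    Integrable (fun y => heatKernel n (q.1 - y) q.2 * φ y) volume ∧
    Integrable (fun ys : EuclideanSpace ℝ (Fin n) × ℝ =>
        heatKernel n (q.1 - ys.1) (q.2 - ys.2) * (|u ys.1 ys.2| ^ (p - 1) * u ys.1 ys.2))
      (volume.prod (volume.restrict (Set.Ioo 0 q.2))) ∧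
    u q.1 q.2 = (∫ y, heatKernel n (q.1 - y) q.2 * φ y) +
      ∫ s in Set.Ioo 0 q.2, ∫ y,
        heatKernel n (q.1 - y) (q.2 - s) * (|u y s| ^ (p - 1) * u y s)

abbrev Eu (n : ℕ) := EuclideanSpace ℝ (Fin n)

noncomputable def HH (n : ℕ) (x : Eu n) (t : ℝ) : ℝ≥0∞ := ENNReal.ofReal (heatKernel n x t)

noncomputable def Sg (n : ℕ) (f : Eu n → ℝ≥0∞) (x : Eu n) (t : ℝ) : ℝ≥0∞ :=
  ∫⁻ y, HH n (x - y) t * f y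

lemma heatKernel_nonneg (n : ℕ) (x : Eu n) {t : ℝ} (ht : 0 ≤ t) : 0 ≤ heatKernel n x t := by
  unfold heatKernel; positivity

lemma measurable_heatKernel (n : ℕ) : Measurable (fun q : Eu n × ℝ => heatKernel n q.1 q.2) := by
  unfold heatKernel
  fun_prop

lemma measurable_HH (n : ℕ) : Measurable (fun q : Eu n × ℝ => HH n q.1 q.2) := by
  unfold HH
  exact (measurable_heatKernel n).ennreal_ofReal

lemma measurable_HH_comp {α : Type*} [MeasurableSpace α] (n : ℕ) {f : α → Eu n} {g : α → ℝ}
    (hf : Measurable f) (hg : Measurable g) : Measurable (fun a => HH n (f a) (g a)) :=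
  (measurable_HH n).comp (hf.prodMk hg)

lemma measurable_heatKernel_comp {α : Type*} [MeasurableSpace α] (n : ℕ) {f : α → Eu n} {g : α → ℝ}
    (hf : Measurable f) (hg : Measurable g) : Measurable (fun a => heatKernel n (f a) (g a)) :=
  (measurable_heatKernel n).comp (hf.prodMk hg)

lemma measurable_Sg (n : ℕ) {f : Eu n → ℝ≥0∞} (hf : Measurable f) :
    Measurable (fun q : Eu n × ℝ => Sg n f q.1 q.2) := by
  unfold Sg
  apply Measurable.lintegral_prod_right
    (f := fun (q : Eu n × ℝ) (y : Eu n) => HH n (q.1 - y) q.2 * f y)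
  apply Measurable.mul
  · apply measurable_HH_comp <;> fun_prop
  · fun_prop

lemma measurable_Sg_x (n : ℕ) {f : Eu n → ℝ≥0∞} (hf : Measurable f) (t : ℝ) :
    Measurable (fun x : Eu n => Sg n f x t) :=
  (measurable_Sg n hf).comp (f := fun x : Eu n => (x, t)) (by fun_prop)

lemma integral_heatKernel (n : ℕ) {t : ℝ} (ht : 0 < t) : ∫ x, heatKernel n x t = 1 := by
  have h := GaussianFourier.integral_rexp_neg_mul_sq_norm (V := Eu n) (b := 1 / (4 * t)) (by positivity)
  unfold heatKernel
  rw [integral_const_mul]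
  have : ∀ x : Eu n, -‖x‖ ^ 2 / (4 * t) = -(1 / (4 * t)) * ‖x‖ ^ 2 := by intro x; ring
  simp_rw [this]
  rw [h]
  simp only [finrank_euclideanSpace, Fintype.card_fin]
  have : π / (1 / (4 * t)) = 4 * π * t := by field_simp
  rw [this, ← Real.rpow_add (by positivity)]
  ring_nf
  simp

lemma integrable_heatKernel (n : ℕ) {t : ℝ} (ht : 0 < t) :
    Integrable (fun x => heatKernel n x t) := by
  by_contra h
  have := integral_heatKernel n ht
  rw [integral_undef h] at this
  norm_num at this

lemma lintegral_HH (n : ℕ) {t : ℝ} (ht : 0 < t) : ∫⁻ x, HH n x t = 1 := by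
  unfold HH
  rw [← ofReal_integral_eq_lintegral_ofReal (integrable_heatKernel n ht)
    (Filter.Eventually.of_forall fun x => heatKernel_nonneg n x ht.le), integral_heatKernel n ht]
  simp

lemma lintegral_HH_sub (n : ℕ) {t : ℝ} (ht : 0 < t) (x : Eu n) : ∫⁻ y, HH n (x - y) t = 1 := by
  rw [lintegral_sub_left_eq_self (fun y => HH n y t) x, lintegral_HH n ht]

lemma lintegral_HH_sub' (n : ℕ) {t : ℝ} (ht : 0 < t) (x : Eu n) : ∫⁻ y, HH n (y - x) t = 1 := by
  rw [lintegral_sub_right_eq_self (fun y => HH n y t) x, lintegral_HH n ht]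

lemma heatKernel_mul (n : ℕ) {a b : ℝ} (ha : 0 < a) (hb : 0 < b) (x y z : Eu n) :
    heatKernel n (x - y) a * heatKernel n (y - z) b =
      heatKernel n (x - z) (a + b) *
        heatKernel n (y - ((a + b)⁻¹ • (b • x + a • z))) (a * b / (a + b)) := by
  have hab : 0 < a + b := by positivity
  have e1 : x - z = (x - y) + (y - z) := by abel
  have e2 : y - ((a + b)⁻¹ • (b • x + a • z)) = (a + b)⁻¹ • (a • (y - z) - b • (x - y)) := by
    have : y = (a + b)⁻¹ • ((a + b) • y) := by rw [smul_smul, inv_mul_cancel₀ hab.ne', one_smul]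
    nth_rewrite 1 [this]
    rw [← smul_sub]
    congr 1
    module
  rw [e1, e2]
  generalize x - y = P
  generalize y - z = Q
  unfold heatKernel
  have n1 : ‖P + Q‖ ^ 2 = ‖P‖ ^ 2 + 2 * inner ℝ P Q + ‖Q‖ ^ 2 := norm_add_sq_real P Q
  have n2 : ‖(a + b)⁻¹ • (a • Q - b • P)‖ ^ 2 =
      ((a + b)⁻¹) ^ 2 * (a ^ 2 * ‖Q‖ ^ 2 - 2 * a * b * inner ℝ P Q + b ^ 2 * ‖P‖ ^ 2) := by
    rw [norm_smul, mul_pow, norm_sub_sq_real, norm_smul, norm_smul, inner_smul_left,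
      inner_smul_right, real_inner_comm]
    simp only [Real.norm_eq_abs, mul_pow, sq_abs, conj_trivial]
    ring
  rw [n1, n2]
  rw [mul_mul_mul_comm, mul_mul_mul_comm ((4 * π * (a + b)) ^ (-(n:ℝ) / 2)), ← Real.exp_add,
    ← Real.exp_add, ← Real.mul_rpow (by positivity) (by positivity), ← Real.mul_rpow (by positivity) (by positivity)]
  congr 2
  · field_simp
  · field_simp
    ring

lemma HH_CK (n : ℕ) {a b : ℝ} (ha : 0 < a) (hb : 0 < b) (x z : Eu n) :
    ∫⁻ y, HH n (x - y) a * HH n (y - z) b = HH n (x - z) (a + b) := by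
  have : ∀ y, HH n (x - y) a * HH n (y - z) b = HH n (x - z) (a + b) *
        HH n (y - ((a + b)⁻¹ • (b • x + a • z))) (a * b / (a + b)) := by
    intro y
    unfold HH
    rw [← ENNReal.ofReal_mul (heatKernel_nonneg n _ ha.le), heatKernel_mul n ha hb,
      ENNReal.ofReal_mul (heatKernel_nonneg n _ (by positivity))]
  simp_rw [this]
  rw [lintegral_const_mul _ (measurable_HH_comp n (by fun_prop) (by fun_prop)),
    lintegral_HH_sub' n (by positivity), mul_one]

lemma Sg_semigroup (n : ℕ) {f : Eu n → ℝ≥0∞} (hf : Measurable f) {a b : ℝ} (ha : 0 < a) (hb : 0 < b)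
    (x : Eu n) : ∫⁻ y, HH n (x - y) a * Sg n f y b = Sg n f x (a + b) := by
  unfold Sg
  have h1 : ∀ y, HH n (x - y) a * ∫⁻ z, HH n (y - z) b * f z
      = ∫⁻ z, HH n (x - y) a * (HH n (y - z) b * f z) := by
    intro y
    rw [lintegral_const_mul]
    exact (measurable_HH_comp n (by fun_prop) (by fun_prop)).mul hf
  simp_rw [h1]
  rw [lintegral_lintegral_swap]
  · apply lintegral_congr
    intro z
    rw [← HH_CK n ha hb, ← lintegral_mul_const]
    · simp_rw [mul_assoc]
    · exact (measurable_HH_comp n (by fun_prop) (by fun_prop)).mul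
        (measurable_HH_comp n (by fun_prop) (by fun_prop))
  · apply Measurable.aemeasurable
    exact (measurable_HH_comp n (by fun_prop) (by fun_prop)).mul
        ((measurable_HH_comp n (by fun_prop) (by fun_prop)).mul (by fun_prop))

/-- smoothing -/
lemma heatKernel_le (n : ℕ) {t : ℝ} (ht : 0 < t) (x y w : Eu n) (h : dist y w < t ^ ((1:ℝ)/2)) :
    heatKernel n (x - y) t ≤ (2 ^ ((n:ℝ)/2) * Real.exp 1) * heatKernel n (x - w) (2 * t) := by
  unfold heatKernel
  have h1 : (4 * π * (2 * t)) ^ (-(n:ℝ)/2) = 2 ^ (-(n:ℝ)/2) * (4 * π * t) ^ (-(n:ℝ)/2) := by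
    rw [← Real.mul_rpow (by positivity) (by positivity)]
    congr 1; ring
  rw [h1]
  have h2 : (2:ℝ) ^ ((n:ℝ)/2) * 2 ^ (-(n:ℝ)/2) = 1 := by
    rw [← Real.rpow_add (by norm_num)]; ring_nf; simp
  have h3 : Real.exp (-‖x - y‖ ^ 2 / (4 * t)) ≤
      Real.exp 1 * Real.exp (-‖x - w‖ ^ 2 / (4 * (2 * t))) := by
    rw [← Real.exp_add]
    apply Real.exp_le_exp.mpr
    have ha : ‖x - w‖ ≤ ‖x - y‖ + dist y w := by
      rw [dist_eq_norm]
      calc ‖x - w‖ = ‖(x - y) + (y - w)‖ := by congr 1; abel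
        _ ≤ _ := norm_add_le _ _
    have hb : (dist y w) ^ 2 ≤ t := by
      have : (t ^ ((1:ℝ)/2)) ^ 2 = t := by
        rw [← Real.rpow_natCast, ← Real.rpow_mul ht.le]; simp
      rw [← this]
      gcongr
    have hc : ‖x - w‖ ^ 2 ≤ 2 * ‖x - y‖ ^ 2 + 2 * t := by
      have : ‖x - w‖ ^ 2 ≤ (‖x - y‖ + dist y w) ^ 2 := by gcongr
      nlinarith [sq_nonneg (‖x - y‖ - dist y w)]
    have e : 1 + -‖x - w‖ ^ 2 / (4 * (2 * t)) - -‖x - y‖ ^ 2 / (4 * t)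
       = (8 * t - ‖x - w‖ ^ 2 + 2 * ‖x - y‖ ^ 2) / (8 * t) := by
      field_simp; ring
    have : 0 ≤ (8 * t - ‖x - w‖ ^ 2 + 2 * ‖x - y‖ ^ 2) / (8 * t) := by
      apply div_nonneg <;> linarith
    linarith
  calc _ ≤ (4 * π * t) ^ (-(n:ℝ)/2) * (Real.exp 1 * Real.exp (-‖x - w‖ ^ 2 / (4 * (2 * t)))) := by
        gcongr
    _ = ((2:ℝ) ^ ((n:ℝ)/2) * 2 ^ (-(n:ℝ)/2)) * ((4 * π * t) ^ (-(n:ℝ)/2) *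
          (Real.exp 1 * Real.exp (-‖x - w‖ ^ 2 / (4 * (2 * t))))) := by rw [h2, one_mul]
    _ = _ := by ring

/-- volume of the ball -/
noncomputable def vb (n : ℕ) : ℝ := (volume (Metric.ball (0 : Eu n) 1)).toReal

lemma vb_pos (n : ℕ) : 0 < vb n := by
  unfold vb
  exact ENNReal.toReal_pos (Metric.measure_ball_pos _ _ (by norm_num)).ne' measure_ball_lt_top.ne

lemma volume_ball_eq (n : ℕ) (hn : 1 ≤ n) {t : ℝ} (ht : 0 < t) (x : Eu n) :
    volume (Metric.ball x (t ^ ((1:ℝ)/2))) = ENNReal.ofReal (vb n * t ^ ((n:ℝ)/2)) := by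
  have : Nonempty (Fin n) := ⟨⟨0, hn⟩⟩
  rw [Measure.addHaar_ball _ _ (by positivity), mul_comm, ENNReal.ofReal_mul (vb_pos n).le]
  unfold vb
  rw [ENNReal.ofReal_toReal measure_ball_lt_top.ne]
  congr 2
  rw [← Real.rpow_natCast, ← Real.rpow_mul ht.le]
  simp
  ring_nf

lemma Sg_smoothing (n : ℕ) (hn : 1 ≤ n) {f : Eu n → ℝ≥0∞} (hf : Measurable f) {t : ℝ} (ht : 0 < t)
    (x : Eu n) {M : ℝ≥0∞} (hM : ∀ w, ∫⁻ y in Metric.ball w (t ^ ((1:ℝ)/2)), f y ≤ M) :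
    Sg n f x t ≤ ENNReal.ofReal (2 ^ ((n:ℝ)/2) * Real.exp 1 / vb n * t ^ (-(n:ℝ)/2)) * M := by
  set c : ℝ := 2 ^ ((n:ℝ)/2) * Real.exp 1 with hc
  have hcpos : 0 < c := by positivity
  set ρ := t ^ ((1:ℝ)/2)
  set v := vb n * t ^ ((n:ℝ)/2) with hv
  have hvpos : 0 < v := mul_pos (vb_pos n) (by positivity)
  have key : ∀ y, ENNReal.ofReal v * HH n (x - y) t ≤
      ∫⁻ w, {q : Eu n × Eu n | dist q.1 q.2 < ρ}.indicator
        (fun q => ENNReal.ofReal c * HH n (x - q.2) (2 * t)) (y, w) := by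
    intro y
    calc ENNReal.ofReal v * HH n (x - y) t
        = ∫⁻ w in Metric.ball y ρ, HH n (x - y) t := by
          rw [setLIntegral_const, volume_ball_eq n hn ht y, mul_comm]
      _ ≤ ∫⁻ w in Metric.ball y ρ, ENNReal.ofReal c * HH n (x - w) (2 * t) := by
          apply setLIntegral_mono' measurableSet_ball
          intro w hw
          unfold HH
          rw [← ENNReal.ofReal_mul hcpos.le]
          apply ENNReal.ofReal_le_ofReal
          apply heatKernel_le n ht
          rw [dist_comm]; exact hw
      _ = ∫⁻ w, (Metric.ball y ρ).indicator
            (fun w => ENNReal.ofReal c * HH n (x - w) (2 * t)) w := by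
          rw [lintegral_indicator measurableSet_ball]
      _ = _ := by
          apply lintegral_congr
          intro w
          simp only [indicator, Metric.mem_ball, mem_ofPred_eq, dist_comm w y]
  have hmeas : Measurable fun q : Eu n × Eu n => {q : Eu n × Eu n | dist q.1 q.2 < ρ}.indicator
        (fun q => ENNReal.ofReal c * HH n (x - q.2) (2 * t)) q := by
    apply Measurable.indicator
    · exact (measurable_HH_comp n (by fun_prop) (by fun_prop)).const_mul _
    · exact measurableSet_lt (by fun_prop) (by fun_prop)
  have main : ENNReal.ofReal v * Sg n f x t ≤ ENNReal.ofReal c * M := by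
    calc ENNReal.ofReal v * Sg n f x t
        = ∫⁻ y, (ENNReal.ofReal v * HH n (x - y) t) * f y := by
          unfold Sg
          rw [← lintegral_const_mul]
          · simp_rw [mul_assoc]
          · exact (measurable_HH_comp n (by fun_prop) (by fun_prop)).mul hf
      _ ≤ ∫⁻ y, (∫⁻ w, {q : Eu n × Eu n | dist q.1 q.2 < ρ}.indicator
            (fun q => ENNReal.ofReal c * HH n (x - q.2) (2 * t)) (y, w)) * f y := by
          gcongr with y
          exact key y
      _ = ∫⁻ y, ∫⁻ w, {q : Eu n × Eu n | dist q.1 q.2 < ρ}.indicator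
            (fun q => ENNReal.ofReal c * HH n (x - q.2) (2 * t)) (y, w) * f y := by
          apply lintegral_congr
          intro y
          rw [lintegral_mul_const]
          exact hmeas.comp (f := fun w => (y, w)) (by fun_prop)
      _ = ∫⁻ w, ∫⁻ y, {q : Eu n × Eu n | dist q.1 q.2 < ρ}.indicator
            (fun q => ENNReal.ofReal c * HH n (x - q.2) (2 * t)) (y, w) * f y := by
          rw [lintegral_lintegral_swap]
          exact (hmeas.mul (hf.comp measurable_fst)).aemeasurable
      _ = ∫⁻ w, (ENNReal.ofReal c * HH n (x - w) (2 * t)) *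
            ∫⁻ y in Metric.ball w ρ, f y := by
          apply lintegral_congr
          intro w
          rw [← lintegral_indicator measurableSet_ball, ← lintegral_const_mul]
          · apply lintegral_congr
            intro y
            simp only [indicator, Metric.mem_ball, mem_ofPred_eq]
            split_ifs <;> simp
          · exact hf.indicator measurableSet_ball
      _ ≤ ∫⁻ w, (ENNReal.ofReal c * HH n (x - w) (2 * t)) * M := by
          gcongr with w
          exact hM w
      _ = ENNReal.ofReal c * M := by
          rw [lintegral_mul_const, lintegral_const_mul, lintegral_HH_sub n (by positivity), mul_one]
          · exact (measurable_HH_comp n (by fun_prop) (by fun_prop))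
          · exact (measurable_HH_comp n (by fun_prop) (by fun_prop)).const_mul _
  have e : c / vb n * t ^ (-(n:ℝ)/2) = v⁻¹ * c := by
    have := vb_pos n
    have h2 : t ^ (-(n:ℝ)/2) = (t ^ ((n:ℝ)/2))⁻¹ := by
      rw [← Real.rpow_neg ht.le]; ring_nf
    rw [hv, h2, mul_inv]
    field_simp
  rw [e, ENNReal.ofReal_mul (by positivity), mul_assoc, ENNReal.ofReal_inv_of_pos hvpos]
  rw [← ENNReal.div_eq_inv_mul, ENNReal.le_div_iff_mul_le (by simp [hvpos]) (by simp), mul_comm]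
  exact main

/-- uniformly local Zygmund-type bound -/
def Zyg (n : ℕ) (f : Eu n → ℝ≥0∞) (γ ρ C : ℝ) : Prop :=
  ∀ (z : Eu n) (E : Set (Eu n)), MeasurableSet E → E ⊆ Metric.ball z ρ → ∀ r : ℝ, 0 < r →
    volume E ≤ ENNReal.ofReal r → ∫⁻ x in E, f x ≤ ENNReal.ofReal (C * logFac r ^ (-γ))

lemma Zyg_Sg (n : ℕ) {f : Eu n → ℝ≥0∞} (hf : Measurable f) {γ ρ C t : ℝ} (ht : 0 < t)
    (h : Zyg n f γ ρ C) : Zyg n (fun x => Sg n f x t) γ ρ C := by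
  intro z E hE hEz r hr hEr
  have h1 : ∀ x, Sg n f x t = ∫⁻ w, HH n w t * f (x - w) := by
    intro x
    unfold Sg
    rw [← lintegral_sub_left_eq_self (fun y => HH n (x - y) t * f y) x]
    simp
  simp_rw [h1]
  rw [lintegral_lintegral_swap]
  · calc ∫⁻ w, ∫⁻ x in E, HH n w t * f (x - w)
        = ∫⁻ w, HH n w t * ∫⁻ x in E, f (x - w) := by
          apply lintegral_congr
          intro w
          rw [lintegral_const_mul]
          fun_prop
      _ ≤ ∫⁻ w, HH n w t * ENNReal.ofReal (C * logFac r ^ (-γ)) := by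
          gcongr with w
          have h2 : ∫⁻ x in E, f (x - w) = ∫⁻ x in (fun x => x + w) ⁻¹' E, f x := by
            rw [← lintegral_indicator hE, ← lintegral_indicator (hE.preimage (by fun_prop)),
              ← lintegral_add_right_eq_self _ w]
            apply lintegral_congr
            intro x
            simp only [indicator, mem_preimage, add_sub_cancel_right]
            rfl
          rw [h2]
          apply h (z - w) _ (hE.preimage (by fun_prop)) _ r hr
          · rw [measure_preimage_add_right]; exact hEr
          · intro x hx
            have := hEz hx
            simp only [Metric.mem_ball, dist_eq_norm] at this ⊢
            convert this using 2
            abel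
      _ = _ := by
          rw [lintegral_mul_const _ (measurable_HH_comp n (by fun_prop) (by fun_prop)),
            lintegral_HH n ht, one_mul]
  · apply Measurable.aemeasurable
    exact (measurable_HH_comp n (by fun_prop) (by fun_prop)).mul (by fun_prop)

lemma logFac_one_le {s : ℝ} (hs : 0 < s) : 1 ≤ logFac s := by
  unfold logFac
  rw [Real.le_log_iff_exp_le (by positivity)]
  have : 0 < 1 / s := by positivity
  linarith

lemma logFac_pos {s : ℝ} (hs : 0 < s) : 0 < logFac s := lt_of_lt_of_le one_pos (logFac_one_le hs)

lemma logFac_anti {r r' : ℝ} (hr : 0 < r) (h : r ≤ r') : logFac r' ≤ logFac r := by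
  unfold logFac
  have : 0 < r' := lt_of_lt_of_le hr h
  gcongr

lemma measurable_logFac : Measurable logFac := by
  unfold logFac; fun_prop

lemma logFac_cmp {a k : ℝ} (ha : 0 < a) (hk : 0 < k) :
    ∃ c > 0, ∀ s > 0, c * logFac s ≤ logFac (a * s ^ k) := by
  set N : ℝ := 1 + 1 / k with hN
  set D : ℝ := 1 + a ^ (1 / k) with hD
  have hDpos : 0 < a ^ (1 / k) := by positivity
  have hlogD : 0 ≤ Real.log D := Real.log_nonneg (by linarith)
  have hk' : 0 < 1 / k := by positivity
  refine ⟨(N + Real.log D)⁻¹, by positivity, fun s hs => ?_⟩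
  rw [inv_mul_le_iff₀ (by positivity)]
  have h1 := logFac_one_le (s := a * s ^ k) (by positivity)
  suffices logFac s ≤ N * logFac (a * s ^ k) + Real.log D by nlinarith
  unfold logFac
  set X := Real.exp 1 + 1 / (a * s ^ k) with hX
  have hXe : Real.exp 1 ≤ X := by
    have : 0 < 1 / (a * s ^ k) := by positivity
    linarith
  have hX1 : 1 ≤ X := le_trans (by simp) hXe
  have hXp : 0 < X := by linarith
  rw [← Real.log_rpow hXp, ← Real.log_mul (by positivity) (by positivity)]
  apply Real.log_le_log (by positivity)
  have h2 : Real.exp 1 ≤ X ^ N := le_trans hXe (by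
    conv_lhs => rw [← Real.rpow_one X]
    exact Real.rpow_le_rpow_of_exponent_le hX1 (by linarith))
  have h3 : 1 / s ≤ a ^ (1 / k) * X ^ N := by
    have e : 1 / s = a ^ (1 / k) * (1 / (a * s ^ k)) ^ (1 / k) := by
      rw [← Real.mul_rpow ha.le (by positivity)]
      have : a * (1 / (a * s ^ k)) = (1 / s) ^ k := by
        rw [Real.div_rpow (by norm_num) hs.le, Real.one_rpow]
        field_simp
      rw [this, ← Real.rpow_mul (by positivity)]
      simp [hk.ne']
    rw [e]
    gcongr
    calc (1 / (a * s ^ k)) ^ (1 / k) ≤ X ^ (1 / k) := by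
          gcongr
          rw [hX]; linarith [Real.exp_pos 1]
      _ ≤ X ^ N := Real.rpow_le_rpow_of_exponent_le hX1 (by linarith)
  rw [hD]
  nlinarith

lemma logFac_quasi {α : ℝ} (hα : 0 ≤ α) :
    ∃ C > 0, ∀ r τ : ℝ, 0 < r → r ≤ τ → r * logFac r ^ α ≤ C * (τ * logFac τ ^ α) := by
  set N : ℝ := α + 1 with hN
  have hNp : 0 < N := by linarith
  refine ⟨N ^ α, by positivity, fun r τ hr hrt => ?_⟩
  have hτ : 0 < τ := lt_of_lt_of_le hr hrt
  set q := τ / r with hq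
  have hq1 : 1 ≤ q := by rw [hq, le_div_iff₀ hr]; linarith
  have hq0 : 0 < q := by linarith
  have h1 : logFac r ≤ Real.log q + logFac τ := by
    unfold logFac
    rw [← Real.log_mul (by positivity) (by positivity)]
    apply Real.log_le_log (by positivity)
    have : q * (Real.exp 1 + 1 / τ) = q * Real.exp 1 + 1 / r := by
      rw [hq]; field_simp
    rw [this]
    nlinarith [Real.exp_pos 1]
  have h2 : 1 + Real.log q ≤ N * q ^ (1 / N) := by
    have : Real.log (q ^ (1 / N)) ≤ q ^ (1 / N) - 1 := Real.log_le_sub_one_of_pos (by positivity)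
    rw [Real.log_rpow hq0] at this
    have h3 : Real.log q = N * (1 / N * Real.log q) := by field_simp
    rw [h3]
    nlinarith
  have hlq : 0 ≤ Real.log q := Real.log_nonneg hq1
  have hLτ := logFac_one_le hτ
  have h4 : logFac r ≤ (N * q ^ (1 / N)) * logFac τ := by nlinarith
  have h5 : logFac r ^ α ≤ N ^ α * q * logFac τ ^ α := by
    calc logFac r ^ α ≤ ((N * q ^ (1 / N)) * logFac τ) ^ α := by
          apply Real.rpow_le_rpow (logFac_pos hr).le h4 hα
      _ = N ^ α * (q ^ (1 / N)) ^ α * logFac τ ^ α := by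
          rw [Real.mul_rpow (by positivity) (logFac_pos hτ).le, Real.mul_rpow hNp.le (by positivity)]
      _ ≤ N ^ α * q * logFac τ ^ α := by
          have hp : 0 ≤ logFac τ ^ α := Real.rpow_nonneg (logFac_pos hτ).le _
          gcongr
          rw [← Real.rpow_mul hq0.le]
          conv_rhs => rw [← Real.rpow_one q]
          apply Real.rpow_le_rpow_of_exponent_le hq1
          rw [one_div, inv_mul_le_iff₀ hNp]; linarith
  calc r * logFac r ^ α ≤ r * (N ^ α * q * logFac τ ^ α) := by gcongr
    _ = _ := by rw [hq]; field_simp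

lemma tendsto_logFac : Filter.Tendsto logFac (nhdsWithin 0 (Ioi 0)) Filter.atTop := by
  unfold logFac
  apply Real.tendsto_log_atTop.comp
  apply Filter.tendsto_atTop_add_const_left
  exact (tendsto_inv_nhdsGT_zero (𝕜 := ℝ)).congr fun s => (one_div s).symm

lemma tendsto_logFac_neg {β : ℝ} (hβ : 0 < β) :
    Filter.Tendsto (fun s => logFac s ^ (-β)) (nhdsWithin 0 (Ioi 0)) (nhds 0) :=
  (tendsto_rpow_neg_atTop hβ).comp tendsto_logFac

lemma hasDerivAt_logFac_neg {β s : ℝ} (hs : 0 < s) :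
    HasDerivAt (fun s => logFac s ^ (-β))
      (β * (logFac s ^ (-(1 + β)) * (s * (Real.exp 1 * s + 1))⁻¹)) s := by
  have h0 : HasDerivAt (fun s : ℝ => Real.exp 1 + 1 / s) (-(s ^ 2)⁻¹) s := by
    simp_rw [one_div]
    exact (hasDerivAt_inv hs.ne').const_add _
  have h1 : HasDerivAt logFac (-(s ^ 2)⁻¹ / (Real.exp 1 + 1 / s)) s :=
    h0.log (by positivity)
  have h2 := h1.rpow_const (p := -β) (Or.inl (logFac_pos hs).ne')
  convert h2 using 1
  rw [show -β - 1 = -(1 + β) by ring]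
  field_simp

lemma time_integral {β Ts : ℝ} (hβ : 0 < β) (hTs : 0 < Ts) {t : ℝ} (ht : 0 < t) (htT : t ≤ Ts) :
    ∫⁻ s in Ioo 0 t, ENNReal.ofReal (s⁻¹ * logFac s ^ (-(1 + β))) ≤
      ENNReal.ofReal ((Real.exp 1 * Ts + 1) / β * logFac t ^ (-β)) := by
  set F : ℝ → ℝ := fun s => if s ≤ 0 then 0 else logFac s ^ (-β) with hF
  set F' : ℝ → ℝ := fun s => (β * (logFac s ^ (-(1 + β)) * (s * (Real.exp 1 * s + 1))⁻¹)) with hF'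
  have hderiv : ∀ s ∈ Ioo 0 t, HasDerivAt F (F' s) s := by
    intro s hs
    apply (hasDerivAt_logFac_neg hs.1).congr_of_eventuallyEq
    filter_upwards [lt_mem_nhds hs.1] with y hy
    simp [hF, hy.not_ge]
  have hcont : ContinuousOn F (Icc 0 t) := by
    intro s hs
    rcases hs.1.eq_or_lt with h0 | h0
    · subst h0
      rw [← continuousWithinAt_sdiff_self]
      have hF0 : F 0 = 0 := by simp [hF]
      unfold ContinuousWithinAt
      rw [hF0]
      have : Filter.Tendsto F (nhdsWithin 0 (Ioi 0)) (nhds 0) := by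
        apply (tendsto_logFac_neg hβ).congr'
        filter_upwards [self_mem_nhdsWithin] with y hy
        have hy' : (0:ℝ) < y := hy
        simp [hF, hy'.not_ge]
      apply this.mono_left
      apply nhdsWithin_mono
      intro y hy
      exact lt_of_le_of_ne hy.1.1 (fun h => hy.2 h.symm)
    · apply ContinuousAt.continuousWithinAt
      have : HasDerivAt F (F' s) s := by
        apply (hasDerivAt_logFac_neg h0).congr_of_eventuallyEq
        filter_upwards [lt_mem_nhds h0] with y hy
        simp [hF, hy.not_ge]
      exact this.continuousAt
  have hpos : ∀ s ∈ Ioo 0 t, 0 ≤ F' s := by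
    intro s hs
    have := logFac_pos hs.1
    have := hs.1
    simp only [hF']
    positivity
  have hint := intervalIntegral.integrableOn_deriv_of_nonneg hcont hderiv hpos
  have hval := intervalIntegral.integral_eq_sub_of_hasDerivAt_of_le ht.le hcont hderiv
    ((intervalIntegrable_iff_integrableOn_Ioc_of_le ht.le).mpr hint)
  have hval2 : ∫ s in Ioo 0 t, F' s = logFac t ^ (-β) := by
    rw [← integral_Ioc_eq_integral_Ioo, ← intervalIntegral.integral_of_le ht.le, hval]
    simp [hF, ht.not_ge]
  calc ∫⁻ s in Ioo 0 t, ENNReal.ofReal (s⁻¹ * logFac s ^ (-(1 + β)))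
      ≤ ∫⁻ s in Ioo 0 t, ENNReal.ofReal ((Real.exp 1 * Ts + 1) / β) * ENNReal.ofReal (F' s) := by
        apply setLIntegral_mono' measurableSet_Ioo
        intro s hs
        rw [← ENNReal.ofReal_mul (by positivity)]
        apply ENNReal.ofReal_le_ofReal
        have h1 := logFac_pos hs.1
        have h2 := hs.1
        have h3 : (Real.exp 1 * Ts + 1) / β * F' s =
          ((Real.exp 1 * Ts + 1) / (Real.exp 1 * s + 1)) * (s⁻¹ * logFac s ^ (-(1 + β))) := by
          simp only [hF']
          field_simp
        rw [h3]
        apply le_mul_of_one_le_left (by positivity)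
        rw [le_div_iff₀ (by positivity)]
        have : s ≤ Ts := hs.2.le.trans htT
        have := Real.exp_pos 1
        nlinarith
    _ = ENNReal.ofReal ((Real.exp 1 * Ts + 1) / β) * ∫⁻ s in Ioo 0 t, ENNReal.ofReal (F' s) := by
        rw [lintegral_const_mul']
        simp
    _ = _ := by
        rw [← ofReal_integral_eq_lintegral_ofReal, hval2, ← ENNReal.ofReal_mul (by positivity)]
        · exact hint.mono_set Ioo_subset_Ioc_self
        · exact (ae_restrict_iff' measurableSet_Ioo).mpr (Filter.Eventually.of_forall hpos)

lemma time_integral_pow {a : ℝ} (ha1 : a < 1) {t : ℝ} (ht : 0 < t) :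
    ∫⁻ s in Ioo 0 t, ENNReal.ofReal (s ^ (-a)) = ENNReal.ofReal (t ^ (1 - a) / (1 - a)) := by
  rw [← ofReal_integral_eq_lintegral_ofReal]
  · congr 1
    rw [← integral_Ioc_eq_integral_Ioo, ← intervalIntegral.integral_of_le ht.le,
      integral_rpow (Or.inl (by linarith)), Real.zero_rpow (by linarith)]
    rw [show -a + 1 = 1 - a by ring]; ring
  · have := intervalIntegral.intervalIntegrable_rpow' (a := 0) (b := t) (r := -a) (by linarith)
    rw [intervalIntegrable_iff_integrableOn_Ioc_of_le ht.le] at this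
    exact this.mono_set Ioo_subset_Ioc_self
  · apply (ae_restrict_iff' measurableSet_Ioo).mpr (Filter.Eventually.of_forall ?_)
    intro s hs
    exact Real.rpow_nonneg hs.1.le _

noncomputable def ww (s : ℝ) : ℝ := Real.log (Real.exp 1 + s) ^ ((1:ℝ)/4)

noncomputable def C0 : ℝ := 1 + 2 * (1 - (2:ℝ) ^ (-(1:ℝ)/4))⁻¹

lemma q_lt_one : (2:ℝ) ^ (-(1:ℝ)/4) < 1 :=
  Real.rpow_lt_one_of_one_lt_of_neg (by norm_num) (by norm_num)

lemma C0_pos : 0 < C0 := by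
  have := q_lt_one
  have : 0 < (1 - (2:ℝ) ^ (-(1:ℝ)/4))⁻¹ := inv_pos.mpr (by linarith)
  unfold C0; linarith

lemma Zyg_gamma (n : ℕ) (hn : 1 ≤ n) {φ : Eu n → ℝ} (hφ : Measurable φ) {ε ρ : ℝ} (hε : 0 < ε)
    (hε1 : ε ≤ 1) (h : Zyg n (fun x => ENNReal.ofReal |φ x|) ((n:ℝ)/2) ρ ε) :
    Zyg n (fun x => ENNReal.ofReal (|φ x| * ww |φ x|)) ((n:ℝ)/2 - 1/4) ρ (C0 * ε) := by
  intro z E hE hEz r hr hEr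
  set ℓ := logFac r with hℓ
  have hℓ1 : 1 ≤ ℓ := logFac_one_le hr
  have hℓ0 : 0 < ℓ := by linarith
  have hn' : (1:ℝ) ≤ n := by exact_mod_cast hn
  set lg : Eu n → ℝ := fun x => Real.log (Real.exp 1 + |φ x|) with hlg
  have hlgm : Measurable lg := by fun_prop
  have hlg0 : ∀ x, 1 ≤ lg x := by
    intro x
    simp only [hlg]
    rw [Real.le_log_iff_exp_le (by positivity)]
    linarith [abs_nonneg (φ x)]
  set A : ℕ → Set (Eu n) := fun k => {x | 2 ^ k * ℓ ≤ lg x} with hA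
  have hAm : ∀ k, MeasurableSet (A k) := fun k => measurableSet_le (by fun_prop) hlgm
  set g : ℕ → Eu n → ℝ≥0∞ := fun k x => (A k).indicator (fun x => ENNReal.ofReal |φ x|) x *
        ENNReal.ofReal ((2 ^ (k + 1) * ℓ) ^ ((1:ℝ)/4)) with hg
  have hgm : ∀ k, Measurable (g k) := by
    intro k
    apply Measurable.mul_const
    exact Measurable.indicator (by fun_prop) (hAm k)
  have hpt : ∀ x, ENNReal.ofReal (|φ x| * ww |φ x|) ≤
      ENNReal.ofReal |φ x| * ENNReal.ofReal (ℓ ^ ((1:ℝ)/4)) + ∑' k, g k x := by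
    intro x
    have hlx := hlg0 x
    rw [ENNReal.ofReal_mul (abs_nonneg _)]
    rcases le_or_gt (lg x) ℓ with hle | hgt
    · refine le_trans ?_ le_self_add
      gcongr
      unfold ww
      apply Real.rpow_le_rpow _ hle (by norm_num)
      exact le_trans zero_le_one hlx
    · refine le_trans ?_ le_add_self
      obtain ⟨k, hk1, hk2⟩ := exists_nat_pow_near (x := lg x / ℓ) (y := 2)
        (by rw [le_div_iff₀ hℓ0]; linarith) (by norm_num)
      rw [le_div_iff₀ hℓ0] at hk1
      rw [div_lt_iff₀ hℓ0] at hk2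
      refine le_trans ?_ (ENNReal.le_tsum k)
      simp only [hg]
      rw [indicator_of_mem (show x ∈ A k from hk1)]
      gcongr
      unfold ww
      apply Real.rpow_le_rpow _ hk2.le (by norm_num)
      exact le_trans zero_le_one hlx
  have hEφ := h z E hE hEz r hr hEr
  have hEk : ∀ k, ∫⁻ x in E, (A k).indicator (fun x => ENNReal.ofReal |φ x|) x ≤
      ENNReal.ofReal (ε * (2 ^ k * ℓ) ^ (-((n:ℝ)/2))) := by
    intro k
    rw [lintegral_indicator (hAm k), Measure.restrict_restrict (hAm k)]
    set lam := Real.exp (2 ^ k * ℓ) - Real.exp 1 with hlam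
    have h2k : (1:ℝ) ≤ 2 ^ k := one_le_pow₀ (by norm_num)
    have hℓgt : 1 < ℓ := by
      rw [hℓ]; unfold logFac
      rw [Real.lt_log_iff_exp_lt (by positivity)]
      have : 0 < 1 / r := by positivity
      linarith
    have hlam0 : 0 < lam := by
      rw [hlam, sub_pos]
      apply Real.exp_lt_exp.mpr
      nlinarith
    have hl : logFac lam⁻¹ = 2 ^ k * ℓ := by
      unfold logFac
      rw [one_div, inv_inv, hlam]
      simp
    rw [← hl]
    apply h z _ ((hAm k).inter hE) (inter_subset_right.trans hEz) _ (by positivity)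
    have h1 : ENNReal.ofReal lam * volume (A k ∩ E) ≤ 1 := by
      calc ENNReal.ofReal lam * volume (A k ∩ E) = ∫⁻ x in A k ∩ E, ENNReal.ofReal lam := by
            rw [setLIntegral_const]
        _ ≤ ∫⁻ x in A k ∩ E, ENNReal.ofReal |φ x| := by
            apply setLIntegral_mono' ((hAm k).inter hE)
            intro x hx
            apply ENNReal.ofReal_le_ofReal
            have hx1 : 2 ^ k * ℓ ≤ lg x := hx.1
            simp only [hlg] at hx1
            rw [Real.le_log_iff_exp_le (by positivity)] at hx1
            rw [hlam]; linarith
        _ ≤ ∫⁻ x in E, ENNReal.ofReal |φ x| := lintegral_mono_set inter_subset_right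
        _ ≤ ENNReal.ofReal (ε * ℓ ^ (-((n:ℝ)/2))) := hEφ
        _ ≤ ENNReal.ofReal 1 := by
            apply ENNReal.ofReal_le_ofReal
            have : ℓ ^ (-((n:ℝ)/2)) ≤ 1 := Real.rpow_le_one_of_one_le_of_nonpos hℓ1 (by linarith)
            have : 0 ≤ ℓ ^ (-((n:ℝ)/2)) := by positivity
            nlinarith
        _ = 1 := by simp
    rw [ENNReal.ofReal_inv_of_pos hlam0]
    rw [mul_comm] at h1
    rw [← one_div]
    exact (ENNReal.le_div_iff_mul_le (by simp [hlam0]) (by simp)).mpr h1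
  set q : ℝ := (2:ℝ) ^ (-(1:ℝ)/4) with hq
  have hq0 : 0 ≤ q := by positivity
  set γ := (n:ℝ)/2 - 1/4 with hγ
  calc ∫⁻ x in E, ENNReal.ofReal (|φ x| * ww |φ x|)
      ≤ ∫⁻ x in E, (ENNReal.ofReal |φ x| * ENNReal.ofReal (ℓ ^ ((1:ℝ)/4)) + ∑' k, g k x) :=
        lintegral_mono hpt
    _ = (∫⁻ x in E, ENNReal.ofReal |φ x|) * ENNReal.ofReal (ℓ ^ ((1:ℝ)/4)) +
        ∑' k, (∫⁻ x in E, (A k).indicator (fun x => ENNReal.ofReal |φ x|) x) *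
          ENNReal.ofReal ((2 ^ (k + 1) * ℓ) ^ ((1:ℝ)/4)) := by
        rw [lintegral_add_left (by fun_prop), lintegral_mul_const _ (by fun_prop),
          lintegral_tsum (fun k => (hgm k).aemeasurable)]
        congr 2
        ext k
        simp only [hg]
        rw [lintegral_mul_const]
        exact Measurable.indicator (by fun_prop) (hAm k)
    _ ≤ ENNReal.ofReal (ε * ℓ ^ (-((n:ℝ)/2))) * ENNReal.ofReal (ℓ ^ ((1:ℝ)/4)) +
        ∑' k, ENNReal.ofReal (ε * (2 ^ k * ℓ) ^ (-((n:ℝ)/2))) *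
          ENNReal.ofReal ((2 ^ (k + 1) * ℓ) ^ ((1:ℝ)/4)) := by
        gcongr with k
        exact hEk k
    _ ≤ ENNReal.ofReal (ε * ℓ ^ (-γ)) + ∑' k : ℕ, ENNReal.ofReal (2 * (ε * ℓ ^ (-γ)) * q ^ k) := by
        have e1 : ℓ ^ (-((n:ℝ)/2)) * ℓ ^ ((1:ℝ)/4) = ℓ ^ (-γ) := by
          rw [← Real.rpow_add hℓ0]; congr 1; rw [hγ]; ring
        gcongr with k
        · rw [← ENNReal.ofReal_mul (by positivity), mul_assoc, e1]
        · rw [← ENNReal.ofReal_mul (by positivity)]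
          apply ENNReal.ofReal_le_ofReal
          have e2 : ((2:ℝ) ^ k) ^ (-((n:ℝ)/2)) * ((2:ℝ) ^ (k+1)) ^ ((1:ℝ)/4) ≤ 2 * q ^ k := by
            have e3 : ((2:ℝ) ^ (k+1)) ^ ((1:ℝ)/4) = ((2:ℝ) ^ k) ^ ((1:ℝ)/4) * 2 ^ ((1:ℝ)/4) := by
              rw [pow_succ, Real.mul_rpow (by positivity) (by positivity)]
            have e4 : q ^ k = ((2:ℝ)^k) ^ (-(1:ℝ)/4) := by
              rw [hq, ← Real.rpow_natCast, ← Real.rpow_natCast, ← Real.rpow_mul (by norm_num),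
                ← Real.rpow_mul (by norm_num), mul_comm]
            rw [e3, e4, ← mul_assoc, ← Real.rpow_add (by positivity), mul_comm]
            have h2k : (1:ℝ) ≤ 2 ^ k := one_le_pow₀ (by norm_num)
            gcongr
            · calc (2:ℝ) ^ ((1:ℝ)/4) ≤ 2 ^ (1:ℝ) :=
                  Real.rpow_le_rpow_of_exponent_le (by norm_num) (by norm_num)
                _ = 2 := by simp
            · linarith
          calc ε * (2 ^ k * ℓ) ^ (-((n:ℝ)/2)) * (2 ^ (k + 1) * ℓ) ^ ((1:ℝ)/4)
              = (((2:ℝ) ^ k) ^ (-((n:ℝ)/2)) * ((2:ℝ) ^ (k+1)) ^ ((1:ℝ)/4)) *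
                (ε * (ℓ ^ (-((n:ℝ)/2)) * ℓ ^ ((1:ℝ)/4))) := by
                rw [Real.mul_rpow (by positivity) hℓ0.le, Real.mul_rpow (by positivity) hℓ0.le]
                ring
            _ ≤ (2 * q ^ k) * (ε * (ℓ ^ (-((n:ℝ)/2)) * ℓ ^ ((1:ℝ)/4))) := by gcongr
            _ = _ := by rw [e1]; ring
    _ = ENNReal.ofReal (C0 * ε * ℓ ^ (-γ)) := by
        rw [← ENNReal.ofReal_tsum_of_nonneg, tsum_mul_left, tsum_geometric_of_lt_one hq0 q_lt_one,
          ← ENNReal.ofReal_add]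
        · congr 1
          unfold C0; ring
        · positivity
        · have : 0 < (1 - q)⁻¹ := inv_pos.mpr (by have := q_lt_one; linarith)
          positivity
        · intro k; positivity
        · exact (summable_geometric_of_lt_one hq0 q_lt_one).mul_left _

/-- from the norm -/
lemma Zyg_of_norm (n : ℕ) {φ : Eu n → ℝ} {α ρ ε : ℝ}
    (h : zygNormUL n 1 α ρ φ ≤ ENNReal.ofReal ε) (hε : 0 ≤ ε) (hα : 0 ≤ α) :
    Zyg n (fun x => ENNReal.ofReal |φ x|) α ρ ε := by
  intro z E hE hEz r hr hEr
  have hfin : volume E ≠ ⊤ := (hEr.trans_lt ENNReal.ofReal_lt_top).ne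
  rcases eq_or_ne (volume E) 0 with h0 | h0
  · rw [setLIntegral_measure_zero _ _ h0]; exact zero_le
  set s := (volume E).toReal with hs
  have hs0 : 0 < s := ENNReal.toReal_pos h0 hfin
  have hvs : volume E = ENNReal.ofReal s := (ENNReal.ofReal_toReal hfin).symm
  have hsr : s ≤ r := by
    rw [hvs] at hEr
    exact (ENNReal.ofReal_le_ofReal_iff hr.le).mp hEr
  have h1 : ENNReal.ofReal (logFac s) ^ α * ∫⁻ x in E, ENNReal.ofReal |φ x| ≤ ENNReal.ofReal ε := by
    refine le_trans ?_ h
    unfold zygNormUL zygNorm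
    refine le_trans ?_ (le_iSup _ z)
    refine le_trans ?_ (le_iSup _ (⟨s, hs0⟩ : Set.Ioi (0:ℝ)))
    simp only [Real.rpow_one, div_one, ENNReal.rpow_one]
    gcongr
    refine le_trans ?_ (le_iSup _ (⟨E, hE, hvs⟩ : {E : Set (EuclideanSpace ℝ (Fin n)) //
          MeasurableSet E ∧ volume E = ENNReal.ofReal s}))
    apply setLIntegral_mono' hE
    intro x hx
    rw [indicator_of_mem (hEz hx)]
  have hL := logFac_pos hs0
  have hLr := logFac_pos hr
  rw [ENNReal.ofReal_rpow_of_pos hL] at h1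
  have h2 : ∫⁻ x in E, ENNReal.ofReal |φ x| ≤ ENNReal.ofReal ε / ENNReal.ofReal (logFac s ^ α) := by
    rw [ENNReal.le_div_iff_mul_le (by left; simp; positivity) (by simp), mul_comm]
    exact h1
  refine h2.trans ?_
  rw [← ENNReal.ofReal_div_of_pos (by positivity)]
  apply ENNReal.ofReal_le_ofReal
  rw [div_eq_mul_inv, ← Real.rpow_neg hL.le]
  apply mul_le_mul_of_nonneg_left _ hε
  exact Real.rpow_le_rpow_of_nonpos hLr (logFac_anti hs0 hsr) (by linarith)

lemma norm_of_Zyg (n : ℕ) {u : Eu n → ℝ} {f : Eu n → ℝ≥0∞} {α ρ C : ℝ}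
    (hf : ∀ x, ENNReal.ofReal |u x| ≤ f x) (h : Zyg n f α ρ C) :
    zygNormUL n 1 α ρ u ≤ ENNReal.ofReal C := by
  unfold zygNormUL zygNorm
  refine iSup_le fun z => iSup_le fun ⟨s, hs⟩ => ?_
  have hs : 0 < s := hs
  simp only [Real.rpow_one, div_one, ENNReal.rpow_one]
  have hL := logFac_pos hs
  have h1 : ∀ E : {E : Set (EuclideanSpace ℝ (Fin n)) //
          MeasurableSet E ∧ volume E = ENNReal.ofReal s},
      ∫⁻ x in E.1, ENNReal.ofReal |(Metric.ball z ρ).indicator u x| ≤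
        ENNReal.ofReal (C * logFac s ^ (-α)) := by
    rintro ⟨E, hE, hEs⟩
    have hb : MeasurableSet (Metric.ball z ρ) := measurableSet_ball
    calc ∫⁻ x in E, ENNReal.ofReal |(Metric.ball z ρ).indicator u x|
        ≤ ∫⁻ x in E, (Metric.ball z ρ).indicator f x := by
          apply lintegral_mono
          intro x
          by_cases hx : x ∈ Metric.ball z ρ
          · simp only [indicator_of_mem hx]; exact hf x
          · simp only [indicator_of_notMem hx]; simp
      _ = ∫⁻ x in Metric.ball z ρ ∩ E, f x := by
          rw [lintegral_indicator hb, Measure.restrict_restrict hb]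
      _ ≤ _ := by
          apply h z _ (hb.inter hE) inter_subset_left s hs
          rw [← hEs]
          exact measure_mono inter_subset_right
  calc _ ≤ ENNReal.ofReal (logFac s) ^ α * ENNReal.ofReal (C * logFac s ^ (-α)) := by
        gcongr
        exact iSup_le h1
    _ = ENNReal.ofReal C := by
        rw [ENNReal.ofReal_rpow_of_pos hL, ← ENNReal.ofReal_mul (by positivity)]
        congr 1
        rw [Real.rpow_neg hL.le]
        field_simp

lemma sup_bound (n : ℕ) (hn : 1 ≤ n) {γ : ℝ} (hγ : 0 ≤ γ) : ∃ C > 0, ∀ (f : Eu n → ℝ≥0∞),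
    Measurable f → ∀ (C1 T : ℝ), 0 ≤ C1 → 0 < T → Zyg n f γ (T ^ ((1:ℝ)/2)) C1 →
    ∀ t, 0 < t → t ≤ T → ∀ x,
      Sg n f x t ≤ ENNReal.ofReal (C * C1 * (t ^ (-(n:ℝ)/2) * logFac t ^ (-γ))) := by
  have hn' : (1:ℝ) ≤ n := by exact_mod_cast hn
  have hvb := vb_pos n
  obtain ⟨c, hc, hcmp⟩ := logFac_cmp (a := vb n) (k := (n:ℝ)/2) hvb (by linarith)
  refine ⟨2 ^ ((n:ℝ)/2) * Real.exp 1 / vb n * c ^ (-γ), by positivity, ?_⟩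
  intro f hf C1 T hC1 hT hZ t ht htT x
  have hL := logFac_pos ht
  have hM : ∀ w, ∫⁻ y in Metric.ball w (t ^ ((1:ℝ)/2)), f y ≤
      ENNReal.ofReal (C1 * (c * logFac t) ^ (-γ)) := by
    intro w
    refine (hZ w _ measurableSet_ball (Metric.ball_subset_ball ?_) (vb n * t ^ ((n:ℝ)/2))
      (by positivity) (volume_ball_eq n hn ht w).le).trans ?_
    · gcongr
    · apply ENNReal.ofReal_le_ofReal
      apply mul_le_mul_of_nonneg_left _ hC1
      exact Real.rpow_le_rpow_of_nonpos (by positivity) (hcmp t ht) (by linarith)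
  refine (Sg_smoothing n hn hf ht x hM).trans ?_
  rw [← ENNReal.ofReal_mul (by positivity)]
  apply ENNReal.ofReal_le_ofReal
  rw [Real.mul_rpow hc.le hL.le]
  apply le_of_eq; ring

lemma ww_mono {a b : ℝ} (ha : 0 ≤ a) (h : a ≤ b) : ww a ≤ ww b := by
  unfold ww
  have : 0 ≤ Real.log (Real.exp 1 + a) := by
    apply Real.log_nonneg
    have := Real.add_one_le_exp 1
    linarith
  gcongr

lemma ww_pos {a : ℝ} (ha : 0 ≤ a) : 0 < ww a := by
  unfold ww
  apply Real.rpow_pos_of_pos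
  apply Real.log_pos
  have := Real.add_one_le_exp 1
  linarith

noncomputable def PP {n : ℕ} (φ : Eu n → ℝ) (x : Eu n) : ℝ≥0∞ := ENNReal.ofReal |φ x|
noncomputable def GG {n : ℕ} (φ : Eu n → ℝ) (x : Eu n) : ℝ≥0∞ :=
  ENNReal.ofReal (|φ x| * ww |φ x|)

lemma measurable_PP {n : ℕ} {φ : Eu n → ℝ} (hφ : Measurable φ) : Measurable (PP φ) := by
  unfold PP; fun_prop
lemma measurable_GG {n : ℕ} {φ : Eu n → ℝ} (hφ : Measurable φ) : Measurable (GG φ) := by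
  unfold GG ww; fun_prop

lemma lin_bound (n : ℕ) {δ : ℝ} (hδ : 0 < δ) : ∃ C > 0, ∀ φ : Eu n → ℝ, Measurable φ →
    ∀ t > 0, ∀ x, Sg n (PP φ) x t ≤
      ENNReal.ofReal (C * logFac t ^ (-(1:ℝ)/4)) * Sg n (GG φ) x t +
        ENNReal.ofReal (δ * t ^ (-(1:ℝ)/4)) := by
  obtain ⟨c, hc, hcmp⟩ := logFac_cmp (a := δ⁻¹) (k := (1:ℝ)/4) (by positivity) (by norm_num)
  refine ⟨c ^ (-(1:ℝ)/4), by positivity, ?_⟩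
  intro φ hφ t ht x
  have hL := logFac_pos ht
  set lam := δ * t ^ (-(1:ℝ)/4) with hlam
  have hlam0 : 0 < lam := by positivity
  have hw : (ww lam)⁻¹ ≤ c ^ (-(1:ℝ)/4) * logFac t ^ (-(1:ℝ)/4) := by
    have h1 : ww lam = logFac (δ⁻¹ * t ^ ((1:ℝ)/4)) ^ ((1:ℝ)/4) := by
      unfold ww logFac
      congr 3
      rw [hlam, show -(1:ℝ)/4 = -(1/4) by ring, Real.rpow_neg ht.le]
      field_simp
    rw [h1, ← Real.mul_rpow hc.le hL.le, ← Real.rpow_neg (logFac_pos (by positivity)).le,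
      show -(1:ℝ)/4 = -(1/4) by ring]
    exact Real.rpow_le_rpow_of_nonpos (by positivity) (hcmp t ht) (by norm_num)
  have hpt : ∀ y, PP φ y ≤ ENNReal.ofReal (c ^ (-(1:ℝ)/4) * logFac t ^ (-(1:ℝ)/4)) * GG φ y +
      ENNReal.ofReal lam := by
    intro y
    unfold PP GG
    rcases le_or_gt |φ y| lam with h | h
    · refine le_trans ?_ le_add_self
      exact ENNReal.ofReal_le_ofReal h
    · refine le_trans ?_ le_self_add
      rw [← ENNReal.ofReal_mul (by positivity)]
      apply ENNReal.ofReal_le_ofReal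
      have h1 := ww_mono hlam0.le h.le
      have h2 := ww_pos hlam0.le
      calc |φ y| = (ww lam)⁻¹ * (|φ y| * ww lam) := by field_simp
        _ ≤ _ := by gcongr
  unfold Sg
  calc ∫⁻ y, HH n (x - y) t * PP φ y
      ≤ ∫⁻ y, (ENNReal.ofReal (c ^ (-(1:ℝ)/4) * logFac t ^ (-(1:ℝ)/4)) * (HH n (x - y) t * GG φ y) +
          HH n (x - y) t * ENNReal.ofReal lam) := by
        apply lintegral_mono
        intro y
        calc HH n (x - y) t * PP φ y ≤ HH n (x - y) t * _ := mul_le_mul_right (hpt y) _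
          _ = _ := by ring
    _ = _ := by
        have m1 : Measurable fun y => HH n (x - y) t :=
          measurable_HH_comp n (by fun_prop) (by fun_prop)
        have m2 := measurable_GG hφ
        have m3 : Measurable fun y => HH n (x - y) t * GG φ y := m1.mul m2
        rw [lintegral_add_right _ (m1.mul_const _), lintegral_mul_const _ m1,
          lintegral_HH_sub n ht, one_mul, lintegral_const_mul _ m3]

lemma small_exists {K a : ℝ} (hK : 0 < K) (ha : 0 < a) : ∃ δ : ℝ, 0 < δ ∧ δ ≤ 1 ∧ K * δ ^ a ≤ 1 := by
  refine ⟨min 1 ((K⁻¹) ^ (1 / a)), by positivity, min_le_left _ _, ?_⟩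
  have : (min 1 ((K⁻¹) ^ (1 / a))) ^ a ≤ ((K⁻¹) ^ (1 / a)) ^ a := by
    gcongr
    exact min_le_right _ _
  rw [← Real.rpow_mul (by positivity), one_div_mul_cancel ha.ne', Real.rpow_one] at this
  calc _ ≤ K * K⁻¹ := by gcongr
    _ = 1 := by field_simp

noncomputable def UU (n : ℕ) (φ : Eu n → ℝ) (δ : ℝ) (x : Eu n) (t : ℝ) : ℝ≥0∞ :=
  Sg n (PP φ) x t + (ENNReal.ofReal (logFac t ^ (-(1:ℝ)/4)) * Sg n (GG φ) x t + ENNReal.ofReal δ)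

lemma measurable_UU (n : ℕ) {φ : Eu n → ℝ} (hφ : Measurable φ) (δ : ℝ) :
    Measurable (fun q : Eu n × ℝ => UU n φ δ q.1 q.2) := by
  unfold UU
  have h1 := measurable_Sg n (measurable_PP hφ)
  have h2 := measurable_Sg n (measurable_GG hφ)
  have h3 := measurable_logFac
  have h4 : Measurable (fun q : Eu n × ℝ => ENNReal.ofReal (logFac q.2 ^ (-(1:ℝ)/4))) := by
    fun_prop
  exact h1.add ((h4.mul h2).add_const _)

lemma nonlinear (n : ℕ) (hn : 1 ≤ n) (p : ℝ) (hp : p = 1 + 2 / n) (Ts : ℝ) (hTs : 0 < Ts) :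
    ∃ ε δ : ℝ, 0 < ε ∧ ε ≤ 1 ∧ 0 < δ ∧ ∀ φ : Eu n → ℝ, Measurable φ → ∀ T, 0 < T → T ≤ Ts →
      Zyg n (PP φ) ((n:ℝ)/2) (T ^ ((1:ℝ)/2)) ε → ∀ x, ∀ t ∈ Ioo 0 T,
      ∫⁻ ys : Eu n × ℝ, HH n (x - ys.1) (t - ys.2) * (UU n φ δ ys.1 ys.2) ^ p
        ∂(volume.prod (volume.restrict (Ioo 0 t))) ≤
      ENNReal.ofReal (logFac t ^ (-(1:ℝ)/4)) * Sg n (GG φ) x t +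
        ENNReal.ofReal (δ * (t / Ts) ^ ((1:ℝ)/4)) := by
  have hn' : (1:ℝ) ≤ n := by exact_mod_cast hn
  have hn0 : (0:ℝ) < n := by linarith
  have hp1 : 1 < p := by rw [hp]; have : 0 < 2 / (n:ℝ) := by positivity
                         linarith
  have hp3 : p ≤ 3 := by
    rw [hp]
    have : 2 / (n:ℝ) ≤ 2 := by rw [div_le_iff₀ hn0]; linarith
    linarith
  obtain ⟨CV, hCV, hsup⟩ := sup_bound n hn (γ := (n:ℝ)/2 - 1/4) (by linarith)
  set m : ℝ := 1 + Ts ^ ((1:ℝ)/4) with hm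
  have hm0 : 0 < m := by positivity
  obtain ⟨δ, hδ, -, hδs⟩ := small_exists
    (K := 2 ^ (p - 1) * m ^ p * 4 * Ts ^ ((3 - p)/4) * Ts ^ ((1:ℝ)/4)) (a := p - 1)
    (by positivity) (by linarith)
  obtain ⟨Cd, hCd, hlin⟩ := lin_bound n hδ
  have hC0 := C0_pos
  set K1 := ((Cd + 1) * CV * C0) ^ (2 / (n:ℝ)) * (Cd + 1) with hK1
  set K2 := (Real.exp 1 * Ts + 1) / (1/4) with hK2
  obtain ⟨ε, hε, hε1, hεs⟩ := small_exists (K := 2 ^ (p - 1) * K1 * K2) (a := 2 / (n:ℝ))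
    (by positivity) (by positivity)
  refine ⟨ε, δ, hε, hε1, hδ, ?_⟩
  intro φ hφ T hT hTT hZ x t ht
  have ht0 : 0 < t := ht.1
  have hL := logFac_pos ht0
  have hZ2 := Zyg_gamma n hn hφ hε hε1 hZ
  have mG := measurable_GG hφ
  -- pointwise bound
  have hpt : ∀ s ∈ Ioo 0 t, ∀ y, (UU n φ δ y s) ^ p ≤
      ENNReal.ofReal (2 ^ (p - 1) * K1 * ε ^ (2 / (n:ℝ)) * (s⁻¹ * logFac s ^ (-(1 + (1:ℝ)/4)))) *
        Sg n (GG φ) y s + ENNReal.ofReal (2 ^ (p - 1) * (δ * m) ^ p * s ^ (-(p/4))) := by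
    intro s hs y
    have hs0 : 0 < s := hs.1
    have hsT : s ≤ T := hs.2.le.trans ht.2.le
    have hLs := logFac_pos hs0
    set a : ℝ≥0∞ := ENNReal.ofReal ((Cd + 1) * logFac s ^ (-(1:ℝ)/4)) * Sg n (GG φ) y s with ha
    set b : ℝ≥0∞ := ENNReal.ofReal (δ * m * s ^ (-(1:ℝ)/4)) with hb
    have h1 : UU n φ δ y s ≤ a + b := by
      unfold UU
      have h2 := hlin φ hφ s hs0 y
      have h3 : ENNReal.ofReal (δ * s ^ (-(1:ℝ)/4)) + ENNReal.ofReal δ ≤ b := by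
        rw [← ENNReal.ofReal_add (by positivity) hδ.le]
        apply ENNReal.ofReal_le_ofReal
        have : 1 ≤ Ts ^ ((1:ℝ)/4) * s ^ (-(1:ℝ)/4) := by
          rw [show -(1:ℝ)/4 = -(1/4) by ring, Real.rpow_neg hs0.le, ← div_eq_mul_inv,
            le_div_iff₀ (by positivity), one_mul]
          gcongr
          linarith
        rw [hm]
        nlinarith
      have h4 : a = ENNReal.ofReal (Cd * logFac s ^ (-(1:ℝ)/4)) * Sg n (GG φ) y s +
          ENNReal.ofReal (logFac s ^ (-(1:ℝ)/4)) * Sg n (GG φ) y s := by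
        rw [ha, ← add_mul, ← ENNReal.ofReal_add (by positivity) (by positivity)]
        congr 2; ring
      calc _ ≤ (ENNReal.ofReal (Cd * logFac s ^ (-(1:ℝ)/4)) * Sg n (GG φ) y s +
              ENNReal.ofReal (δ * s ^ (-(1:ℝ)/4))) +
              (ENNReal.ofReal (logFac s ^ (-(1:ℝ)/4)) * Sg n (GG φ) y s + ENNReal.ofReal δ) := by
            gcongr
        _ = a + (ENNReal.ofReal (δ * s ^ (-(1:ℝ)/4)) + ENNReal.ofReal δ) := by rw [h4]; ring
        _ ≤ a + b := by gcongr
    have h5 : a ≤ ENNReal.ofReal ((Cd + 1) * CV * C0 * ε * (s ^ (-(n:ℝ)/2) * logFac s ^ (-(n:ℝ)/2))) := by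
      rw [ha]
      calc _ ≤ ENNReal.ofReal ((Cd + 1) * logFac s ^ (-(1:ℝ)/4)) * ENNReal.ofReal
            (CV * (C0 * ε) * (s ^ (-(n:ℝ)/2) * logFac s ^ (-((n:ℝ)/2 - 1/4)))) := by
            gcongr
            exact hsup _ mG _ T (by positivity) hT hZ2 s hs0 hsT y
        _ = _ := by
            rw [← ENNReal.ofReal_mul (by positivity)]
            congr 1
            have : logFac s ^ (-(n:ℝ)/2) = logFac s ^ (-(1:ℝ)/4) * logFac s ^ (-((n:ℝ)/2 - 1/4)) := by
              rw [← Real.rpow_add hLs]; congr 1; ring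
            rw [this]; ring
    have h6 : a ^ p ≤ ENNReal.ofReal (K1 * ε ^ (2 / (n:ℝ)) * (s⁻¹ * logFac s ^ (-(1 + (1:ℝ)/4)))) *
        Sg n (GG φ) y s := by
      calc a ^ p = a ^ (2 / (n:ℝ)) * a := by
            rw [hp, add_comm, ENNReal.rpow_add_of_nonneg _ _ (by positivity) zero_le_one,
              ENNReal.rpow_one]
        _ ≤ ENNReal.ofReal ((Cd + 1) * CV * C0 * ε * (s ^ (-(n:ℝ)/2) * logFac s ^ (-(n:ℝ)/2)))
              ^ (2 / (n:ℝ)) * a := by gcongr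
        _ = _ := by
            rw [ENNReal.ofReal_rpow_of_pos (by positivity), ha, ← mul_assoc,
              ← ENNReal.ofReal_mul (by positivity)]
            congr 2
            rw [Real.mul_rpow (x := (Cd + 1) * CV * C0 * ε) (by positivity) (by positivity),
              Real.mul_rpow (x := (Cd + 1) * CV * C0) (y := ε) (by positivity) hε.le,
              Real.mul_rpow (x := s ^ (-(n:ℝ)/2)) (by positivity) (by positivity), ← Real.rpow_mul hs0.le,
              ← Real.rpow_mul hLs.le]
            have e1 : -(n:ℝ)/2 * (2 / n) = -1 := by field_simp
            rw [e1, Real.rpow_neg_one, hK1]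
            have : logFac s ^ (-(1 + (1:ℝ)/4)) = logFac s ^ (-1:ℝ) * logFac s ^ (-(1:ℝ)/4) := by
              rw [← Real.rpow_add hLs]; congr 1; ring
            rw [this]; ring
    have h7 : b ^ p = ENNReal.ofReal ((δ * m) ^ p * s ^ (-(p/4))) := by
      rw [hb, ENNReal.ofReal_rpow_of_pos (by positivity), Real.mul_rpow (by positivity) (by positivity),
        ← Real.rpow_mul hs0.le]
      congr 3; ring
    have h2p : (2:ℝ≥0∞) ^ (p - 1) = ENNReal.ofReal (2 ^ (p - 1)) := by
      rw [← ENNReal.ofReal_rpow_of_pos (by norm_num)]; simp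
    calc (UU n φ δ y s) ^ p ≤ (a + b) ^ p := by gcongr
      _ ≤ 2 ^ (p - 1) * (a ^ p + b ^ p) := ENNReal.rpow_add_le_mul_rpow_add_rpow _ _ hp1.le
      _ ≤ 2 ^ (p - 1) * (ENNReal.ofReal (K1 * ε ^ (2 / (n:ℝ)) * (s⁻¹ * logFac s ^ (-(1 + (1:ℝ)/4)))) *
        Sg n (GG φ) y s + ENNReal.ofReal ((δ * m) ^ p * s ^ (-(p/4)))) := by rw [h7]; gcongr
      _ = _ := by
          rw [h2p, mul_add, ← mul_assoc, ← ENNReal.ofReal_mul (by positivity),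
            ← ENNReal.ofReal_mul (by positivity)]
          simp only [mul_assoc]
  rw [lintegral_prod_symm']
  swap
  · exact (measurable_HH_comp n (by fun_prop) (by fun_prop)).mul
      ((measurable_UU n hφ δ).pow_const p)
  have hin : ∀ s ∈ Ioo 0 t, ∫⁻ y, HH n (x - y) (t - s) * (UU n φ δ y s) ^ p ≤
      ENNReal.ofReal (2 ^ (p - 1) * K1 * ε ^ (2 / (n:ℝ)) * (s⁻¹ * logFac s ^ (-(1 + (1:ℝ)/4)))) *
        Sg n (GG φ) x t + ENNReal.ofReal (2 ^ (p - 1) * (δ * m) ^ p * s ^ (-(p/4))) := by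
    intro s hs
    have hts : 0 < t - s := by linarith [hs.2]
    set c1 := ENNReal.ofReal (2 ^ (p - 1) * K1 * ε ^ (2 / (n:ℝ)) * (s⁻¹ * logFac s ^ (-(1 + (1:ℝ)/4))))
    set c2 := ENNReal.ofReal (2 ^ (p - 1) * (δ * m) ^ p * s ^ (-(p/4)))
    have m1 : Measurable fun y => HH n (x - y) (t - s) :=
      measurable_HH_comp n (by fun_prop) (by fun_prop)
    have m3 : Measurable fun y => HH n (x - y) (t - s) * Sg n (GG φ) y s :=
      m1.mul (measurable_Sg_x n mG s)
    calc _ ≤ ∫⁻ y, (c1 * (HH n (x - y) (t - s) * Sg n (GG φ) y s) + HH n (x - y) (t - s) * c2) := by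
          apply lintegral_mono
          intro y
          calc HH n (x - y) (t - s) * (UU n φ δ y s) ^ p ≤ HH n (x - y) (t - s) * _ :=
                mul_le_mul_right (hpt s hs y) _
            _ = _ := by ring
      _ = _ := by
          rw [lintegral_add_right _ (m1.mul_const _), lintegral_mul_const _ m1,
            lintegral_HH_sub n hts, one_mul,
            lintegral_const_mul _ m3, Sg_semigroup n mG hts hs.1,
            sub_add_cancel]
  refine (setLIntegral_mono' measurableSet_Ioo hin).trans ?_
  have mL := measurable_logFac
  rw [lintegral_add_left (by fun_prop), lintegral_mul_const _ (by fun_prop)]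
  have htTs : t ≤ Ts := ht.2.le.trans hTT
  gcongr
  · calc ∫⁻ s in Ioo 0 t, ENNReal.ofReal (2 ^ (p - 1) * K1 * ε ^ (2 / (n:ℝ)) *
            (s⁻¹ * logFac s ^ (-(1 + (1:ℝ)/4))))
        = ENNReal.ofReal (2 ^ (p - 1) * K1 * ε ^ (2 / (n:ℝ))) *
            ∫⁻ s in Ioo 0 t, ENNReal.ofReal (s⁻¹ * logFac s ^ (-(1 + (1:ℝ)/4))) := by
          rw [← lintegral_const_mul' _ _ (by simp)]
          simp_rw [ENNReal.ofReal_mul (show (0:ℝ) ≤ 2 ^ (p - 1) * K1 * ε ^ (2 / (n:ℝ)) by positivity)]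
      _ ≤ ENNReal.ofReal (2 ^ (p - 1) * K1 * ε ^ (2 / (n:ℝ))) *
            ENNReal.ofReal (K2 * logFac t ^ (-((1:ℝ)/4))) := by
          gcongr
          exact time_integral (by norm_num) hTs ht0 htTs
      _ ≤ _ := by
          rw [← ENNReal.ofReal_mul (by positivity)]
          apply ENNReal.ofReal_le_ofReal
          rw [show -(1:ℝ)/4 = -(1/4) by ring]
          have : 0 < logFac t ^ (-((1:ℝ)/4)) := by positivity
          calc _ = (2 ^ (p - 1) * K1 * K2 * ε ^ (2 / (n:ℝ))) * logFac t ^ (-((1:ℝ)/4)) := by ring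
            _ ≤ 1 * logFac t ^ (-((1:ℝ)/4)) := by gcongr
            _ = _ := one_mul _
  · calc ∫⁻ s in Ioo 0 t, ENNReal.ofReal (2 ^ (p - 1) * (δ * m) ^ p * s ^ (-(p/4)))
        = ENNReal.ofReal (2 ^ (p - 1) * (δ * m) ^ p) *
            ∫⁻ s in Ioo 0 t, ENNReal.ofReal (s ^ (-(p/4))) := by
          rw [← lintegral_const_mul' _ _ (by simp)]
          simp_rw [ENNReal.ofReal_mul (show (0:ℝ) ≤ 2 ^ (p - 1) * (δ * m) ^ p by positivity)]
      _ = ENNReal.ofReal (2 ^ (p - 1) * (δ * m) ^ p * (t ^ (1 - p/4) / (1 - p/4))) := by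
          rw [time_integral_pow (by linarith) ht0, ← ENNReal.ofReal_mul (by positivity)]
      _ ≤ _ := by
          apply ENNReal.ofReal_le_ofReal
          have e1 : t ^ (1 - p/4) / (1 - p/4) ≤ 4 * (Ts ^ ((3 - p)/4) * t ^ ((1:ℝ)/4)) := by
            rw [div_le_iff₀ (by linarith)]
            have : t ^ (1 - p/4) = t ^ ((3 - p)/4) * t ^ ((1:ℝ)/4) := by
              rw [← Real.rpow_add ht0]; congr 1; ring
            rw [this]
            have h2 : t ^ ((3 - p)/4) * t ^ ((1:ℝ)/4) ≤ Ts ^ ((3 - p)/4) * t ^ ((1:ℝ)/4) := by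
              gcongr
            have h3 : 0 ≤ Ts ^ ((3 - p)/4) * t ^ ((1:ℝ)/4) := by positivity
            nlinarith
          have e2 : δ ^ p = δ * δ ^ (p - 1) := by
            rw [Real.rpow_sub_one hδ.ne']; field_simp
          rw [Real.div_rpow ht0.le hTs.le, Real.mul_rpow hδ.le hm0.le, e2,
            ← mul_div_assoc δ (t ^ ((1:ℝ)/4)) (Ts ^ ((1:ℝ)/4)),
            le_div_iff₀ (by positivity)]
          calc _ ≤ 2 ^ (p - 1) * (δ * δ ^ (p - 1) * m ^ p) *
              (4 * (Ts ^ ((3 - p)/4) * t ^ ((1:ℝ)/4))) * Ts ^ ((1:ℝ)/4) := by gcongr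
            _ = (2 ^ (p - 1) * m ^ p * 4 * Ts ^ ((3 - p)/4) * Ts ^ ((1:ℝ)/4) * δ ^ (p - 1)) *
                (δ * t ^ ((1:ℝ)/4)) := by ring
            _ ≤ 1 * (δ * t ^ ((1:ℝ)/4)) := by gcongr
            _ = _ := one_mul _

noncomputable def Fp (p r : ℝ) : ℝ := |r| ^ (p - 1) * r

noncomputable def Nl (n : ℕ) (p : ℝ) (v : Eu n → ℝ → ℝ) (x : Eu n) (t : ℝ) : ℝ :=
  ∫ ys : Eu n × ℝ, heatKernel n (x - ys.1) (t - ys.2) * Fp p (v ys.1 ys.2)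
    ∂(volume.prod (volume.restrict (Ioo 0 t)))

noncomputable def Sr (n : ℕ) (φ : Eu n → ℝ) (x : Eu n) (t : ℝ) : ℝ :=
  ∫ y, heatKernel n (x - y) t * φ y

lemma measurable_Fp (p : ℝ) : Measurable (Fp p) := by
  unfold Fp; fun_prop

lemma abs_Fp {p : ℝ} (hp : 1 < p) (r : ℝ) : |Fp p r| = |r| ^ p := by
  unfold Fp
  rw [abs_mul, abs_of_nonneg (by positivity : 0 ≤ |r| ^ (p-1))]
  rcases eq_or_ne r 0 with h | h
  · subst h; simp [Real.zero_rpow (by linarith : p ≠ 0)]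
  · rw [Real.rpow_sub_one (abs_pos.2 h).ne']
    have := (abs_pos.2 h).ne'
    field_simp

lemma Fp_mono {p : ℝ} (hp : 1 < p) : Monotone (Fp p) := by
  intro a b h
  unfold Fp
  rcases le_total 0 a with ha | ha
  · rw [abs_of_nonneg ha, abs_of_nonneg (ha.trans h)]
    have hb := ha.trans h
    gcongr
  · rcases le_total 0 b with hb | hb
    · have h1 : |a| ^ (p-1) * a ≤ 0 := mul_nonpos_of_nonneg_of_nonpos (by positivity) ha
      have h2 : 0 ≤ |b| ^ (p-1) * b := by positivity
      linarith
    · rw [abs_of_nonpos ha, abs_of_nonpos hb]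
      have h3 : (-b) ^ (p-1) * (-b) ≤ (-a) ^ (p-1) * (-a) := by
        have : 0 ≤ -b := by linarith
        have : 0 ≤ -a := by linarith
        have : 0 ≤ p - 1 := by linarith
        gcongr
      linarith

lemma continuous_Fp {p : ℝ} (hp : 1 < p) : Continuous (Fp p) := by
  unfold Fp
  exact (continuous_abs.rpow_const (fun _ => Or.inr (by linarith))).mul continuous_id

lemma measurable_Nl (n : ℕ) (p : ℝ) {v : Eu n → ℝ → ℝ}
    (hv : Measurable fun q : Eu n × ℝ => v q.1 q.2) :
    Measurable fun q : Eu n × ℝ => Nl n p v q.1 q.2 := by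
  have hF := measurable_Fp p
  set f : (Eu n × ℝ) × (Eu n × ℝ) → ℝ := fun z => ({z : (Eu n × ℝ) × (Eu n × ℝ) |
    0 < z.2.2 ∧ z.2.2 < z.1.2}).indicator
      (fun z => heatKernel n (z.1.1 - z.2.1) (z.1.2 - z.2.2) * Fp p (v z.2.1 z.2.2)) z with hf
  have mf : Measurable f := by
    apply Measurable.indicator
    · exact (measurable_heatKernel_comp n (by fun_prop) (by fun_prop)).mul
        (hF.comp (hv.comp measurable_snd))
    · have a1 : Measurable fun z : (Eu n × ℝ) × (Eu n × ℝ) => z.2.2 := by fun_prop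
      have a2 : Measurable fun z : (Eu n × ℝ) × (Eu n × ℝ) => z.1.2 := by fun_prop
      exact (measurableSet_lt measurable_const a1).inter (measurableSet_lt a1 a2)
  have h := (mf.stronglyMeasurable.integral_prod_right' (ν := (volume.prod volume : Measure (Eu n × ℝ)))).measurable
  convert h using 2 with q
  unfold Nl
  have : (volume : Measure (Eu n)).prod (volume.restrict (Ioo 0 q.2)) =
      (volume.prod volume).restrict (univ ×ˢ Ioo 0 q.2) := by
    rw [← Measure.prod_restrict, Measure.restrict_univ]
  rw [this, ← integral_indicator (MeasurableSet.univ.prod measurableSet_Ioo)]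
  congr 1
  ext ys
  simp only [hf, indicator]
  congr 1
  simp

lemma measurable_Sr (n : ℕ) {φ : Eu n → ℝ} (hφ : Measurable φ) :
    Measurable fun q : Eu n × ℝ => Sr n φ q.1 q.2 := by
  have mf : Measurable fun z : (Eu n × ℝ) × Eu n => heatKernel n (z.1.1 - z.2) z.1.2 * φ z.2 :=
    (measurable_heatKernel_comp n (by fun_prop) (by fun_prop)).mul (hφ.comp measurable_snd)
  exact (mf.stronglyMeasurable.integral_prod_right' (ν := (volume : Measure (Eu n)))).measurable

lemma Sr_bound (n : ℕ) {φ : Eu n → ℝ} (hφ : Measurable φ) {x : Eu n} {t : ℝ} (ht : 0 < t)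
    (hfin : Sg n (PP φ) x t < ⊤) :
    Integrable (fun y => heatKernel n (x - y) t * φ y) ∧
      ENNReal.ofReal |Sr n φ x t| ≤ Sg n (PP φ) x t := by
  have e : ∀ y, ‖heatKernel n (x - y) t * φ y‖ₑ = HH n (x - y) t * PP φ y := by
    intro y
    rw [enorm_mul, Real.enorm_eq_ofReal_abs, Real.enorm_eq_ofReal_abs,
      abs_of_nonneg (heatKernel_nonneg n _ ht.le)]
    rfl
  have mf : Measurable fun y => heatKernel n (x - y) t * φ y :=
    (measurable_heatKernel_comp n (by fun_prop) (by fun_prop)).mul hφ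
  refine ⟨⟨mf.aestronglyMeasurable, ?_⟩, ?_⟩
  · rw [HasFiniteIntegral]; simp_rw [e]; exact hfin
  · rw [← Real.enorm_eq_ofReal_abs]
    refine (enorm_integral_le_lintegral_enorm _).trans ?_
    simp_rw [e]; rfl

lemma Nl_bound (n : ℕ) {p : ℝ} (hp : 1 < p) {T : ℝ} {U : Eu n → ℝ → ℝ≥0∞} {v : Eu n → ℝ → ℝ}
    (hv : Measurable fun q : Eu n × ℝ => v q.1 q.2)
    (hvU : ∀ y, ∀ s ∈ Ioo 0 T, ENNReal.ofReal |v y s| ≤ U y s) {x : Eu n} {t : ℝ}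
    (ht : t ∈ Ioo 0 T)
    (hfin : ∫⁻ ys : Eu n × ℝ, HH n (x - ys.1) (t - ys.2) * (U ys.1 ys.2) ^ p
        ∂(volume.prod (volume.restrict (Ioo 0 t))) < ⊤) :
    Integrable (fun ys : Eu n × ℝ => heatKernel n (x - ys.1) (t - ys.2) * Fp p (v ys.1 ys.2))
      (volume.prod (volume.restrict (Ioo 0 t))) ∧
    ENNReal.ofReal |Nl n p v x t| ≤ ∫⁻ ys : Eu n × ℝ, HH n (x - ys.1) (t - ys.2) * (U ys.1 ys.2) ^ p
        ∂(volume.prod (volume.restrict (Ioo 0 t))) := by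
  have hF := measurable_Fp p
  have hmem : ∀ᵐ ys : Eu n × ℝ ∂(volume.prod (volume.restrict (Ioo 0 t))), ys.2 ∈ Ioo 0 t :=
    Measure.quasiMeasurePreserving_snd.ae (ae_restrict_mem measurableSet_Ioo)
  have e : ∀ᵐ ys : Eu n × ℝ ∂(volume.prod (volume.restrict (Ioo 0 t))),
      ‖heatKernel n (x - ys.1) (t - ys.2) * Fp p (v ys.1 ys.2)‖ₑ ≤
        HH n (x - ys.1) (t - ys.2) * (U ys.1 ys.2) ^ p := by
    filter_upwards [hmem] with ys hy
    rw [enorm_mul, Real.enorm_eq_ofReal_abs, Real.enorm_eq_ofReal_abs, abs_Fp hp,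
      abs_of_nonneg (heatKernel_nonneg n _ (by linarith [hy.2])),
      ← ENNReal.ofReal_rpow_of_nonneg (abs_nonneg _) (by linarith)]
    unfold HH
    gcongr
    exact hvU _ _ ⟨hy.1, hy.2.trans ht.2⟩
  have mf : Measurable fun ys : Eu n × ℝ =>
      heatKernel n (x - ys.1) (t - ys.2) * Fp p (v ys.1 ys.2) :=
    (measurable_heatKernel_comp n (by fun_prop) (by fun_prop)).mul (hF.comp hv)
  have hle := lintegral_mono_ae e
  refine ⟨⟨mf.aestronglyMeasurable, ?_⟩, ?_⟩
  · rw [HasFiniteIntegral]; exact hle.trans_lt hfin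
  · rw [← Real.enorm_eq_ofReal_abs]
    exact (enorm_integral_le_lintegral_enorm _).trans hle

noncomputable def itr (n : ℕ) (p : ℝ) (φ : Eu n → ℝ) (U : Eu n → ℝ → ℝ≥0∞) : ℕ → Eu n → ℝ → ℝ
  | 0 => fun x t => (U x t).toReal
  | k + 1 => fun x t => Sr n φ x t + Nl n p (itr n p φ U k) x t

lemma exists_sol (n : ℕ) {p : ℝ} (hp : 1 < p) {T : ℝ} {φ : Eu n → ℝ}
    (hφ : Measurable φ) {U : Eu n → ℝ → ℝ≥0∞} (hU : Measurable fun q : Eu n × ℝ => U q.1 q.2)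
    (hfin : ∀ x, ∀ t ∈ Ioo 0 T, U x t < ⊤)
    (hsup : ∀ x, ∀ t ∈ Ioo 0 T, Sg n (PP φ) x t +
      ∫⁻ ys : Eu n × ℝ, HH n (x - ys.1) (t - ys.2) * (U ys.1 ys.2) ^ p
        ∂(volume.prod (volume.restrict (Ioo 0 t))) ≤ U x t) :
    ∃ u : Eu n → ℝ → ℝ, Measurable (fun q : Eu n × ℝ => u q.1 q.2) ∧
      (∀ x, ∀ t ∈ Ioo 0 T, ENNReal.ofReal |u x t| ≤ U x t) ∧
      ∀ x, ∀ t ∈ Ioo 0 T, u x t = Sr n φ x t + Nl n p u x t := by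
  have hf1 : ∀ x, ∀ t ∈ Ioo 0 T, Sg n (PP φ) x t < ⊤ := fun x t ht =>
    (le_self_add.trans (hsup x t ht)).trans_lt (hfin x t ht)
  have hf2 : ∀ x, ∀ t ∈ Ioo 0 T, ∫⁻ ys : Eu n × ℝ, HH n (x - ys.1) (t - ys.2) * (U ys.1 ys.2) ^ p
        ∂(volume.prod (volume.restrict (Ioo 0 t))) < ⊤ := fun x t ht =>
    (le_add_self.trans (hsup x t ht)).trans_lt (hfin x t ht)
  set w := itr n p φ U with hw
  have hstep : ∀ k x t, w (k+1) x t = Sr n φ x t + Nl n p (w k) x t := fun k x t => rfl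
  have hbS : ∀ v : Eu n → ℝ → ℝ, Measurable (fun q : Eu n × ℝ => v q.1 q.2) →
      (∀ x, ∀ t ∈ Ioo 0 T, ENNReal.ofReal |v x t| ≤ U x t) →
      ∀ x, ∀ t ∈ Ioo 0 T, ENNReal.ofReal |Sr n φ x t + Nl n p v x t| ≤ U x t := by
    intro v mv hv x t ht
    refine le_trans ?_ (hsup x t ht)
    refine le_trans (ENNReal.ofReal_le_ofReal (abs_add_le _ _)) ?_
    rw [ENNReal.ofReal_add (abs_nonneg _) (abs_nonneg _)]
    exact add_le_add (Sr_bound n hφ ht.1 (hf1 x t ht)).2 (Nl_bound n hp mv hv ht (hf2 x t ht)).2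
  have hm : ∀ k, Measurable fun q : Eu n × ℝ => w k q.1 q.2 := by
    intro k
    induction k with
    | zero => exact hU.ennreal_toReal
    | succ k ih => exact (measurable_Sr n hφ).add (measurable_Nl n p ih)
  have hb : ∀ k x, ∀ t ∈ Ioo 0 T, ENNReal.ofReal |w k x t| ≤ U x t := by
    intro k
    induction k with
    | zero =>
      intro x t ht
      show ENNReal.ofReal |(U x t).toReal| ≤ _
      rw [abs_of_nonneg ENNReal.toReal_nonneg, ENNReal.ofReal_toReal (hfin x t ht).ne]
    | succ k ih => exact hbS _ (hm k) ih
  have hbr : ∀ k x, ∀ t ∈ Ioo 0 T, |w k x t| ≤ (U x t).toReal := by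
    intro k x t ht
    exact (ENNReal.ofReal_le_iff_le_toReal (hfin x t ht).ne).1 (hb k x t ht)
  have hanti : ∀ k x, ∀ t ∈ Ioo 0 T, w (k+1) x t ≤ w k x t := by
    intro k
    induction k with
    | zero => intro x t ht; exact (le_abs_self _).trans (hbr 1 x t ht)
    | succ k ih =>
      intro x t ht
      rw [hstep, hstep]
      gcongr
      unfold Nl
      apply integral_mono_ae (Nl_bound n hp (hm _) (hb _) ht (hf2 x t ht)).1
        (Nl_bound n hp (hm _) (hb _) ht (hf2 x t ht)).1
      have hmem : ∀ᵐ ys : Eu n × ℝ ∂(volume.prod (volume.restrict (Ioo 0 t))), ys.2 ∈ Ioo 0 t :=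
        Measure.quasiMeasurePreserving_snd.ae (ae_restrict_mem measurableSet_Ioo)
      filter_upwards [hmem] with ys hy
      apply mul_le_mul_of_nonneg_left _ (heatKernel_nonneg n _ (by linarith [hy.2]))
      exact Fp_mono hp (ih _ _ ⟨hy.1, hy.2.trans ht.2⟩)
  have hlim : ∀ x, ∀ t ∈ Ioo 0 T, Filter.Tendsto (fun k => w k x t) Filter.atTop
      (nhds (⨅ k, w k x t)) := by
    intro x t ht
    apply tendsto_atTop_ciInf (antitone_nat_of_succ_le fun k => hanti k x t ht)
    refine ⟨-(U x t).toReal, ?_⟩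
    rintro _ ⟨k, rfl⟩
    exact neg_le_of_abs_le (hbr k x t ht)
  set u : Eu n → ℝ → ℝ := fun x t => ⨅ k, w k x t with hu
  have mu : Measurable (fun q : Eu n × ℝ => u q.1 q.2) := Measurable.iInf hm
  have hub : ∀ x, ∀ t ∈ Ioo 0 T, ENNReal.ofReal |u x t| ≤ U x t := by
    intro x t ht
    rw [ENNReal.ofReal_le_iff_le_toReal (hfin x t ht).ne]
    exact le_of_tendsto (hlim x t ht).abs (Filter.Eventually.of_forall fun k => hbr k x t ht)
  refine ⟨u, mu, hub, ?_⟩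
  intro x t ht
  have h1 := (hlim x t ht).comp (Filter.tendsto_add_atTop_nat 1)
  have h2 : Filter.Tendsto (fun k => w (k+1) x t) Filter.atTop
      (nhds (Sr n φ x t + Nl n p u x t)) := by
    simp_rw [hstep]
    apply Filter.Tendsto.const_add
    unfold Nl
    have hmem : ∀ᵐ ys : Eu n × ℝ ∂(volume.prod (volume.restrict (Ioo 0 t))), ys.2 ∈ Ioo 0 t :=
      Measure.quasiMeasurePreserving_snd.ae (ae_restrict_mem measurableSet_Ioo)
    have mF := measurable_Fp p
    apply tendsto_integral_of_dominated_convergence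
      (fun ys : Eu n × ℝ => |heatKernel n (x - ys.1) (t - ys.2) * Fp p (w 0 ys.1 ys.2)|)
    · intro k
      exact (Nl_bound n hp (hm k) (hb k) ht (hf2 x t ht)).1.1
    · exact (Nl_bound n hp (hm 0) (hb 0) ht (hf2 x t ht)).1.abs
    · intro k
      filter_upwards [hmem] with ys hy
      rw [Real.norm_eq_abs, abs_mul, abs_mul, abs_Fp hp, abs_Fp hp]
      have := hbr k ys.1 ys.2 ⟨hy.1, hy.2.trans ht.2⟩
      have h0 : |w 0 ys.1 ys.2| = (U ys.1 ys.2).toReal := abs_of_nonneg ENNReal.toReal_nonneg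
      rw [h0]
      gcongr
    · filter_upwards [hmem] with ys hy
      apply Filter.Tendsto.const_mul
      exact ((continuous_Fp hp).tendsto _).comp (hlim _ _ ⟨hy.1, hy.2.trans ht.2⟩)
  exact tendsto_nhds_unique h1 h2

lemma Zyg_add (n : ℕ) {f g : Eu n → ℝ≥0∞} {γ ρ C1 C2 : ℝ} (hf : Measurable f)
    (h1 : 0 ≤ C1) (h2 : 0 ≤ C2) (hZ1 : Zyg n f γ ρ C1) (hZ2 : Zyg n g γ ρ C2) :
    Zyg n (fun x => f x + g x) γ ρ (C1 + C2) := by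
  intro z E hE hEs r hr hrE
  have hL := logFac_pos hr
  rw [lintegral_add_left hf, add_mul, ENNReal.ofReal_add (by positivity) (by positivity)]
  exact add_le_add (hZ1 z E hE hEs r hr hrE) (hZ2 z E hE hEs r hr hrE)

lemma const_bound (n : ℕ) {T δ : ℝ} (hδ : 0 < δ) (hT : 0 < T) : ∃ C > 0, ∀ t, 0 < t → t ≤ T →
    δ ≤ C * (t ^ (-(n:ℝ)/2) * logFac t ^ (-(n:ℝ)/2)) := by
  obtain ⟨Cq, hCq, hq⟩ := logFac_quasi (α := 1) zero_le_one
  have hLT := logFac_pos hT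
  set M := Cq * (T * logFac T ^ (1:ℝ)) with hM
  have hM0 : 0 < M := by positivity
  refine ⟨δ * M ^ ((n:ℝ)/2), by positivity, ?_⟩
  intro t ht htT
  have hL := logFac_pos ht
  have h := hq t T ht htT
  rw [Real.rpow_one, ← hM] at h
  rw [← Real.mul_rpow ht.le hL.le, neg_div, Real.rpow_neg (by positivity), mul_assoc,
    ← div_eq_mul_inv]
  have : 1 ≤ M ^ ((n:ℝ)/2) / (t * logFac t) ^ ((n:ℝ)/2) := by
    rw [one_le_div (by positivity)]
    gcongr
  nlinarith

lemma Zyg_const (n : ℕ) (hn : 1 ≤ n) {T δ α : ℝ} (hδ : 0 < δ) (hT : 0 < T) (hα : 0 ≤ α) :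
    ∃ C > 0, Zyg n (fun _ => ENNReal.ofReal δ) α (T ^ ((1:ℝ)/2)) C := by
  obtain ⟨Cq, hCq, hq⟩ := logFac_quasi (α := α) hα
  have hvb := vb_pos n
  set τ := vb n * T ^ ((n:ℝ)/2) with hτ
  have hτ0 : 0 < τ := by positivity
  have hLτ := logFac_pos hτ0
  refine ⟨δ * ((Cq + 1) * (τ * logFac τ ^ α)), by positivity, ?_⟩
  intro z E hE hEs r hr hrE
  have hL := logFac_pos hr
  have hEτ : volume E ≤ ENNReal.ofReal τ :=
    (measure_mono hEs).trans (volume_ball_eq n hn hT z).le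
  rw [setLIntegral_const]
  have key : min r τ ≤ (Cq + 1) * (τ * logFac τ ^ α) * logFac r ^ (-α) := by
    rw [Real.rpow_neg hL.le, ← div_eq_mul_inv, le_div_iff₀ (by positivity)]
    have h0 : 0 ≤ τ * logFac τ ^ α := by positivity
    rcases le_total r τ with h | h
    · rw [min_eq_left h]
      have := hq r τ hr h
      nlinarith
    · rw [min_eq_right h]
      have : τ * logFac r ^ α ≤ τ * logFac τ ^ α := by
        have := logFac_anti hτ0 h
        gcongr
      nlinarith
  calc ENNReal.ofReal δ * volume E ≤ ENNReal.ofReal δ * ENNReal.ofReal (min r τ) := by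
        gcongr
        rcases le_total r τ with h | h
        · rwa [min_eq_left h]
        · rwa [min_eq_right h]
    _ = ENNReal.ofReal (δ * min r τ) := by rw [← ENNReal.ofReal_mul hδ.le]
    _ ≤ _ := by
      apply ENNReal.ofReal_le_ofReal
      rw [mul_assoc]
      gcongr

lemma UU_sup (n : ℕ) (hn : 1 ≤ n) {T δ ε : ℝ} (hδ : 0 < δ) (hT : 0 < T) (hε : 0 < ε) (hε1 : ε ≤ 1)
    {φ : Eu n → ℝ} (hφ : Measurable φ) (hZ : Zyg n (PP φ) ((n:ℝ)/2) (T ^ ((1:ℝ)/2)) ε) :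
    ∃ C > 0, ∀ t, 0 < t → t ≤ T → ∀ x,
      UU n φ δ x t ≤ ENNReal.ofReal (C * (t ^ (-(n:ℝ)/2) * logFac t ^ (-(n:ℝ)/2))) ∧
      ENNReal.ofReal (logFac t ^ (-(1:ℝ)/4)) * Sg n (GG φ) x t ≤
        ENNReal.ofReal (C * (t ^ (-(n:ℝ)/2) * logFac t ^ (-(n:ℝ)/2))) := by
  have hn' : (1:ℝ) ≤ n := by exact_mod_cast hn
  obtain ⟨C1, hC1, h1⟩ := sup_bound n hn (γ := (n:ℝ)/2) (by linarith)
  obtain ⟨C2, hC2, h2⟩ := sup_bound n hn (γ := (n:ℝ)/2 - 1/4) (by linarith)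
  obtain ⟨C3, hC3, h3⟩ := const_bound n hδ hT
  have hC0 := C0_pos
  have hZ2 := Zyg_gamma n hn hφ hε hε1 hZ
  refine ⟨C1 * ε + (C2 * (C0 * ε) + C3), by positivity, ?_⟩
  intro t ht htT x
  have hL := logFac_pos ht
  set Q := t ^ (-(n:ℝ)/2) * logFac t ^ (-(n:ℝ)/2) with hQ
  have hQ0 : 0 < Q := by positivity
  have a1 : Sg n (PP φ) x t ≤ ENNReal.ofReal (C1 * ε * Q) := by
    have := h1 _ (measurable_PP hφ) ε T hε.le hT hZ t ht htT x
    rwa [← neg_div] at this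
  have a2 : ENNReal.ofReal (logFac t ^ (-(1:ℝ)/4)) * Sg n (GG φ) x t ≤
      ENNReal.ofReal (C2 * (C0 * ε) * Q) := by
    calc _ ≤ ENNReal.ofReal (logFac t ^ (-(1:ℝ)/4)) * ENNReal.ofReal
          (C2 * (C0 * ε) * (t ^ (-(n:ℝ)/2) * logFac t ^ (-((n:ℝ)/2 - 1/4)))) := by
          gcongr
          exact h2 _ (measurable_GG hφ) _ T (by positivity) hT hZ2 t ht htT x
      _ = _ := by
          rw [← ENNReal.ofReal_mul (by positivity)]
          congr 1
          have : logFac t ^ (-(n:ℝ)/2) = logFac t ^ (-(1:ℝ)/4) * logFac t ^ (-((n:ℝ)/2 - 1/4)) := by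
            rw [← Real.rpow_add hL]; congr 1; ring
          rw [hQ, this]; ring
  constructor
  · unfold UU
    rw [add_mul, ENNReal.ofReal_add (by positivity) (by positivity), add_mul,
      ENNReal.ofReal_add (by positivity) (by positivity)]
    gcongr
    exact h3 t ht htT
  · refine a2.trans (ENNReal.ofReal_le_ofReal ?_)
    gcongr
    have : 0 < C1 * ε := by positivity
    linarith

lemma UU_Zyg (n : ℕ) (hn : 1 ≤ n) {T δ ε : ℝ} (hδ : 0 < δ) (hT : 0 < T) (hε : 0 < ε) (hε1 : ε ≤ 1)
    {φ : Eu n → ℝ} (hφ : Measurable φ) (hZ : Zyg n (PP φ) ((n:ℝ)/2) (T ^ ((1:ℝ)/2)) ε) :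
    ∃ C > 0, ∀ t, 0 < t → t ≤ T →
      Zyg n (fun x => UU n φ δ x t) ((n:ℝ)/2) (T ^ ((1:ℝ)/2)) C := by
  have hn' : (1:ℝ) ≤ n := by exact_mod_cast hn
  have hn0 : (0:ℝ) < n := by linarith
  obtain ⟨C1, hC1, h1⟩ := UU_sup n hn hδ hT hε hε1 hφ hZ
  obtain ⟨C3, hC3, h3⟩ := Zyg_const n hn (α := (n:ℝ)/2) hδ hT (by positivity)
  obtain ⟨c, hc, hcmp⟩ := logFac_cmp (a := 1) (k := 2 / (n:ℝ)) one_pos (by positivity)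
  obtain ⟨Cq, hCq, hq⟩ := logFac_quasi (α := (n:ℝ)/2) (by positivity)
  have hC0 := C0_pos
  have hZ2 := Zyg_gamma n hn hφ hε hε1 hZ
  set C2 := c ^ (-(1:ℝ)/4) * (C0 * ε) + C1 * c ^ (-(n:ℝ)/2) * Cq with hC2
  have hC20 : 0 < C2 := by positivity
  refine ⟨ε + (C2 + C3), by positivity, ?_⟩
  intro t ht htT
  have mP := measurable_Sg_x n (measurable_PP hφ) t
  have mG := measurable_Sg_x n (measurable_GG hφ) t
  unfold UU
  apply Zyg_add n mP hε.le (by positivity) (Zyg_Sg n (measurable_PP hφ) ht hZ)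
  apply Zyg_add n (mG.const_mul _) hC20.le hC3.le _ h3
  intro z E hE hEs r hr hrE
  have hLt := logFac_pos ht
  have hLr := logFac_pos hr
  set τ := t ^ ((n:ℝ)/2) with hτ
  have hτ0 : 0 < τ := by positivity
  have hLτ := logFac_pos hτ0
  have hcτ : c * logFac τ ≤ logFac t := by
    have := hcmp τ hτ0
    rwa [one_mul, hτ, ← Real.rpow_mul ht.le, show (n:ℝ)/2 * (2/n) = 1 by field_simp,
      Real.rpow_one] at this
  rcases le_total τ r with h | h
  · rw [lintegral_const_mul _ mG]
    calc _ ≤ ENNReal.ofReal (logFac t ^ (-(1:ℝ)/4)) *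
          ENNReal.ofReal (C0 * ε * logFac r ^ (-((n:ℝ)/2 - 1/4))) := by
          gcongr
          exact Zyg_Sg n (measurable_GG hφ) ht hZ2 z E hE hEs r hr hrE
      _ ≤ _ := by
          rw [← ENNReal.ofReal_mul (by positivity)]
          apply ENNReal.ofReal_le_ofReal
          have e1 : logFac t ^ (-(1:ℝ)/4) ≤ c ^ (-(1:ℝ)/4) * logFac r ^ (-(1:ℝ)/4) := by
            rw [← Real.mul_rpow hc.le hLr.le]
            apply Real.rpow_le_rpow_of_nonpos (by positivity) _ (by norm_num)
            refine le_trans ?_ hcτ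
            have := logFac_anti hτ0 h
            gcongr
          have e2 : logFac r ^ (-((n:ℝ)/2)) = logFac r ^ (-(1:ℝ)/4) * logFac r ^ (-((n:ℝ)/2 - 1/4)) := by
            rw [← Real.rpow_add hLr]; congr 1; ring
          calc _ ≤ c ^ (-(1:ℝ)/4) * logFac r ^ (-(1:ℝ)/4) * (C0 * ε * logFac r ^ (-((n:ℝ)/2 - 1/4))) := by
                gcongr
            _ = c ^ (-(1:ℝ)/4) * (C0 * ε) * logFac r ^ (-((n:ℝ)/2)) := by rw [e2]; ring
            _ ≤ _ := by
                gcongr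
                rw [hC2]
                have : 0 < C1 * c ^ (-(n:ℝ)/2) * Cq := by positivity
                linarith
  · calc _ ≤ ∫⁻ x in E, ENNReal.ofReal (C1 * (t ^ (-(n:ℝ)/2) * logFac t ^ (-(n:ℝ)/2))) := by
          apply lintegral_mono
          intro x
          exact (h1 t ht htT x).2
      _ = ENNReal.ofReal (C1 * (t ^ (-(n:ℝ)/2) * logFac t ^ (-(n:ℝ)/2))) * volume E :=
          setLIntegral_const _ _
      _ ≤ ENNReal.ofReal (C1 * (t ^ (-(n:ℝ)/2) * logFac t ^ (-(n:ℝ)/2))) * ENNReal.ofReal r := by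
          gcongr
      _ ≤ _ := by
          rw [← ENNReal.ofReal_mul (by positivity)]
          apply ENNReal.ofReal_le_ofReal
          have e1 : logFac t ^ (-(n:ℝ)/2) ≤ c ^ (-(n:ℝ)/2) * logFac τ ^ (-(n:ℝ)/2) := by
            rw [← Real.mul_rpow hc.le hLτ.le]
            exact Real.rpow_le_rpow_of_nonpos (by positivity) hcτ (by rw [neg_div]; linarith)
          have e2 : r * (τ⁻¹ * logFac τ ^ (-(n:ℝ)/2)) ≤ Cq * logFac r ^ (-((n:ℝ)/2)) := by
            have := hq r τ hr h
            rw [neg_div, Real.rpow_neg hLτ.le, Real.rpow_neg hLr.le, ← mul_inv, ← div_eq_mul_inv,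
              ← div_eq_mul_inv, div_le_div_iff₀ (by positivity) (by positivity)]
            exact this
          have e3 : t ^ (-(n:ℝ)/2) = τ⁻¹ := by rw [neg_div, Real.rpow_neg ht.le]
          rw [e3]
          calc _ ≤ C1 * (τ⁻¹ * (c ^ (-(n:ℝ)/2) * logFac τ ^ (-(n:ℝ)/2))) * r := by gcongr
            _ = C1 * c ^ (-(n:ℝ)/2) * (r * (τ⁻¹ * logFac τ ^ (-(n:ℝ)/2))) := by ring
            _ ≤ C1 * c ^ (-(n:ℝ)/2) * (Cq * logFac r ^ (-((n:ℝ)/2))) := by gcongr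
            _ = C1 * c ^ (-(n:ℝ)/2) * Cq * logFac r ^ (-((n:ℝ)/2)) := by ring
            _ ≤ _ := by
                gcongr
                rw [hC2]
                have : 0 < c ^ (-(1:ℝ)/4) * (C0 * ε) := by positivity
                linarith

lemma Zyg_trans (n : ℕ) {f : Eu n → ℝ≥0∞} (hf : Measurable f) {γ ρ C : ℝ}
    (h : Zyg n f γ ρ C) (w : Eu n) : Zyg n (fun x => f (x - w)) γ ρ C := by
  intro z E hE hEz r hr hEr
  have mp : MeasurePreserving (fun x : Eu n => x - w) volume volume :=
    measurePreserving_sub_right volume w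
  have mp2 : MeasurePreserving (fun x : Eu n => x + w) volume volume :=
    measurePreserving_add_right volume w
  have hE' : MeasurableSet ((fun x : Eu n => x + w) ⁻¹' E) := mp2.measurable hE
  have e := mp.setLIntegral_comp_preimage hE' hf
  have e2 : (fun x : Eu n => x - w) ⁻¹' ((fun x : Eu n => x + w) ⁻¹' E) = E := by
    ext x; simp
  rw [e2] at e
  rw [e]
  apply h (z - w) _ hE' _ r hr
  · rwa [mp2.measure_preimage hE.nullMeasurableSet]
  · intro x hx
    have := hEz hx
    rw [Metric.mem_ball, dist_eq_norm] at this ⊢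
    rwa [show x - (z - w) = x + w - z by abel]

lemma Zyg_compact (n : ℕ) (hn : 1 ≤ n) {T γ C : ℝ} (hT : 0 < T) {K : Set (Eu n)}
    (hK : IsCompact K) : ∃ M : ℝ, 0 ≤ M ∧ ∀ f : Eu n → ℝ≥0∞, 
      Zyg n f γ (T ^ ((1:ℝ)/2)) C → ∫⁻ x in K, f x ≤ ENNReal.ofReal M := by
  obtain ⟨s, -, hs, hsK⟩ := hK.finite_cover_balls (e := T ^ ((1:ℝ)/2)) (by positivity)
  set A : ℝ := C * logFac (vb n * T ^ ((n:ℝ)/2)) ^ (-γ) with hA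
  refine ⟨hs.toFinset.card * |A|, by positivity, ?_⟩
  intro f hf
  have hvb := vb_pos n
  calc ∫⁻ x in K, f x ≤ ∫⁻ x in ⋃ z ∈ hs.toFinset, Metric.ball z (T ^ ((1:ℝ)/2)), f x := by
        apply lintegral_mono_set
        simpa using hsK
    _ ≤ ∑ z ∈ hs.toFinset, ∫⁻ x in Metric.ball z (T ^ ((1:ℝ)/2)), f x := by
        have hm : MeasurableSet (⋃ z ∈ hs.toFinset, Metric.ball z (T ^ ((1:ℝ)/2))) :=
          Finset.measurableSet_biUnion _ fun _ _ => measurableSet_ball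
        rw [← withDensity_apply _ hm]
        refine (measure_biUnion_finset_le _ _).trans ?_
        apply Finset.sum_le_sum
        intro z _
        rw [withDensity_apply _ measurableSet_ball]
    _ ≤ ∑ z ∈ hs.toFinset, ENNReal.ofReal |A| := by
        apply Finset.sum_le_sum
        intro z _
        refine (hf z _ measurableSet_ball subset_rfl (vb n * T ^ ((n:ℝ)/2)) (by positivity)
          (volume_ball_eq n hn hT z).le).trans ?_
        exact ENNReal.ofReal_le_ofReal (le_abs_self _)
    _ = _ := by
        rw [Finset.sum_const, nsmul_eq_mul, ENNReal.ofReal_mul (by positivity)]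
        simp

lemma eta_bound (n : ℕ) {η : Eu n → ℝ} (hc : Continuous η) (hs : HasCompactSupport η) :
    ∃ Mη : ℝ, 0 ≤ Mη ∧ ∀ f : Eu n → ℝ≥0∞, ∫⁻ x, f x * ENNReal.ofReal |η x| ≤
      ENNReal.ofReal Mη * ∫⁻ x in tsupport η, f x := by
  obtain ⟨M, hM⟩ := hs.exists_bound_of_continuous hc
  refine ⟨|M|, abs_nonneg _, ?_⟩
  intro f
  rw [← lintegral_const_mul' _ _ (by simp), ← lintegral_indicator (isClosed_tsupport η).measurableSet]
  apply lintegral_mono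
  intro x
  by_cases hx : x ∈ tsupport η
  · simp only [indicator_of_mem hx]
    rw [mul_comm]
    exact mul_le_mul' (ENNReal.ofReal_le_ofReal ((hM x).trans (le_abs_self _))) le_rfl
  · simp only [indicator_of_notMem hx]
    simp [image_eq_zero_of_notMem_tsupport hx]

lemma heat_scale (n : ℕ) {t : ℝ} (ht : 0 < t) (v : Eu n) :
    (t ^ ((1:ℝ)/2)) ^ n * heatKernel n ((t ^ ((1:ℝ)/2)) • v) t = heatKernel n v 1 := by
  unfold heatKernel
  have h1 : ‖(t ^ ((1:ℝ)/2)) • v‖ ^ 2 = t * ‖v‖ ^ 2 := by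
    rw [norm_smul, mul_pow, Real.norm_eq_abs, abs_of_pos (by positivity), ← Real.rpow_natCast,
      ← Real.rpow_mul ht.le]
    norm_num
  rw [h1, Real.mul_rpow (by positivity) ht.le, ← Real.rpow_natCast, ← Real.rpow_mul ht.le]
  have h2 : -(t * ‖v‖ ^ 2) / (4 * t) = -‖v‖ ^ 2 / (4 * 1) := by field_simp
  rw [h2, neg_div, Real.rpow_neg ht.le, mul_one]
  have h3 : t ^ ((1:ℝ)/2 * n) = t ^ ((n:ℝ)/2) := by congr 1; ring
  rw [h3]
  have : t ^ ((n:ℝ)/2) ≠ 0 := by positivity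
  field_simp

lemma approx_id (n : ℕ) {J : Eu n → ℝ} (hJ : Continuous J) {M : ℝ} (hM : ∀ w, |J w| ≤ M) :
    Filter.Tendsto (fun t => ∫ w, heatKernel n w t * J w) (nhdsWithin 0 (Ioi 0)) (nhds (J 0)) := by
  have h1 : ∀ t > 0, ∫ w, heatKernel n w t * J w =
      ∫ v, heatKernel n v 1 * J ((t ^ ((1:ℝ)/2)) • v) := by
    intro t ht
    have hp : 0 < t ^ ((1:ℝ)/2) := by positivity
    have := Measure.integral_comp_smul (volume : Measure (Eu n))
      (fun w => heatKernel n w t * J w) (t ^ ((1:ℝ)/2))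
    rw [finrank_euclideanSpace_fin, abs_of_pos (by positivity), smul_eq_mul] at this
    rw [eq_comm, inv_mul_eq_iff_eq_mul₀ (by positivity)] at this
    rw [this, ← integral_const_mul]
    congr 1; ext v
    rw [← mul_assoc, heat_scale n ht]
  have h2 : Filter.Tendsto (fun t : ℝ => ∫ v, heatKernel n v 1 * J ((t ^ ((1:ℝ)/2)) • v))
      (nhdsWithin 0 (Ioi 0)) (nhds (∫ v, heatKernel n v 1 * J 0)) := by
    apply tendsto_integral_filter_of_dominated_convergence (fun v => heatKernel n v 1 * M)
    · refine Filter.Eventually.of_forall fun t => ?_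
      apply Measurable.aestronglyMeasurable
      exact (measurable_heatKernel_comp n (by fun_prop) (by fun_prop)).mul
        (hJ.measurable.comp (by fun_prop))
    · refine Filter.Eventually.of_forall fun t => Filter.Eventually.of_forall fun v => ?_
      rw [norm_mul, Real.norm_eq_abs, Real.norm_eq_abs, abs_of_nonneg (heatKernel_nonneg n _ zero_le_one)]
      exact mul_le_mul_of_nonneg_left (hM _) (heatKernel_nonneg n _ zero_le_one)
    · exact (integrable_heatKernel n one_pos).mul_const _
    · refine Filter.Eventually.of_forall fun v => ?_
      apply Filter.Tendsto.const_mul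
      have h3 : Filter.Tendsto (fun t : ℝ => (t ^ ((1:ℝ)/2)) • v) (nhdsWithin 0 (Ioi 0)) (nhds 0) := by
        have : Continuous fun t : ℝ => (t ^ ((1:ℝ)/2)) • v :=
          (Real.continuous_rpow_const (by norm_num)).smul continuous_const
        have h4 := this.tendsto 0
        rw [Real.zero_rpow (by norm_num), zero_smul] at h4
        exact h4.mono_left nhdsWithin_le_nhds
      exact (hJ.tendsto 0).comp h3
  rw [integral_mul_const, integral_heatKernel n one_pos, one_mul] at h2
  refine h2.congr' ?_
  filter_upwards [self_mem_nhdsWithin] with t ht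
  exact (h1 t ht).symm

lemma conv_lin (n : ℕ) (hn : 1 ≤ n) {φ : Eu n → ℝ} (hφ : Measurable φ) (hl : LocallyIntegrable φ volume)
    {T γ C : ℝ} (hT : 0 < T) (hZ : Zyg n (PP φ) γ (T ^ ((1:ℝ)/2)) C)
    {η : Eu n → ℝ} (hc : Continuous η) (hs : HasCompactSupport η) :
    (∀ t > 0, Integrable fun x => Sr n φ x t * η x) ∧
    Filter.Tendsto (fun t => ∫ x, Sr n φ x t * η x) (nhdsWithin 0 (Ioi 0))
      (nhds (∫ x, φ x * η x)) := by
  obtain ⟨Mη, hMη, hη⟩ := eta_bound n hc hs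
  obtain ⟨MK, hMK, hK⟩ := Zyg_compact n hn (γ := γ) (C := C) hT hs.isCompact
  have hM : ∀ w, ∫⁻ x, PP φ (x - w) * ENNReal.ofReal |η x| ≤ ENNReal.ofReal (Mη * MK) := by
    intro w
    rw [ENNReal.ofReal_mul hMη]
    refine (hη _).trans ?_
    gcongr
    exact hK _ (Zyg_trans n (measurable_PP hφ) hZ w)
  set J : Eu n → ℝ := fun w => ∫ x, φ (x - w) * η x with hJ
  have hJb : ∀ w, |J w| ≤ Mη * MK := by
    intro w
    rw [← ENNReal.ofReal_le_ofReal_iff (by positivity), ← Real.enorm_eq_ofReal_abs]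
    refine (enorm_integral_le_lintegral_enorm _).trans (le_trans (le_of_eq ?_) (hM w))
    congr 1; ext x
    rw [enorm_mul, Real.enorm_eq_ofReal_abs, Real.enorm_eq_ofReal_abs]; rfl
  have hJc : Continuous J := by
    have hs' : HasCompactSupport (fun z => η (-z)) := hs.comp_homeomorph (Homeomorph.neg _)
    have hcc := hs'.continuous_convolution_right (ContinuousLinearMap.mul ℝ ℝ) hl
      (hc.comp continuous_neg)
    have : J = fun w => (convolution φ (fun z => η (-z)) (ContinuousLinearMap.mul ℝ ℝ) volume) (-w) := by
      ext w
      simp only [hJ, convolution, ContinuousLinearMap.mul_apply']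
      rw [← integral_sub_right_eq_self (fun y => φ y * η (-(-w - y))) w]
      congr 1; ext x; congr 2; abel
    rw [this]
    exact hcc.comp continuous_neg
  have hJ0 : J 0 = ∫ x, φ x * η x := by simp [hJ]
  have hsw : ∀ x t, Sr n φ x t = ∫ w, heatKernel n w t * φ (x - w) := by
    intro x t
    unfold Sr
    rw [← integral_sub_left_eq_self (fun y => heatKernel n (x - y) t * φ y) volume x]
    congr 1; ext w; simp
  have hint : ∀ t > 0, Integrable (Function.uncurry fun x w : Eu n =>
      heatKernel n w t * φ (x - w) * η x) (volume.prod volume) := by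
    intro t ht
    have mf : Measurable (Function.uncurry fun x w : Eu n => heatKernel n w t * φ (x - w) * η x) :=
      ((measurable_heatKernel_comp n (by fun_prop) (by fun_prop)).mul
        (hφ.comp (by fun_prop))).mul (hc.measurable.comp measurable_fst)
    refine ⟨mf.aestronglyMeasurable, ?_⟩
    rw [HasFiniteIntegral, lintegral_prod_symm' _ mf.enorm]
    calc _ ≤ ∫⁻ w, HH n w t * ENNReal.ofReal (Mη * MK) := by
          apply lintegral_mono
          intro w
          refine le_trans (le_of_eq ?_) (mul_le_mul_right (hM w) _)
          rw [← lintegral_const_mul' _ _ (by simp [HH])]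
          refine lintegral_congr fun x => ?_
          simp only [Function.uncurry]
          rw [enorm_mul, enorm_mul, Real.enorm_eq_ofReal_abs, Real.enorm_eq_ofReal_abs,
            Real.enorm_eq_ofReal_abs, abs_of_nonneg (heatKernel_nonneg n _ ht.le), mul_assoc]
          rfl
      _ < ⊤ := by
          rw [lintegral_mul_const' _ _ (by simp), lintegral_HH n ht, one_mul]
          simp
  have hSr : ∀ t x, Sr n φ x t * η x = ∫ w, heatKernel n w t * φ (x - w) * η x := by
    intro t x
    rw [integral_mul_const, hsw]
  refine ⟨fun t ht => ?_, ?_⟩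
  · simp_rw [hSr]
    exact (hint t ht).integral_prod_left
  · rw [← hJ0]
    refine (approx_id n hJc hJb).congr' ?_
    filter_upwards [self_mem_nhdsWithin] with t ht
    simp_rw [hSr]
    rw [integral_integral_swap (hint t ht)]
    congr 1; ext w
    simp_rw [mul_assoc]
    rw [integral_const_mul]

lemma conv_full (n : ℕ) (hn : 1 ≤ n) {φ : Eu n → ℝ} (hφ : Measurable φ) (hl : LocallyIntegrable φ volume)
    {T γ C γ2 C2 : ℝ} (hT : 0 < T) (hZ : Zyg n (PP φ) γ (T ^ ((1:ℝ)/2)) C)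
    (hZ2 : Zyg n (GG φ) γ2 (T ^ ((1:ℝ)/2)) C2) {N : Eu n → ℝ → ℝ}
    (hN : Measurable fun q : Eu n × ℝ => N q.1 q.2) {δ Ts : ℝ}
    (hNb : ∀ x, ∀ t ∈ Ioo 0 T, ENNReal.ofReal |N x t| ≤
      ENNReal.ofReal (logFac t ^ (-(1:ℝ)/4)) * Sg n (GG φ) x t +
        ENNReal.ofReal (δ * (t / Ts) ^ ((1:ℝ)/4)))
    {u : Eu n → ℝ → ℝ} (hu : ∀ x, ∀ t ∈ Ioo 0 T, u x t = Sr n φ x t + N x t)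
    {η : Eu n → ℝ} (hc : Continuous η) (hs : HasCompactSupport η) :
    Filter.Tendsto (fun t => ∫ x, u x t * η x) (nhdsWithin 0 (Ioi 0))
      (nhds (∫ x, φ x * η x)) := by
  obtain ⟨hl1, hl2⟩ := conv_lin n hn hφ hl hT hZ hc hs
  obtain ⟨Mη, hMη, hη⟩ := eta_bound n hc hs
  obtain ⟨MK, hMK, hK⟩ := Zyg_compact n hn (γ := γ2) (C := C2) hT hs.isCompact
  have hmem : ∀ᶠ t in nhdsWithin (0:ℝ) (Ioi 0), t ∈ Ioo 0 T := Ioo_mem_nhdsGT hT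
  set V := (volume (tsupport η)).toReal with hV
  have hVfin : volume (tsupport η) ≠ ⊤ := hs.isCompact.measure_lt_top.ne
  set B : ℝ → ℝ := fun t => Mη * (logFac t ^ (-(1:ℝ)/4) * MK + |δ * (t / Ts) ^ ((1:ℝ)/4)| * V) with hB
  have hNl : ∀ t ∈ Ioo 0 T, ∫⁻ x, ‖N x t * η x‖ₑ ≤ ENNReal.ofReal (B t) := by
    intro t ht
    have hL := logFac_pos ht.1
    have mG := measurable_Sg_x n (measurable_GG hφ) t
    simp_rw [enorm_mul, Real.enorm_eq_ofReal_abs]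
    refine (hη _).trans ?_
    rw [hB, ENNReal.ofReal_mul hMη]
    gcongr
    rw [ENNReal.ofReal_add (by positivity) (by positivity), ENNReal.ofReal_mul (by positivity),
      ENNReal.ofReal_mul (by positivity), hV, ENNReal.ofReal_toReal hVfin]
    calc _ ≤ ∫⁻ x in tsupport η, (ENNReal.ofReal (logFac t ^ (-(1:ℝ)/4)) * Sg n (GG φ) x t +
        ENNReal.ofReal |δ * (t / Ts) ^ ((1:ℝ)/4)|) := by
          apply lintegral_mono
          intro x
          refine (hNb x t ht).trans ?_
          exact add_le_add le_rfl (ENNReal.ofReal_le_ofReal (le_abs_self _))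
      _ = ENNReal.ofReal (logFac t ^ (-(1:ℝ)/4)) * (∫⁻ x in tsupport η, Sg n (GG φ) x t) +
          ENNReal.ofReal |δ * (t / Ts) ^ ((1:ℝ)/4)| * volume (tsupport η) := by
          rw [lintegral_add_right _ measurable_const, lintegral_const_mul _ mG, setLIntegral_const]
      _ ≤ _ := by
          exact add_le_add (mul_le_mul' le_rfl (hK _ (Zyg_Sg n (measurable_GG hφ) ht.1 hZ2))) le_rfl
  have hBt : Filter.Tendsto B (nhdsWithin 0 (Ioi 0)) (nhds 0) := by
    have a1 := tendsto_logFac_neg (β := 1/4) (by norm_num)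
    rw [show -(1/4:ℝ) = -(1:ℝ)/4 by ring] at a1
    have a2 : Filter.Tendsto (fun t : ℝ => |δ * (t / Ts) ^ ((1:ℝ)/4)|) (nhdsWithin 0 (Ioi 0)) (nhds 0) := by
      have : Continuous fun t : ℝ => |δ * (t / Ts) ^ ((1:ℝ)/4)| :=
        (continuous_const.mul ((continuous_id.div_const _).rpow_const fun _ => Or.inr (by norm_num))).abs
      have h4 := this.tendsto 0
      rw [zero_div, Real.zero_rpow (by norm_num), mul_zero, abs_zero] at h4
      exact h4.mono_left nhdsWithin_le_nhds
    have := ((a1.mul_const MK).add (a2.mul_const V)).const_mul Mη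
    rw [zero_mul, zero_mul, add_zero, mul_zero] at this
    exact this
  have hNt : Filter.Tendsto (fun t => ∫ x, N x t * η x) (nhdsWithin 0 (Ioi 0)) (nhds 0) := by
    apply squeeze_zero_norm' _ hBt
    filter_upwards [hmem] with t ht
    have hL := logFac_pos ht.1
    have hB0 : 0 ≤ B t := by simp only [hB]; positivity
    rw [Real.norm_eq_abs, ← ENNReal.ofReal_le_ofReal_iff hB0, ← Real.enorm_eq_ofReal_abs]
    exact (enorm_integral_le_lintegral_enorm _).trans (hNl t ht)
  have := hl2.add hNt
  rw [add_zero] at this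
  refine this.congr' ?_
  filter_upwards [hmem] with t ht
  rw [← integral_add (hl1 t ht.1)]
  · congr 1; ext x; rw [hu x t ht]; ring
  · have mN : Measurable fun x => N x t * η x :=
      (hN.comp (by fun_prop : Measurable fun x : Eu n => (x, t))).mul hc.measurable
    exact ⟨mN.aestronglyMeasurable, (hNl t ht).trans_lt ENNReal.ofReal_lt_top⟩

theorem stmt0 (n : ℕ) (hn : 1 ≤ n) (p : ℝ) (hp : p = 1 + 2 / n)
    (Tstar : ℝ) (hTstar : 0 < Tstar) :
    ∃ ε > (0 : ℝ), ∀ φ : EuclideanSpace ℝ (Fin n) → ℝ,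
      LocallyIntegrable φ volume →
      ∀ T : ℝ, 0 < T → T ≤ Tstar →
        zygNormUL n 1 ((n : ℝ) / 2) (T ^ ((1 : ℝ) / 2)) φ ≤ ENNReal.ofReal ε →
        ∃ u : EuclideanSpace ℝ (Fin n) → ℝ → ℝ,
          IsSolution n p T φ u ∧
          (⨆ t : Set.Ioo (0 : ℝ) T,
            zygNormUL n 1 ((n : ℝ) / 2) (T ^ ((1 : ℝ) / 2)) (fun x => u x t.1)) < ⊤ ∧
          (⨆ t : Set.Ioo (0 : ℝ) T,
            ENNReal.ofReal (t.1 ^ ((n : ℝ) / 2) * logFac t.1 ^ ((n : ℝ) / 2)) *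
              eLpNorm (fun x => u x t.1) ⊤ volume) < ⊤ ∧
          ∀ η : EuclideanSpace ℝ (Fin n) → ℝ, Continuous η → HasCompactSupport η →
            Filter.Tendsto (fun t => ∫ x, u x t * η x)
              (nhdsWithin 0 (Set.Ioi 0)) (nhds (∫ x, φ x * η x)) := by
  have hn' : (1:ℝ) ≤ n := by exact_mod_cast hn
  have hn0 : (0:ℝ) < n := by linarith
  have hp1 : 1 < p := by
    rw [hp]
    have : 0 < 2 / (n:ℝ) := by positivity
    linarith
  obtain ⟨ε, δ, hε, hε1, hδ, hnl⟩ := nonlinear n hn p hp Tstar hTstar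
  refine ⟨ε, hε, ?_⟩
  intro φ₀ hl₀ T hT hTT hnorm
  have hZ₀ := Zyg_of_norm n hnorm hε.le (by positivity)
  obtain ⟨φ, hφs, hae⟩ := hl₀.aestronglyMeasurable
  have hφ : Measurable φ := hφs.measurable
  have hl : LocallyIntegrable φ volume := hl₀.congr hae
  have hZ : Zyg n (PP φ) ((n:ℝ)/2) (T ^ ((1:ℝ)/2)) ε := by
    intro z E hE hEz r hr hEr
    refine le_trans (le_of_eq ?_) (hZ₀ z E hE hEz r hr hEr)
    apply lintegral_congr_ae
    filter_upwards [ae_restrict_of_ae hae] with x hx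
    simp only [PP, hx]
  have hZ2 := Zyg_gamma n hn hφ hε hε1 hZ
  have hnlU := hnl φ hφ T hT hTT hZ
  obtain ⟨C1, hC1, hUs⟩ := UU_sup n hn hδ hT hε hε1 hφ hZ
  obtain ⟨C2, hC2, hUZ⟩ := UU_Zyg n hn hδ hT hε hε1 hφ hZ
  have hfin : ∀ x, ∀ t ∈ Ioo 0 T, UU n φ δ x t < ⊤ := fun x t ht =>
    ((hUs t ht.1 ht.2.le x).1).trans_lt ENNReal.ofReal_lt_top
  have hsup : ∀ x, ∀ t ∈ Ioo 0 T, Sg n (PP φ) x t +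
      ∫⁻ ys : Eu n × ℝ, HH n (x - ys.1) (t - ys.2) * (UU n φ δ ys.1 ys.2) ^ p
        ∂(volume.prod (volume.restrict (Ioo 0 t))) ≤ UU n φ δ x t := by
    intro x t ht
    refine add_le_add le_rfl ((hnlU x t ht).trans (add_le_add le_rfl (ENNReal.ofReal_le_ofReal ?_)))
    have : (t / Tstar) ^ ((1:ℝ)/4) ≤ 1 := by
      apply Real.rpow_le_one
      · exact div_nonneg ht.1.le hTstar.le
      · rw [div_le_one hTstar]; exact ht.2.le.trans hTT
      · norm_num
    nlinarith
  obtain ⟨u, mu, hub, hueq⟩ := exists_sol n hp1 hφ (measurable_UU n hφ δ) hfin hsup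
  have hf1 : ∀ x, ∀ t ∈ Ioo 0 T, Sg n (PP φ) x t < ⊤ := fun x t ht =>
    (le_self_add.trans (hsup x t ht)).trans_lt (hfin x t ht)
  have hNb := fun x t (ht : t ∈ Ioo 0 T) => Nl_bound n hp1 mu hub (x := x) ht
    ((le_add_self.trans (hsup x t ht)).trans_lt (hfin x t ht))
  refine ⟨u, ⟨mu, ?_⟩, ?_, ?_, ?_⟩
  · have hmem : ∀ᵐ q : Eu n × ℝ ∂(volume.prod (volume.restrict (Ioo 0 T))), q.2 ∈ Ioo 0 T :=
      Measure.quasiMeasurePreserving_snd.ae (ae_restrict_mem measurableSet_Ioo)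
    filter_upwards [hmem] with q hq
    have hcong : (fun y => heatKernel n (q.1 - y) q.2 * φ y) =ᵐ[volume]
        fun y => heatKernel n (q.1 - y) q.2 * φ₀ y := by
      filter_upwards [hae] with y hy
      rw [hy]
    refine ⟨(Sr_bound n hφ hq.1 (hf1 _ _ hq)).1.congr hcong, (hNb q.1 q.2 hq).1, ?_⟩
    rw [hueq _ _ hq, Sr, integral_congr_ae hcong, Nl, integral_prod_symm _ (hNb q.1 q.2 hq).1]
    rfl
  · refine lt_of_le_of_lt (iSup_le fun t => ?_) (ENNReal.ofReal_lt_top (r := C2))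
    exact norm_of_Zyg n (fun x => hub x t.1 t.2) (hUZ t.1 t.2.1 t.2.2.le)
  · refine lt_of_le_of_lt (iSup_le fun t => ?_) (ENNReal.ofReal_lt_top (r := C1))
    have ht0 : 0 < t.1 := t.2.1
    have hL := logFac_pos ht0
    have h1 : eLpNorm (fun x => u x t.1) ⊤ volume ≤
        ENNReal.ofReal (C1 * (t.1 ^ (-(n:ℝ)/2) * logFac t.1 ^ (-(n:ℝ)/2))) := by
      rw [eLpNorm_exponent_top]
      apply eLpNormEssSup_le_of_ae_enorm_bound
      refine Filter.Eventually.of_forall fun x => ?_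
      simp only [Real.enorm_eq_ofReal_abs]
      exact (hub x t.1 t.2).trans (hUs t.1 ht0 t.2.2.le x).1
    refine (mul_le_mul' le_rfl h1).trans (le_of_eq ?_)
    rw [← ENNReal.ofReal_mul (by positivity)]
    congr 1
    rw [neg_div, Real.rpow_neg ht0.le, Real.rpow_neg hL.le]
    have a1 : t.1 ^ ((n:ℝ)/2) ≠ 0 := by positivity
    have a2 : logFac t.1 ^ ((n:ℝ)/2) ≠ 0 := by positivity
    field_simp
  · intro η hc hs
    have hlim : ∫ x, φ₀ x * η x = ∫ x, φ x * η x := by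
      apply integral_congr_ae
      filter_upwards [hae] with x hx
      rw [hx]
    rw [hlim]
    exact conv_full n hn hφ hl hT hZ hZ2 (measurable_Nl n p mu)
      (fun x t ht => (hNb x t ht).2.trans (hnlU x t ht)) hueq hc hs
end

section
/- Let n ≥ 1, p = 1 + 2/n, and α > n/2. If φ is a locally integrable function on ℝ^n with |||φ|||_{1,α;1} < ∞, then there exists T > 0 and a solution u of the semilinear heat equation ∂_t u − Δu = |u|^{p−1}u on ℝ^n × (0,T) with initial data φ (in the Duhamel integral sense), such that sup_{t∈(0,T)} |||u(t)|||_{1,n/2;T^{1/2}} < ∞ and sup_{t∈(0,T)} t^{n/2} [log(e+1/t)]^{n/2} ‖u(t)‖_{L^∞} < ∞. -/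
open MeasureTheory Real Set ENNReal

theorem hk_nonneg (n : ℕ) (x : EuclideanSpace ℝ (Fin n)) (t : ℝ) (ht : 0 < t) : 0 ≤ heatKernel n x t := by
  unfold heatKernel; positivity

theorem hk_meas (n : ℕ) : Measurable (fun q : EuclideanSpace ℝ (Fin n) × ℝ => heatKernel n q.1 q.2) := by
  unfold heatKernel; fun_prop

theorem hk_meas' {n : ℕ} {β : Type*} [MeasurableSpace β] {f : β → EuclideanSpace ℝ (Fin n)} {g : β → ℝ}
    (hf : Measurable f) (hg : Measurable g) : Measurable (fun b => heatKernel n (f b) (g b)) :=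
  (hk_meas n).comp (hf.prodMk hg)

theorem lint_gauss (n : ℕ) (m : EuclideanSpace ℝ (Fin n)) (c : ℝ) (hc : 0 < c) :
    ∫⁻ y : EuclideanSpace ℝ (Fin n), ENNReal.ofReal (Real.exp (-c * ‖y - m‖ ^ 2)) =
      ENNReal.ofReal ((π / c) ^ ((n : ℝ) / 2)) := by
  rw [lintegral_sub_right_eq_self (fun y : EuclideanSpace ℝ (Fin n) => ENNReal.ofReal (Real.exp (-c * ‖y‖ ^ 2))) m]
  have h := GaussianFourier.integral_rexp_neg_mul_sq_norm (V := EuclideanSpace ℝ (Fin n)) hc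
  have hpos : 0 < (π / c) ^ ((n : ℝ) / 2) := by positivity
  rw [finrank_euclideanSpace_fin] at h
  rw [← h, ofReal_integral_eq_lintegral_ofReal]
  · by_contra hni
    rw [integral_undef hni] at h
    linarith
  · exact Filter.Eventually.of_forall fun _ => (Real.exp_pos _).le

theorem sq_complete {n : ℕ} (x y z : EuclideanSpace ℝ (Fin n)) (a b : ℝ) (ha : 0 < a) (hb : 0 < b) :
    -‖x - y‖ ^ 2 / (4 * a) + -‖y - z‖ ^ 2 / (4 * b) =
      -‖x - z‖ ^ 2 / (4 * (a + b)) +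
        -((a + b) / (4 * a * b)) * ‖y - ((b / (a + b)) • x + (a / (a + b)) • z)‖ ^ 2 := by
  have hab : a + b ≠ 0 := by positivity
  simp only [norm_sub_sq_real, norm_add_sq_real, norm_smul, inner_add_right, inner_smul_right,
    inner_smul_left, mul_pow, Real.norm_eq_abs, sq_abs]
  simp only [real_inner_comm y x, conj_trivial]
  field_simp
  ring

theorem hk_semigroup (n : ℕ) (x z : EuclideanSpace ℝ (Fin n)) (a b : ℝ) (ha : 0 < a) (hb : 0 < b) :
    ∫⁻ y, ENNReal.ofReal (heatKernel n (x - y) a) * ENNReal.ofReal (heatKernel n (y - z) b) =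
      ENNReal.ofReal (heatKernel n (x - z) (a + b)) := by
  have hc : 0 < (a + b) / (4 * a * b) := by positivity
  set m := (b / (a + b)) • x + (a / (a + b)) • z
  have h1 : ∀ y, ENNReal.ofReal (heatKernel n (x - y) a) * ENNReal.ofReal (heatKernel n (y - z) b) =
      ENNReal.ofReal ((4 * π * a) ^ (-(n : ℝ) / 2) * (4 * π * b) ^ (-(n : ℝ) / 2) *
        Real.exp (-‖x - z‖ ^ 2 / (4 * (a + b)))) *
      ENNReal.ofReal (Real.exp (-((a + b) / (4 * a * b)) * ‖y - m‖ ^ 2)) := by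
    intro y
    rw [← ENNReal.ofReal_mul (hk_nonneg _ _ _ ha), ← ENNReal.ofReal_mul (by positivity)]
    congr 1
    unfold heatKernel
    have := sq_complete x y z a b ha hb
    rw [mul_assoc _ (Real.exp (-‖x - z‖ ^ 2 / (4 * (a + b)))), ← Real.exp_add, ← this, Real.exp_add]
    ring
  simp_rw [h1]
  rw [lintegral_const_mul _ (by fun_prop), lint_gauss n m _ hc, ← ENNReal.ofReal_mul (by positivity)]
  congr 1
  unfold heatKernel
  have : (4 * π * a) ^ (-(n : ℝ) / 2) * (4 * π * b) ^ (-(n : ℝ) / 2) *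
      (π / ((a + b) / (4 * a * b))) ^ ((n : ℝ) / 2) = (4 * π * (a + b)) ^ (-(n : ℝ) / 2) := by
    rw [neg_div, ← Real.mul_rpow (by positivity) (by positivity), Real.rpow_neg (by positivity),
      Real.rpow_neg (by positivity), ← Real.inv_rpow (by positivity), ← Real.inv_rpow (by positivity),
      ← Real.mul_rpow (by positivity) (by positivity)]
    congr 1
    field_simp
  rw [← this]; ring

theorem hk_int_one (n : ℕ) (t : ℝ) (ht : 0 < t) :
    ∫⁻ y, ENNReal.ofReal (heatKernel n y t) = 1 := by
  have h1 : ∀ y, ENNReal.ofReal (heatKernel n y t) = ENNReal.ofReal ((4 * π * t) ^ (-(n : ℝ) / 2)) *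
      ENNReal.ofReal (Real.exp (-(1 / (4 * t)) * ‖y - 0‖ ^ 2)) := by
    intro y
    rw [← ENNReal.ofReal_mul (by positivity), sub_zero]
    unfold heatKernel
    congr 3
    ring
  simp_rw [h1]
  rw [lintegral_const_mul _ (by fun_prop), lint_gauss n 0 _ (by positivity), ← ENNReal.ofReal_mul (by positivity)]
  rw [neg_div, Real.rpow_neg (by positivity), show π / (1 / (4 * t)) = 4 * π * t by field_simp,
    inv_mul_cancel₀ (by positivity), ENNReal.ofReal_one]

/-- The heat evolution of `|φ|`. -/
noncomputable def hA (n : ℕ) (φ : EuclideanSpace ℝ (Fin n) → ℝ) (x : EuclideanSpace ℝ (Fin n)) (t : ℝ) : ℝ≥0∞ :=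
  ∫⁻ y, ENNReal.ofReal (heatKernel n (x - y) t) * ENNReal.ofReal |φ y|

theorem hA_meas (n : ℕ) (φ : EuclideanSpace ℝ (Fin n) → ℝ) (hφ : Measurable φ) :
    Measurable (fun q : EuclideanSpace ℝ (Fin n) × ℝ => hA n φ q.1 q.2) := by
  unfold hA
  apply Measurable.lintegral_prod_right (f := fun (q : EuclideanSpace ℝ (Fin n) × ℝ) y => ENNReal.ofReal (heatKernel n (q.1 - y) q.2) * ENNReal.ofReal |φ y|)
  have : Measurable fun p : (EuclideanSpace ℝ (Fin n) × ℝ) × EuclideanSpace ℝ (Fin n) => heatKernel n (p.1.1 - p.2) p.1.2 :=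
    hk_meas' (by fun_prop) (by fun_prop)
  have h2 : Measurable fun p : (EuclideanSpace ℝ (Fin n) × ℝ) × EuclideanSpace ℝ (Fin n) => |φ p.2| := by
    have := hφ.comp (measurable_snd : Measurable (Prod.snd : (EuclideanSpace ℝ (Fin n) × ℝ) × EuclideanSpace ℝ (Fin n) → _))
    exact this.norm
  exact this.ennreal_ofReal.mul h2.ennreal_ofReal

theorem hA_semigroup (n : ℕ) (φ : EuclideanSpace ℝ (Fin n) → ℝ) (hφ : Measurable φ)
    (x : EuclideanSpace ℝ (Fin n)) (a b : ℝ) (ha : 0 < a) (hb : 0 < b) :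
    ∫⁻ y, ENNReal.ofReal (heatKernel n (x - y) a) * hA n φ y b = hA n φ x (a + b) := by
  unfold hA
  have m1 : Measurable fun y => ENNReal.ofReal (heatKernel n (x - y) a) :=
    (hk_meas' (by fun_prop) (by fun_prop)).ennreal_ofReal
  have m3 : Measurable fun y => ENNReal.ofReal |φ y| := hφ.norm.ennreal_ofReal
  have m2 : ∀ y, Measurable fun z => ENNReal.ofReal (heatKernel n (y - z) b) := fun y =>
    (hk_meas' (by fun_prop) (by fun_prop)).ennreal_ofReal
  have m2' : ∀ z, Measurable fun y => ENNReal.ofReal (heatKernel n (y - z) b) := fun y =>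
    (hk_meas' (by fun_prop) (by fun_prop)).ennreal_ofReal
  have m4 : Measurable fun p : EuclideanSpace ℝ (Fin n) × EuclideanSpace ℝ (Fin n) => ENNReal.ofReal (heatKernel n (p.1 - p.2) b) :=
    (hk_meas' (by fun_prop) (by fun_prop)).ennreal_ofReal
  calc _ = ∫⁻ y, ∫⁻ z, ENNReal.ofReal (heatKernel n (x - y) a) * (ENNReal.ofReal (heatKernel n (y - z) b) * ENNReal.ofReal |φ z|) := by
        congr 1; ext y; rw [lintegral_const_mul _ ((m2 y).fun_mul m3)]
    _ = ∫⁻ z, ∫⁻ y, ENNReal.ofReal (heatKernel n (x - y) a) * (ENNReal.ofReal (heatKernel n (y - z) b) * ENNReal.ofReal |φ z|) := by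
        apply lintegral_lintegral_swap
        apply Measurable.aemeasurable
        exact (m1.comp measurable_fst).mul (m4.mul (m3.comp measurable_snd))
    _ = _ := by
        congr 1; ext z
        simp_rw [← mul_assoc]
        rw [lintegral_mul_const _ (m1.fun_mul (m2' z)), hk_semigroup n x z a b ha hb]

theorem hk_compare (n : ℕ) (x y w : EuclideanSpace ℝ (Fin n)) (t : ℝ) (ht : 0 < t)
    (h : dist w y < Real.sqrt t) :
    heatKernel n (x - y) t ≤ (Real.exp (1 / 4) * 2 ^ ((n : ℝ) / 2)) * heatKernel n (x - w) (2 * t) := by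
  unfold heatKernel
  have e1 : (2 : ℝ) ^ ((n : ℝ) / 2) * (4 * π * (2 * t)) ^ (-(n : ℝ) / 2) = (4 * π * t) ^ (-(n : ℝ) / 2) := by
    rw [show 4 * π * (2 * t) = 2 * (4 * π * t) by ring, Real.mul_rpow (by positivity) (by positivity),
      ← mul_assoc, neg_div, ← Real.rpow_add (by norm_num)]
    simp
  have hd : ‖x - w‖ ^ 2 ≤ 2 * ‖x - y‖ ^ 2 + 2 * t := by
    have h1 : ‖x - w‖ ≤ ‖x - y‖ + ‖w - y‖ := by
      have := dist_triangle_right x w y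
      simpa [dist_eq_norm] using this
    rw [dist_eq_norm] at h
    have h2 : ‖w - y‖ ^ 2 ≤ t := by
      have := Real.sq_sqrt ht.le
      nlinarith [norm_nonneg (w - y)]
    nlinarith [norm_nonneg (x - w), sq_nonneg (‖x - y‖ - ‖w - y‖)]
  have e2 : Real.exp (-‖x - y‖ ^ 2 / (4 * t)) ≤ Real.exp (1 / 4) * Real.exp (-‖x - w‖ ^ 2 / (4 * (2 * t))) := by
    rw [← Real.exp_add]
    apply Real.exp_le_exp.mpr
    rw [← sub_nonneg]
    have : 1 / 4 + -‖x - w‖ ^ 2 / (4 * (2 * t)) - -‖x - y‖ ^ 2 / (4 * t) =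
      (2 * ‖x - y‖ ^ 2 + 2 * t - ‖x - w‖ ^ 2) / (8 * t) := by field_simp; ring
    rw [this]
    apply div_nonneg <;> linarith
  calc _ ≤ (4 * π * t) ^ (-(n : ℝ) / 2) * (Real.exp (1 / 4) * Real.exp (-‖x - w‖ ^ 2 / (4 * (2 * t)))) := by gcongr
    _ = _ := by rw [← e1]; ring

theorem hA_ball (n : ℕ) (φ : EuclideanSpace ℝ (Fin n) → ℝ) (hφ : Measurable φ)
    (x : EuclideanSpace ℝ (Fin n)) (t : ℝ) (ht : 0 < t) (K : ℝ≥0∞)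
    (hK : ∀ w, ∫⁻ y in Metric.ball w (Real.sqrt t), ENNReal.ofReal |φ y| ≤ K) :
    (ENNReal.ofReal (Real.sqrt t ^ n) * volume (Metric.ball (0 : EuclideanSpace ℝ (Fin n)) 1)) * hA n φ x t ≤
      ENNReal.ofReal (Real.exp (1 / 4) * 2 ^ ((n : ℝ) / 2)) * K := by
  set D := Real.exp (1 / 4) * 2 ^ ((n : ℝ) / 2) with hD
  set r := Real.sqrt t
  have m1 : ∀ s, Measurable fun y => ENNReal.ofReal (heatKernel n (x - y) s) := fun s =>
    (hk_meas' (by fun_prop) (by fun_prop)).ennreal_ofReal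
  have m3 : Measurable fun y => ENNReal.ofReal |φ y| := hφ.norm.ennreal_ofReal
  have hvol : ∀ y : EuclideanSpace ℝ (Fin n), volume (Metric.ball y r) =
      ENNReal.ofReal (r ^ n) * volume (Metric.ball (0 : EuclideanSpace ℝ (Fin n)) 1) := by
    intro y
    rw [Measure.addHaar_ball_of_pos volume y (Real.sqrt_pos.mpr ht), finrank_euclideanSpace_fin]
  have mS : MeasurableSet {q : EuclideanSpace ℝ (Fin n) × EuclideanSpace ℝ (Fin n) | dist q.2 q.1 < r} :=
    measurableSet_lt (by fun_prop) (by fun_prop)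
  unfold hA
  rw [← lintegral_const_mul _ ((m1 t).fun_mul m3)]
  calc _ = ∫⁻ y, ∫⁻ w in Metric.ball y r, ENNReal.ofReal (heatKernel n (x - y) t) * ENNReal.ofReal |φ y| := by
        congr 1; ext y
        rw [setLIntegral_const, hvol, mul_comm]
    _ ≤ ∫⁻ y, ∫⁻ w in Metric.ball y r, (ENNReal.ofReal D * ENNReal.ofReal (heatKernel n (x - w) (2 * t))) * ENNReal.ofReal |φ y| := by
        apply lintegral_mono; intro y
        apply setLIntegral_mono (by
          exact ((m1 (2 * t)).const_mul _).mul_const _)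
        intro w hw
        gcongr
        rw [← ENNReal.ofReal_mul (by positivity)]
        exact ENNReal.ofReal_le_ofReal (hk_compare n x y w t ht hw)
    _ = ∫⁻ y, ∫⁻ w, {q : EuclideanSpace ℝ (Fin n) × EuclideanSpace ℝ (Fin n) | dist q.2 q.1 < r}.indicator
          (fun q => (ENNReal.ofReal D * ENNReal.ofReal (heatKernel n (x - q.2) (2 * t))) * ENNReal.ofReal |φ q.1|) (y, w) := by
        congr 1; ext y
        rw [← lintegral_indicator measurableSet_ball]
        rfl
    _ = ∫⁻ w, ∫⁻ y, {q : EuclideanSpace ℝ (Fin n) × EuclideanSpace ℝ (Fin n) | dist q.2 q.1 < r}.indicator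
          (fun q => (ENNReal.ofReal D * ENNReal.ofReal (heatKernel n (x - q.2) (2 * t))) * ENNReal.ofReal |φ q.1|) (y, w) := by
        apply lintegral_lintegral_swap
        apply Measurable.aemeasurable
        apply Measurable.indicator _ mS
        exact (((m1 (2 * t)).comp measurable_snd).const_mul _).mul (m3.comp measurable_fst)
    _ = ∫⁻ w, ∫⁻ y in Metric.ball w r, (ENNReal.ofReal D * ENNReal.ofReal (heatKernel n (x - w) (2 * t))) * ENNReal.ofReal |φ y| := by
        congr 1; ext w
        rw [← lintegral_indicator measurableSet_ball]
        congr 1; ext y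
        simp only [Set.indicator, Metric.mem_ball, Set.mem_ofPred_eq, dist_comm]
    _ ≤ ∫⁻ w, (ENNReal.ofReal D * ENNReal.ofReal (heatKernel n (x - w) (2 * t))) * K := by
        apply lintegral_mono; intro w
        dsimp only
        rw [lintegral_const_mul _ m3]
        gcongr
        exact hK w
    _ = _ := by
        rw [lintegral_mul_const _ ((m1 (2 * t)).const_mul _), lintegral_const_mul _ (m1 (2 * t)),
          lintegral_sub_left_eq_self (fun y => ENNReal.ofReal (heatKernel n y (2 * t))) x,
          hk_int_one n _ (by positivity), mul_one]

theorem logFac_ge_one (s : ℝ) (hs : 0 < s) : 1 ≤ logFac s := by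
  unfold logFac
  rw [Real.le_log_iff_exp_le (by positivity)]
  have : 0 < 1 / s := by positivity
  linarith

theorem logFac_compare (n : ℕ) (hn : 1 ≤ n) (c : ℝ) (hc : 0 < c) : ∃ κ : ℝ, 0 < κ ∧ ∀ t : ℝ, 0 < t → t ≤ 1 →
    logFac t ≤ κ * logFac (c * Real.sqrt t ^ n) := by
  refine ⟨Real.log (1 + c ^ 2) + 2, ?_, ?_⟩
  · have := Real.log_nonneg (show (1 : ℝ) ≤ 1 + c ^ 2 by nlinarith)
    linarith
  intro t ht ht1
  have hr : 0 < Real.sqrt t := Real.sqrt_pos.mpr ht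
  have hr1 : Real.sqrt t ≤ 1 := Real.sqrt_le_one.mpr ht1
  set X := 1 / (c * Real.sqrt t ^ n) with hX
  have hXpos : 0 < X := by positivity
  have h1 : 1 / t ≤ c ^ 2 * X ^ 2 := by
    have e : c ^ 2 * X ^ 2 = 1 / (Real.sqrt t ^ n) ^ 2 := by rw [hX]; field_simp
    rw [e]
    apply one_div_le_one_div_of_le (by positivity)
    have : Real.sqrt t ^ n ≤ Real.sqrt t := by
      calc _ ≤ Real.sqrt t ^ 1 := pow_le_pow_of_le_one hr.le hr1 hn
        _ = _ := pow_one _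
    calc _ ≤ Real.sqrt t ^ 2 := by gcongr
      _ = t := Real.sq_sqrt ht.le
  have he : 1 ≤ Real.exp 1 := Real.one_le_exp (by norm_num)
  have h2 : Real.exp 1 + 1 / t ≤ (1 + c ^ 2) * (Real.exp 1 + X) ^ 2 := by
    have : 0 ≤ c ^ 2 := sq_nonneg c
    have h3 : Real.exp 1 + X ^ 2 ≤ (Real.exp 1 + X) ^ 2 := by nlinarith
    have h4 : X ^ 2 ≤ (Real.exp 1 + X) ^ 2 := by nlinarith
    nlinarith [sq_nonneg X]
  have h5 : 1 ≤ logFac (c * Real.sqrt t ^ n) := logFac_ge_one _ (by positivity)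
  have h6 : logFac t ≤ Real.log (1 + c ^ 2) + 2 * logFac (c * Real.sqrt t ^ n) := by
    unfold logFac
    rw [← hX]
    calc _ ≤ Real.log ((1 + c ^ 2) * (Real.exp 1 + X) ^ 2) := Real.log_le_log (by positivity) h2
      _ = _ := by
        rw [Real.log_mul (by positivity) (by positivity), Real.log_pow]; norm_num
  have := Real.log_nonneg (show (1 : ℝ) ≤ 1 + c ^ 2 by nlinarith)
  nlinarith

theorem hA_sup (n : ℕ) (hn : 1 ≤ n) (φ : EuclideanSpace ℝ (Fin n) → ℝ) (hφ : Measurable φ) (α M : ℝ) (hα : 0 < α) (hM : 0 ≤ M)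
    (H : ∀ z s, 0 < s → ∀ E, MeasurableSet E → volume E = ENNReal.ofReal s →
      ∫⁻ x in E ∩ Metric.ball z 1, ENNReal.ofReal |φ x| ≤ ENNReal.ofReal (M * logFac s ^ (-α))) :
    ∃ C : ℝ, 0 < C ∧ ∀ x t, 0 < t → t ≤ 1 → hA n φ x t ≤ ENNReal.ofReal (C * (t ^ (-(n : ℝ) / 2) * logFac t ^ (-α))) := by
  set c := (volume (Metric.ball (0 : EuclideanSpace ℝ (Fin n)) 1)).toReal with hc
  have hcV : volume (Metric.ball (0 : EuclideanSpace ℝ (Fin n)) 1) = ENNReal.ofReal c :=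
    (ENNReal.ofReal_toReal measure_ball_lt_top.ne).symm
  have hcpos : 0 < c := ENNReal.toReal_pos (Metric.measure_ball_pos _ _ one_pos).ne' measure_ball_lt_top.ne
  obtain ⟨κ, hκ, hlog⟩ := logFac_compare n hn c hcpos
  set D := Real.exp (1 / 4) * 2 ^ ((n : ℝ) / 2) with hD
  have hDpos : 0 < D := by positivity
  refine ⟨D * (M * κ ^ α + 1) / c, by positivity, ?_⟩
  intro x t ht ht1
  have hr : 0 < Real.sqrt t := Real.sqrt_pos.mpr ht
  have hr1 : Real.sqrt t ≤ 1 := Real.sqrt_le_one.mpr ht1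
  have hL : 1 ≤ logFac t := logFac_ge_one t ht
  have hL' : 1 ≤ logFac (c * Real.sqrt t ^ n) := logFac_ge_one _ (by positivity)
  have hK : ∀ w, ∫⁻ y in Metric.ball w (Real.sqrt t), ENNReal.ofReal |φ y| ≤ ENNReal.ofReal ((M * κ ^ α + 1) * logFac t ^ (-α)) := by
    intro w
    have h1 := H w (c * Real.sqrt t ^ n) (by positivity) (Metric.ball w (Real.sqrt t)) measurableSet_ball (by
      rw [Measure.addHaar_ball_of_pos volume w hr, finrank_euclideanSpace_fin, hcV,
        ← ENNReal.ofReal_mul (by positivity), mul_comm])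
    rw [Set.inter_eq_left.mpr (Metric.ball_subset_ball hr1)] at h1
    refine h1.trans (ENNReal.ofReal_le_ofReal ?_)
    have h2 : logFac (c * Real.sqrt t ^ n) ^ (-α) ≤ κ ^ α * logFac t ^ (-α) := by
      rw [Real.rpow_neg (by positivity), Real.rpow_neg (by positivity), ← div_eq_mul_inv, ← one_div,
        div_le_div_iff₀ (by positivity) (by positivity), one_mul, ← Real.mul_rpow (by positivity) (by positivity)]
      exact Real.rpow_le_rpow (by positivity) (hlog t ht ht1) hα.le
    have h3 : 0 ≤ logFac t ^ (-α) := by positivity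
    nlinarith
  have h := hA_ball n φ hφ x t ht _ hK
  rw [hcV, ← ENNReal.ofReal_mul (by positivity), ← ENNReal.ofReal_mul (by positivity)] at h
  have hpos : 0 < Real.sqrt t ^ n * c := by positivity
  have h' : hA n φ x t ≤ ENNReal.ofReal (D * ((M * κ ^ α + 1) * logFac t ^ (-α))) / ENNReal.ofReal (Real.sqrt t ^ n * c) := by
    rw [ENNReal.le_div_iff_mul_le (Or.inl (ENNReal.ofReal_pos.mpr hpos).ne') (Or.inl ENNReal.ofReal_ne_top), mul_comm]
    exact h
  refine h'.trans ?_
  rw [← ENNReal.ofReal_div_of_pos hpos]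
  apply ENNReal.ofReal_le_ofReal
  apply le_of_eq
  have : t ^ (-(n : ℝ) / 2) = (Real.sqrt t ^ n)⁻¹ := by
    rw [Real.sqrt_eq_rpow, ← Real.rpow_natCast, ← Real.rpow_mul ht.le, ← Real.rpow_neg ht.le]
    congr 1; ring
  rw [this]
  field_simp

theorem time_int (β : ℝ) (hβ : 1 < β) (ε : ℝ) (hε : 0 < ε) : ∃ T : ℝ, 0 < T ∧ T ≤ 1 ∧
    ∫⁻ s in Ioo 0 T, ENNReal.ofReal (s⁻¹ * logFac s ^ (-β)) ≤ ENNReal.ofReal ε := by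
  have hint : IntegrableOn (fun s : ℝ => s⁻¹ * (-Real.log s) ^ (-β)) (Ioc 0 (1/2)) := by
    apply intervalIntegral.integrableOn_deriv_of_nonneg (g := fun s : ℝ => (-Real.log s) ^ (1 - β) / (β - 1))
    · intro x hx
      rcases hx.1.eq_or_lt with h0 | h0
      · subst h0
        have : ContinuousWithinAt (fun s : ℝ => (-Real.log s) ^ (1 - β) / (β - 1)) (Ioi 0) 0 := by
          unfold ContinuousWithinAt
          have e : (-Real.log 0) ^ (1 - β) / (β - 1) = 0 / (β - 1) := by
            rw [Real.log_zero, neg_zero, Real.zero_rpow (by linarith)]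
          change Filter.Tendsto _ _ (nhds ((-Real.log 0) ^ (1 - β) / (β - 1)))
          rw [e]
          apply Filter.Tendsto.div_const
          have h1 : Filter.Tendsto (fun s => -Real.log s) (nhdsWithin 0 (Ioi 0)) Filter.atTop :=
            Filter.tendsto_neg_atBot_atTop.comp Real.tendsto_log_nhdsGT_zero
          have h2 := tendsto_rpow_neg_atTop (show 0 < β - 1 by linarith)
          have h3 := h2.comp h1
          refine h3.congr fun s => ?_
          simp only [Function.comp, neg_sub]
        have h4 := continuousWithinAt_insert_self.mpr this
        refine h4.mono ?_
        intro y hy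
        rcases hy.1.eq_or_lt with h | h
        · left; exact h.symm
        · right; exact h
      · apply ContinuousAt.continuousWithinAt
        have hl : Real.log x < 0 := Real.log_neg h0 (by linarith [hx.2])
        apply ContinuousAt.div_const
        apply ContinuousAt.rpow_const
        · exact (Real.continuousAt_log h0.ne').neg
        · left; linarith
    · intro x hx
      have hl : Real.log x < 0 := Real.log_neg hx.1 (by linarith [hx.2])
      have h := (((Real.hasDerivAt_log hx.1.ne').neg).rpow_const (p := 1 - β) (Or.inl (by simpa using hl.ne))).div_const (β - 1)
      have e : -x⁻¹ * (1 - β) * (-Real.log) x ^ (1 - β - 1) / (β - 1) = x⁻¹ * (-Real.log x) ^ (-β) := by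
        rw [show 1 - β - 1 = -β by ring]
        have : β - 1 ≠ 0 := by linarith
        have hx0 := hx.1
        simp only [Pi.neg_apply]
        field_simp
        ring
      rw [e] at h
      exact h
    · intro x hx
      have hl : Real.log x < 0 := Real.log_neg hx.1 (by linarith [hx.2])
      have : 0 < -Real.log x := by linarith
      have := hx.1
      positivity
  have hfin : ∫⁻ s in Ioc (0:ℝ) (1/2), ENNReal.ofReal (s⁻¹ * (-Real.log s) ^ (-β)) ≠ ⊤ := by
    have := hint.lintegral_lt_top
    exact this.ne
  obtain ⟨δ, hδ, hs⟩ := exists_pos_setLIntegral_lt_of_measure_lt hfin (ε := ENNReal.ofReal ε) (by simpa using hε)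
  have : ∃ T : ℝ, 0 < T ∧ T ≤ 1 / 2 ∧ ENNReal.ofReal T < δ := by
    obtain ⟨q, hq0, hq⟩ := ENNReal.lt_iff_exists_nnreal_btwn.mp hδ
    refine ⟨min q (1/2), ?_, min_le_right _ _, ?_⟩
    · have : 0 < (q : ℝ) := by exact_mod_cast hq0
      positivity
    · refine lt_of_le_of_lt (ENNReal.ofReal_le_ofReal (min_le_left _ _)) ?_
      simpa using hq
  obtain ⟨T, hT, hT2, hTd⟩ := this
  refine ⟨T, hT, by linarith, ?_⟩
  have h := (hs (Ioo 0 T) (lt_of_le_of_lt (Measure.restrict_apply_le _ _) (by simpa using hTd))).le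
  rw [Measure.restrict_restrict measurableSet_Ioo, Set.inter_eq_left.mpr (show Ioo 0 T ⊆ Ioc 0 (1 / 2) from fun s hs => ⟨hs.1, by linarith [hs.2]⟩)] at h
  refine le_trans (setLIntegral_mono' measurableSet_Ioo ?_) h
  intro s hs
  apply ENNReal.ofReal_le_ofReal
  have hs0 := hs.1
  have hl : Real.log s < 0 := Real.log_neg hs.1 (by linarith [hs.2])
  have h1 : -Real.log s ≤ logFac s := by
    unfold logFac
    rw [← Real.log_inv]
    apply Real.log_le_log (by positivity)
    rw [one_div]; linarith [Real.exp_pos 1]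
  apply mul_le_mul_of_nonneg_left _ (by positivity)
  exact Real.rpow_le_rpow_of_nonpos (by linarith) h1 (by linarith)

theorem N_lip_aux (r a b : ℝ) (hr : 0 < r) (hb : 0 ≤ b) (hab : b ≤ a) :
    a ^ r * a - b ^ r * b ≤ (r + 1) * a ^ r * (a - b) := by
  rcases (hb.trans hab).eq_or_lt with h | h
  · have : b = 0 := by linarith
    subst h; subst this; simp
  have hbern := one_add_mul_self_le_rpow_one_add (s := b / a - 1) (by
    have : 0 ≤ b / a := by positivity
    linarith) (p := r + 1) (by linarith)
  have e1 : (1 + (b / a - 1)) ^ (r + 1) = (b ^ r * b) / (a ^ r * a) := by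
    rw [show 1 + (b / a - 1) = b / a by ring, Real.div_rpow hb h.le, Real.rpow_add_one h.ne', Real.rpow_add' hb (by linarith), Real.rpow_one]
  have hp : 0 < a ^ r := by positivity
  rw [e1, le_div_iff₀ (by positivity)] at hbern
  have e2 : (1 + (r + 1) * (b / a - 1)) * (a ^ r * a) = a ^ r * a - (r + 1) * a ^ r * (a - b) := by
    field_simp; ring
  linarith

theorem N_lip (r R a b : ℝ) (hr : 0 < r) (ha : |a| ≤ R) (hb : |b| ≤ R) :
    |(|a| ^ r * a) - |b| ^ r * b| ≤ (r + 1) * R ^ r * |a - b| := by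
  have hR : 0 ≤ R := (abs_nonneg a).trans ha
  have hRr : 0 ≤ R ^ r := by positivity
  have main : ∀ a b : ℝ, 0 ≤ b → b ≤ a → a ≤ R → |a ^ r * a - b ^ r * b| ≤ (r + 1) * R ^ r * |a - b| := by
    intro a b hb hab haR
    have ha := hb.trans hab
    rw [abs_of_nonneg (sub_nonneg.mpr hab), abs_of_nonneg]
    · refine (N_lip_aux r a b hr hb hab).trans ?_
      have := Real.rpow_le_rpow ha haR hr.le
      have h0 : 0 ≤ a - b := by linarith
      gcongr
    · have := Real.rpow_le_rpow hb hab hr.le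
      have h1 : 0 ≤ b ^ r := by positivity
      have : b ^ r * b ≤ a ^ r * a := by gcongr
      linarith
  have main2 : ∀ a b : ℝ, 0 ≤ b → 0 ≤ a → a ≤ R → b ≤ R → |a ^ r * a - b ^ r * b| ≤ (r + 1) * R ^ r * |a - b| := by
    intro a b hb ha haR hbR
    rcases le_total a b with h | h
    · rw [abs_sub_comm, abs_sub_comm a b]; exact main b a ha h hbR
    · exact main a b hb h haR
  have main3 : ∀ a b : ℝ, 0 ≤ b → 0 ≤ a → a ≤ R → b ≤ R → |a ^ r * a + b ^ r * b| ≤ (r + 1) * R ^ r * |a + b| := by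
    intro a b hb ha haR hbR
    have h1 := Real.rpow_le_rpow ha haR hr.le
    have h2 := Real.rpow_le_rpow hb hbR hr.le
    rw [abs_of_nonneg (by positivity), abs_of_nonneg (by positivity)]
    have : a ^ r * a + b ^ r * b ≤ R ^ r * (a + b) := by
      rw [mul_add]; gcongr
    have h3 : 0 ≤ r * R ^ r * (a + b) := by positivity
    linarith
  rcases le_total 0 a with h | h <;> rcases le_total 0 b with h' | h'
  · rw [abs_of_nonneg h, abs_of_nonneg h'] at *
    exact main2 a b h' h ha hb
  · rw [abs_of_nonneg h] at *
    rw [abs_of_nonpos h'] at *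
    have := main3 a (-b) (by linarith) h ha hb
    simpa [sub_eq_add_neg] using this
  · rw [abs_of_nonneg h'] at *
    rw [abs_of_nonpos h] at *
    have := main3 b (-a) (by linarith) h' hb ha
    rw [abs_sub_comm, abs_sub_comm a b]
    simpa [sub_eq_add_neg] using this
  · rw [abs_of_nonpos h, abs_of_nonpos h'] at *
    have := main2 (-b) (-a) (by linarith) (by linarith) hb ha
    rw [show -b - -a = a - b by ring] at this
    rw [show (-a) ^ r * a - (-b) ^ r * b = (-b) ^ r * -b - (-a) ^ r * -a by ring]
    exact this

theorem hA_zyg (n : ℕ) (φ : EuclideanSpace ℝ (Fin n) → ℝ) (hφ : Measurable φ) (α M : ℝ)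
    (H : ∀ z s, 0 < s → ∀ E, MeasurableSet E → volume E = ENNReal.ofReal s →
      ∫⁻ x in E ∩ Metric.ball z 1, ENNReal.ofReal |φ x| ≤ ENNReal.ofReal (M * logFac s ^ (-α)))
    (t : ℝ) (ht : 0 < t) (z : EuclideanSpace ℝ (Fin n)) (s : ℝ) (hs : 0 < s)
    (E : Set (EuclideanSpace ℝ (Fin n))) (hE : MeasurableSet E) (hEs : volume E = ENNReal.ofReal s) :
    ∫⁻ x in E ∩ Metric.ball z 1, hA n φ x t ≤ ENNReal.ofReal (M * logFac s ^ (-α)) := by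
  have m1 : Measurable fun y => ENNReal.ofReal (heatKernel n y t) :=
    (hk_meas' (by fun_prop) (by fun_prop)).ennreal_ofReal
  have m3 : Measurable fun y => ENNReal.ofReal |φ y| := hφ.norm.ennreal_ofReal
  have e : ∀ x, hA n φ x t = ∫⁻ y, ENNReal.ofReal (heatKernel n y t) * ENNReal.ofReal |φ (x - y)| := by
    intro x
    rw [← lintegral_sub_left_eq_self _ x]
    simp [hA]
  simp_rw [e]
  rw [lintegral_lintegral_swap]
  · calc _ ≤ ∫⁻ y, ENNReal.ofReal (heatKernel n y t) * ENNReal.ofReal (M * logFac s ^ (-α)) := by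
          apply lintegral_mono; intro y
          dsimp only
          rw [lintegral_const_mul _ (by exact m3.comp (measurable_id.sub_const y))]
          gcongr
          rw [← lintegral_indicator (hE.inter measurableSet_ball), ← lintegral_add_right_eq_self _ y]
          have hE' : MeasurableSet ((fun x => x + y) ⁻¹' E) := (measurable_id.add_const y) hE
          have := H (z - y) s hs ((fun x => x + y) ⁻¹' E) hE' (by rw [measure_preimage_add_right, hEs])
          refine le_trans (le_of_eq ?_) this
          rw [← lintegral_indicator (hE'.inter measurableSet_ball)]
          congr 1; ext x
          have hb : dist (x + y) z = dist x (z - y) := by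
            rw [dist_eq_norm, dist_eq_norm]; congr 1; abel
          have hiff : x + y ∈ E ∩ Metric.ball z 1 ↔ x ∈ (fun x => x + y) ⁻¹' E ∩ Metric.ball (z - y) 1 := by
            rw [Set.mem_inter_iff, Set.mem_inter_iff, Set.mem_preimage, Metric.mem_ball, Metric.mem_ball, hb]
          by_cases hx : x + y ∈ E ∩ Metric.ball z 1
          · rw [Set.indicator_of_mem hx, Set.indicator_of_mem (hiff.mp hx), add_sub_cancel_right]
          · rw [Set.indicator_of_notMem hx, Set.indicator_of_notMem (fun h => hx (hiff.mpr h))]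
    _ = _ := by rw [lintegral_mul_const _ m1, hk_int_one n t ht, one_mul]
  · apply Measurable.aemeasurable
    exact (m1.comp measurable_snd).mul (m3.comp (measurable_fst.sub measurable_snd))

/-- The Duhamel term. -/
noncomputable def duh (n : ℕ) (r : ℝ) (v : EuclideanSpace ℝ (Fin n) → ℝ → ℝ) (x : EuclideanSpace ℝ (Fin n)) (t : ℝ) : ℝ :=
  ∫ s in Set.Ioo 0 t, ∫ y, heatKernel n (x - y) (t - s) * (|v y s| ^ r * v y s)

/-- The integrand. -/
noncomputable def fD (n : ℕ) (r : ℝ) (v : EuclideanSpace ℝ (Fin n) → ℝ → ℝ) (x : EuclideanSpace ℝ (Fin n)) (t : ℝ) 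
   (ys : EuclideanSpace ℝ (Fin n) × ℝ) : ℝ :=
  heatKernel n (x - ys.1) (t - ys.2) * (|v ys.1 ys.2| ^ r * v ys.1 ys.2)

theorem N_meas {β : Type*} [MeasurableSpace β] (r : ℝ) {f : β → ℝ} (hf : Measurable f) :
    Measurable fun b => |f b| ^ r * f b := by
  have : Measurable fun b => |f b| := hf.norm
  exact (this.pow_const r).mul hf

theorem fD_meas (n : ℕ) (r : ℝ) (v : EuclideanSpace ℝ (Fin n) → ℝ → ℝ) 
    (hv : Measurable fun q : EuclideanSpace ℝ (Fin n) × ℝ => v q.1 q.2) (x : EuclideanSpace ℝ (Fin n)) (t : ℝ) :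
    Measurable (fD n r v x t) := by
  unfold fD
  exact (hk_meas' (by fun_prop) (by fun_prop)).mul (N_meas r hv)

set_option maxHeartbeats 2000000 in
theorem duh_lint (n : ℕ) (r : ℝ) (hr : 0 < r) (φ : EuclideanSpace ℝ (Fin n) → ℝ) (hφ : Measurable φ) (T : ℝ)
    (h : ℝ → ℝ) (hm : Measurable h)
    (hfin : ∀ y s, 0 < s → s < T → hA n φ y s < ⊤)
    (hh : ∀ y s, 0 < s → s < T → (r + 1) * (2 * (hA n φ y s).toReal) ^ r ≤ h s)
    (hint : ∫⁻ s in Ioo 0 T, ENNReal.ofReal (h s) ≤ ENNReal.ofReal (1 / 2))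
    (v w : EuclideanSpace ℝ (Fin n) → ℝ → ℝ)
    (hv : Measurable fun q : EuclideanSpace ℝ (Fin n) × ℝ => v q.1 q.2)
    (hw : Measurable fun q : EuclideanSpace ℝ (Fin n) × ℝ => w q.1 q.2)
    (hvA : ∀ y s, 0 < s → s < T → |v y s| ≤ 2 * (hA n φ y s).toReal)
    (hwA : ∀ y s, 0 < s → s < T → |w y s| ≤ 2 * (hA n φ y s).toReal)
    (δ : ℝ) (hδ : 0 ≤ δ)
    (hvw : ∀ y s, 0 < s → s < T → |v y s - w y s| ≤ δ * (hA n φ y s).toReal)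
    (x : EuclideanSpace ℝ (Fin n)) (t : ℝ) (ht : 0 < t) (htT : t < T) :
    ∫⁻ q, ‖fD n r v x t q - fD n r w x t q‖ₑ ∂(volume.prod (volume.restrict (Set.Ioo 0 t))) ≤
      ENNReal.ofReal (δ / 2) * hA n φ x t := by
  have m1 : ∀ s, Measurable fun y => ENNReal.ofReal (heatKernel n (x - y) s) := fun s =>
    (hk_meas' (by fun_prop) (by fun_prop)).ennreal_ofReal
  have m2 : ∀ s, Measurable fun y => hA n φ y s := fun s => 
    (hA_meas n φ hφ).comp (measurable_id.prodMk measurable_const)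
  rw [lintegral_prod_symm _ (((fD_meas n r v hv x t).fun_sub (fD_meas n r w hw x t)).enorm.aemeasurable)]
  calc _ ≤ ∫⁻ s in Ioo 0 t, ENNReal.ofReal δ * hA n φ x t * ENNReal.ofReal (h s) := by
        apply setLIntegral_mono' measurableSet_Ioo
        intro s hs
        have hs1 := hs.1
        have hs2 : s < T := hs.2.trans htT
        have hts : 0 < t - s := by linarith [hs.2]
        calc _ ≤ ∫⁻ y, ENNReal.ofReal (h s * δ) * (ENNReal.ofReal (heatKernel n (x - y) (t - s)) * hA n φ y s) := by
              apply lintegral_mono; intro y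
              dsimp only
              have hG := hk_nonneg n (x - y) _ hts
              have hlip := N_lip r _ _ _ hr (hvA y s hs1 hs2) (hwA y s hs1 hs2)
              have hA0 : 0 ≤ (hA n φ y s).toReal := ENNReal.toReal_nonneg
              have hh0 : 0 ≤ (r + 1) * (2 * (hA n φ y s).toReal) ^ r := by positivity
              have h0 : 0 ≤ h s := hh0.trans (hh y s hs1 hs2)
              conv_rhs => rw [← ENNReal.ofReal_toReal (hfin y s hs1 hs2).ne]
              rw [← ENNReal.ofReal_mul hG, ← ENNReal.ofReal_mul (by positivity), Real.enorm_eq_ofReal_abs]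
              apply ENNReal.ofReal_le_ofReal
              unfold fD
              rw [← mul_sub, abs_mul, abs_of_nonneg hG]
              calc _ ≤ heatKernel n (x - y) (t - s) * (h s * (δ * (hA n φ y s).toReal)) := by
                    apply mul_le_mul_of_nonneg_left _ hG
                    refine hlip.trans ?_
                    exact mul_le_mul (hh y s hs1 hs2) (hvw y s hs1 hs2) (abs_nonneg _) h0
                _ = _ := by ring
          _ = _ := by
              rw [lintegral_const_mul _ ((m1 _).fun_mul (m2 s)), hA_semigroup n φ hφ x _ _ hts hs1, sub_add_cancel,
                ENNReal.ofReal_mul' hδ]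
              ring
    _ ≤ ENNReal.ofReal δ * hA n φ x t * ENNReal.ofReal (1 / 2) := by
        rw [lintegral_const_mul _ hm.ennreal_ofReal]
        gcongr
        exact (lintegral_mono_set (Ioo_subset_Ioo_right htT.le)).trans hint
    _ = _ := by
        rw [div_eq_mul_one_div δ 2, ENNReal.ofReal_mul hδ]; ring

theorem duh_integrable (n : ℕ) (r : ℝ) (hr : 0 < r) (φ : EuclideanSpace ℝ (Fin n) → ℝ) (hφ : Measurable φ) (T : ℝ)
    (h : ℝ → ℝ) (hm : Measurable h)
    (hfin : ∀ y s, 0 < s → s < T → hA n φ y s < ⊤)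
    (hh : ∀ y s, 0 < s → s < T → (r + 1) * (2 * (hA n φ y s).toReal) ^ r ≤ h s)
    (hint : ∫⁻ s in Ioo 0 T, ENNReal.ofReal (h s) ≤ ENNReal.ofReal (1 / 2))
    (v : EuclideanSpace ℝ (Fin n) → ℝ → ℝ)
    (hv : Measurable fun q : EuclideanSpace ℝ (Fin n) × ℝ => v q.1 q.2)
    (hvA : ∀ y s, 0 < s → s < T → |v y s| ≤ 2 * (hA n φ y s).toReal)
    (x : EuclideanSpace ℝ (Fin n)) (t : ℝ) (ht : 0 < t) (htT : t < T) :
    Integrable (fD n r v x t) (volume.prod (volume.restrict (Set.Ioo 0 t))) := by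
  have := duh_lint n r hr φ hφ T h hm hfin hh hint v (fun _ _ => 0) hv measurable_const hvA
    (by intros; simp) 2 (by norm_num) (by simpa using hvA) x t ht htT
  refine ⟨(fD_meas n r v hv x t).aestronglyMeasurable, ?_⟩
  have h0 : ∀ q, fD n r (fun _ _ => 0) x t q = 0 := by intro q; simp [fD]
  simp only [h0, sub_zero] at this
  exact lt_of_le_of_lt this (ENNReal.mul_lt_top ENNReal.ofReal_lt_top (hfin x t ht htT))

theorem duh_contr (n : ℕ) (r : ℝ) (hr : 0 < r) (φ : EuclideanSpace ℝ (Fin n) → ℝ) (hφ : Measurable φ) (T : ℝ)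
    (h : ℝ → ℝ) (hm : Measurable h)
    (hfin : ∀ y s, 0 < s → s < T → hA n φ y s < ⊤)
    (hh : ∀ y s, 0 < s → s < T → (r + 1) * (2 * (hA n φ y s).toReal) ^ r ≤ h s)
    (hint : ∫⁻ s in Ioo 0 T, ENNReal.ofReal (h s) ≤ ENNReal.ofReal (1 / 2))
    (v w : EuclideanSpace ℝ (Fin n) → ℝ → ℝ)
    (hv : Measurable fun q : EuclideanSpace ℝ (Fin n) × ℝ => v q.1 q.2)
    (hw : Measurable fun q : EuclideanSpace ℝ (Fin n) × ℝ => w q.1 q.2)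
    (hvA : ∀ y s, 0 < s → s < T → |v y s| ≤ 2 * (hA n φ y s).toReal)
    (hwA : ∀ y s, 0 < s → s < T → |w y s| ≤ 2 * (hA n φ y s).toReal)
    (δ : ℝ) (hδ : 0 ≤ δ)
    (hvw : ∀ y s, 0 < s → s < T → |v y s - w y s| ≤ δ * (hA n φ y s).toReal)
    (x : EuclideanSpace ℝ (Fin n)) (t : ℝ) (ht : 0 < t) (htT : t < T) :
    |duh n r v x t - duh n r w x t| ≤ δ / 2 * (hA n φ x t).toReal := by
  have iv := duh_integrable n r hr φ hφ T h hm hfin hh hint v hv hvA x t ht htT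
  have iw := duh_integrable n r hr φ hφ T h hm hfin hh hint w hw hwA x t ht htT
  have hl := duh_lint n r hr φ hφ T h hm hfin hh hint v w hv hw hvA hwA δ hδ hvw x t ht htT
  have ev : duh n r v x t = ∫ q, fD n r v x t q ∂(volume.prod (volume.restrict (Set.Ioo 0 t))) := by
    rw [integral_prod_symm _ iv]; rfl
  have ew : duh n r w x t = ∫ q, fD n r w x t q ∂(volume.prod (volume.restrict (Set.Ioo 0 t))) := by
    rw [integral_prod_symm _ iw]; rfl
  rw [ev, ew, ← integral_sub iv iw]
  have h1 := (enorm_integral_le_lintegral_enorm (μ := volume.prod (volume.restrict (Set.Ioo 0 t)))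
    (fun q => fD n r v x t q - fD n r w x t q)).trans hl
  rw [Real.enorm_eq_ofReal_abs, ← ENNReal.ofReal_toReal (hfin x t ht htT).ne, ← ENNReal.ofReal_mul (by positivity)] at h1
  exact (ENNReal.ofReal_le_ofReal_iff (mul_nonneg (by positivity) ENNReal.toReal_nonneg)).mp h1

theorem duh_meas (n : ℕ) (r : ℝ) (v : EuclideanSpace ℝ (Fin n) → ℝ → ℝ)
    (hv : Measurable fun q : EuclideanSpace ℝ (Fin n) × ℝ => v q.1 q.2) :
    Measurable fun q : EuclideanSpace ℝ (Fin n) × ℝ => duh n r v q.1 q.2 := by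
  have e : ∀ q : EuclideanSpace ℝ (Fin n) × ℝ, duh n r v q.1 q.2 =
      ∫ s, {p : (EuclideanSpace ℝ (Fin n) × ℝ) × ℝ | 0 < p.2 ∧ p.2 < p.1.2}.indicator
        (fun p => ∫ y, heatKernel n (p.1.1 - y) (p.1.2 - p.2) * (|v y p.2| ^ r * v y p.2)) (q, s) := by
    intro q
    unfold duh
    rw [← integral_indicator measurableSet_Ioo]
    rfl
  simp_rw [e]
  apply StronglyMeasurable.measurable
  apply StronglyMeasurable.integral_prod_right' (f := fun z : (EuclideanSpace ℝ (Fin n) × ℝ) × ℝ => {p : (EuclideanSpace ℝ (Fin n) × ℝ) × ℝ | 0 < p.2 ∧ p.2 < p.1.2}.indicator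
        (fun p => ∫ y, heatKernel n (p.1.1 - y) (p.1.2 - p.2) * (|v y p.2| ^ r * v y p.2)) z)
  apply StronglyMeasurable.indicator
  · apply StronglyMeasurable.integral_prod_right' (f := fun z : ((EuclideanSpace ℝ (Fin n) × ℝ) × ℝ) × EuclideanSpace ℝ (Fin n) => heatKernel n (z.1.1.1 - z.2) (z.1.1.2 - z.1.2) * (|v z.2 z.1.2| ^ r * v z.2 z.1.2))
    apply Measurable.stronglyMeasurable
    refine (hk_meas' (by fun_prop) (by fun_prop)).mul (N_meas r ?_)
    exact hv.comp (f := fun z : ((EuclideanSpace ℝ (Fin n) × ℝ) × ℝ) × EuclideanSpace ℝ (Fin n) => (z.2, z.1.2)) (by fun_prop)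
  · have h1 : MeasurableSet {p : (EuclideanSpace ℝ (Fin n) × ℝ) × ℝ | 0 < p.2} := measurableSet_lt (by fun_prop) (by fun_prop)
    have h2 : MeasurableSet {p : (EuclideanSpace ℝ (Fin n) × ℝ) × ℝ | p.2 < p.1.2} := measurableSet_lt (by fun_prop) (by fun_prop)
    exact h1.inter h2

/-- The linear term. -/
noncomputable def linP (n : ℕ) (φ : EuclideanSpace ℝ (Fin n) → ℝ) (x : EuclideanSpace ℝ (Fin n)) (t : ℝ) : ℝ :=
  ∫ y, heatKernel n (x - y) t * φ y

theorem linP_meas (n : ℕ) (φ : EuclideanSpace ℝ (Fin n) → ℝ) (hφ : Measurable φ) :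
    Measurable fun q : EuclideanSpace ℝ (Fin n) × ℝ => linP n φ q.1 q.2 := by
  apply StronglyMeasurable.measurable
  apply StronglyMeasurable.integral_prod_right' (f := fun z : (EuclideanSpace ℝ (Fin n) × ℝ) × EuclideanSpace ℝ (Fin n) => heatKernel n (z.1.1 - z.2) z.1.2 * φ z.2)
  apply Measurable.stronglyMeasurable
  exact (hk_meas' (by fun_prop) (by fun_prop)).mul (hφ.comp measurable_snd)

theorem linP_enorm (n : ℕ) (φ : EuclideanSpace ℝ (Fin n) → ℝ) (x : EuclideanSpace ℝ (Fin n)) (t : ℝ) (ht : 0 < t) :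
    ∫⁻ y, ‖heatKernel n (x - y) t * φ y‖ₑ = hA n φ x t := by
  unfold hA
  congr 1; ext y
  rw [enorm_mul, Real.enorm_eq_ofReal_abs, Real.enorm_eq_ofReal_abs, abs_of_nonneg (hk_nonneg n _ t ht)]

theorem linP_integrable (n : ℕ) (φ : EuclideanSpace ℝ (Fin n) → ℝ) (hφ : Measurable φ)
    (x : EuclideanSpace ℝ (Fin n)) (t : ℝ) (ht : 0 < t) (hfin : hA n φ x t < ⊤) :
    Integrable (fun y => heatKernel n (x - y) t * φ y) := by
  refine ⟨((hk_meas' (by fun_prop) (by fun_prop)).mul hφ).aestronglyMeasurable, ?_⟩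
  unfold HasFiniteIntegral
  rw [linP_enorm n φ x t ht]; exact hfin

theorem linP_bound (n : ℕ) (φ : EuclideanSpace ℝ (Fin n) → ℝ)
    (x : EuclideanSpace ℝ (Fin n)) (t : ℝ) (ht : 0 < t) (hfin : hA n φ x t < ⊤) :
    |linP n φ x t| ≤ (hA n φ x t).toReal := by
  have h1 := enorm_integral_le_lintegral_enorm (μ := volume) (fun y => heatKernel n (x - y) t * φ y)
  rw [linP_enorm n φ x t ht, ← ENNReal.ofReal_toReal hfin.ne, Real.enorm_eq_ofReal_abs] at h1
  exact (ENNReal.ofReal_le_ofReal_iff ENNReal.toReal_nonneg).mp h1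

open Classical in
/-- Picard iterates. -/
noncomputable def pic (n : ℕ) (r T : ℝ) (φ : EuclideanSpace ℝ (Fin n) → ℝ) : ℕ → EuclideanSpace ℝ (Fin n) → ℝ → ℝ
  | 0 => fun _ _ => 0
  | k + 1 => fun x t => if 0 < t ∧ t < T then linP n φ x t + duh n r (pic n r T φ k) x t else 0

theorem fixed_point (n : ℕ) (r : ℝ) (hr : 0 < r) (φ : EuclideanSpace ℝ (Fin n) → ℝ) (hφ : Measurable φ) (T : ℝ)
    (h : ℝ → ℝ) (hm : Measurable h)
    (hfin : ∀ y s, 0 < s → s < T → hA n φ y s < ⊤)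
    (hh : ∀ y s, 0 < s → s < T → (r + 1) * (2 * (hA n φ y s).toReal) ^ r ≤ h s)
    (hint : ∫⁻ s in Ioo 0 T, ENNReal.ofReal (h s) ≤ ENNReal.ofReal (1 / 2)) :
    ∃ u : EuclideanSpace ℝ (Fin n) → ℝ → ℝ,
      Measurable (fun q : EuclideanSpace ℝ (Fin n) × ℝ => u q.1 q.2) ∧
      (∀ y s, 0 < s → s < T → |u y s| ≤ 2 * (hA n φ y s).toReal) ∧
      (∀ x t, 0 < t → t < T → Integrable (fD n r u x t) (volume.prod (volume.restrict (Set.Ioo 0 t)))) ∧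
      (∀ x t, 0 < t → t < T → u x t = linP n φ x t + duh n r u x t) := by
  have contr := duh_contr n r hr φ hφ T h hm hfin hh hint
  have pm : ∀ k, Measurable (fun q : EuclideanSpace ℝ (Fin n) × ℝ => pic n r T φ k q.1 q.2) := by
    intro k
    induction k with
    | zero => exact measurable_const
    | succ k ih =>
      simp only [pic]
      apply Measurable.ite
      · have h1 : MeasurableSet {p : EuclideanSpace ℝ (Fin n) × ℝ | 0 < p.2} := measurableSet_lt (by fun_prop) (by fun_prop)
        have h2 : MeasurableSet {p : EuclideanSpace ℝ (Fin n) × ℝ | p.2 < T} := measurableSet_lt (by fun_prop) (by fun_prop)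
        exact h1.inter h2
      · exact (linP_meas n φ hφ).add (duh_meas n r _ ih)
      · exact measurable_const
  have duh0 : ∀ x t, duh n r (fun _ _ => 0) x t = 0 := by intro x t; simp [duh]
  have succ_eq : ∀ k x t, 0 < t → t < T → pic n r T φ (k + 1) x t = linP n φ x t + duh n r (pic n r T φ k) x t := by
    intro k x t h1 h2
    simp only [pic]
    rw [if_pos ⟨h1, h2⟩]
  have pb : ∀ k y s, 0 < s → s < T → |pic n r T φ k y s| ≤ 2 * (hA n φ y s).toReal := by
    intro k
    induction k with
    | zero => intro y s _ _; simp [pic]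
    | succ k ih =>
      intro y s h1 h2
      rw [succ_eq k y s h1 h2]
      have a := linP_bound n φ y s h1 (hfin y s h1 h2)
      have b := contr (pic n r T φ k) (fun _ _ => 0) (pm k) measurable_const ih (by intros; simp) 2 (by norm_num)
        (by simpa using ih) y s h1 h2
      rw [duh0, sub_zero] at b
      have := abs_add_le (linP n φ y s) (duh n r (pic n r T φ k) y s)
      linarith
  have pd : ∀ k y s, 0 < s → s < T → |pic n r T φ (k + 1) y s - pic n r T φ k y s| ≤ (1 / 2) ^ k * 2 * (hA n φ y s).toReal := by
    intro k
    induction k with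
    | zero => 
      intro y s h1 h2
      have := pb 1 y s h1 h2
      simpa [pic] using this
    | succ k ih =>
      intro y s h1 h2
      have := contr (pic n r T φ (k + 1)) (pic n r T φ k) (pm _) (pm _) (pb _) (pb _) ((1 / 2) ^ k * 2) (by positivity) ih y s h1 h2
      rw [succ_eq (k + 1) y s h1 h2, succ_eq k y s h1 h2]
      rw [pow_succ, add_sub_add_left_eq_sub]
      refine this.trans (le_of_eq ?_)
      ring
  have pd' : ∀ y s, 0 < s → s < T → ∀ k, dist (pic n r T φ k y s) (pic n r T φ (k + 1) y s) ≤ (2 * (hA n φ y s).toReal) * (1 / 2) ^ k := by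
    intro y s h1 h2 k
    rw [dist_comm, Real.dist_eq]
    refine (pd k y s h1 h2).trans (le_of_eq (by ring))
  have hlim : ∀ q : EuclideanSpace ℝ (Fin n) × ℝ, ∃ l, Filter.Tendsto (fun k => pic n r T φ k q.1 q.2) Filter.atTop (nhds l) := by
    intro q
    by_cases hq : 0 < q.2 ∧ q.2 < T
    · exact cauchySeq_tendsto_of_complete (cauchySeq_of_le_geometric (1 / 2) _ (by norm_num) (pd' q.1 q.2 hq.1 hq.2))
    · refine ⟨0, ?_⟩
      have : ∀ k, pic n r T φ k q.1 q.2 = 0 := by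
        intro k
        cases k with
        | zero => rfl
        | succ k => simp only [pic]; rw [if_neg hq]
      simp only [this]
      exact tendsto_const_nhds
  choose U hU using hlim
  have hUm : Measurable U := measurable_of_tendsto_metrizable pm (tendsto_pi_nhds.mpr hU)
  have hUb : ∀ y s, 0 < s → s < T → |U (y, s)| ≤ 2 * (hA n φ y s).toReal := by
    intro y s h1 h2
    exact le_of_tendsto (hU (y, s)).abs (Filter.Eventually.of_forall fun k => pb k y s h1 h2)
  have hUd : ∀ k y s, 0 < s → s < T → |U (y, s) - pic n r T φ k y s| ≤ (4 * (1 / 2) ^ k) * (hA n φ y s).toReal := by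
    intro k y s h1 h2
    have := dist_le_of_le_geometric_of_tendsto (1 / 2) _ (by norm_num) (pd' y s h1 h2) (hU (y, s)) k
    rw [dist_comm, Real.dist_eq] at this
    refine this.trans (le_of_eq ?_)
    ring
  refine ⟨fun x t => U (x, t), hUm, hUb, ?_, ?_⟩
  · intro x t h1 h2
    exact duh_integrable n r hr φ hφ T h hm hfin hh hint _ hUm hUb x t h1 h2
  · intro x t h1 h2
    have t1 : Filter.Tendsto (fun k => pic n r T φ (k + 1) x t) Filter.atTop (nhds (U (x, t))) :=
      (hU (x, t)).comp (Filter.tendsto_add_atTop_nat 1)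
    have t2 : Filter.Tendsto (fun k => pic n r T φ (k + 1) x t) Filter.atTop
        (nhds (linP n φ x t + duh n r (fun x t => U (x, t)) x t)) := by
      rw [tendsto_iff_dist_tendsto_zero]
      apply squeeze_zero (g := fun k => (4 * (hA n φ x t).toReal) * (1 / 2) ^ k) (fun _ => dist_nonneg)
      · intro k
        have := contr (fun x t => U (x, t)) (pic n r T φ k) hUm (pm _) hUb (pb _) (4 * (1 / 2) ^ k) (by positivity) (hUd k) x t h1 h2
        rw [succ_eq k x t h1 h2, dist_comm, Real.dist_eq, add_sub_add_left_eq_sub]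
        refine this.trans ?_
        have h0 : 0 ≤ (1 / 2 : ℝ) ^ k * (hA n φ x t).toReal := mul_nonneg (by positivity) ENNReal.toReal_nonneg
        linarith
      · have := (tendsto_pow_atTop_nhds_zero_of_lt_one (r := (1 / 2 : ℝ)) (by norm_num) (by norm_num)).const_mul (4 * (hA n φ x t).toReal)
        simpa using this
    exact tendsto_nhds_unique t1 t2

theorem core (n : ℕ) (hn : 1 ≤ n) (φ : EuclideanSpace ℝ (Fin n) → ℝ) (hφ : Measurable φ) (α M : ℝ)
    (hα : (n : ℝ) / 2 < α) (hM : 0 ≤ M)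
    (H : ∀ z s, 0 < s → ∀ E, MeasurableSet E → volume E = ENNReal.ofReal s →
      ∫⁻ x in E ∩ Metric.ball z 1, ENNReal.ofReal |φ x| ≤ ENNReal.ofReal (M * logFac s ^ (-α))) :
    ∃ T : ℝ, 0 < T ∧ T ≤ 1 ∧ (∀ y s, 0 < s → s < T → hA n φ y s < ⊤) ∧
      (∃ C : ℝ, 0 < C ∧ ∀ x t, 0 < t → t < T → (hA n φ x t).toReal ≤ C * (t ^ (-(n : ℝ) / 2) * logFac t ^ (-α))) ∧
      ∃ u : EuclideanSpace ℝ (Fin n) → ℝ → ℝ,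
      Measurable (fun q : EuclideanSpace ℝ (Fin n) × ℝ => u q.1 q.2) ∧
      (∀ y s, 0 < s → s < T → |u y s| ≤ 2 * (hA n φ y s).toReal) ∧
      (∀ x t, 0 < t → t < T → Integrable (fD n (2 / n) u x t) (volume.prod (volume.restrict (Set.Ioo 0 t)))) ∧
      (∀ x t, 0 < t → t < T → u x t = linP n φ x t + duh n (2 / n) u x t) := by
  have hn0 : (0 : ℝ) < n := by exact_mod_cast hn
  obtain ⟨C, hC, hsup⟩ := hA_sup n hn φ hφ α M (by linarith [show 0 < (n : ℝ) / 2 by positivity]) hM H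
  set r : ℝ := 2 / n with hrdef
  have hr : 0 < r := by positivity
  set K := (r + 1) * (2 * C) ^ r with hK
  have hKpos : 0 < K := by positivity
  have hβ : 1 < α * r := by
    rw [hrdef, mul_div_assoc', lt_div_iff₀ hn0]; linarith
  obtain ⟨T, hT, hT1, hTint⟩ := time_int (α * r) hβ (1 / (2 * K)) (by positivity)
  have hfin : ∀ y s, 0 < s → s < T → hA n φ y s < ⊤ := fun y s h1 h2 =>
    lt_of_le_of_lt (hsup y s h1 (by linarith)) ENNReal.ofReal_lt_top
  have hreal : ∀ x t, 0 < t → t < T → (hA n φ x t).toReal ≤ C * (t ^ (-(n : ℝ) / 2) * logFac t ^ (-α)) := by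
    intro x t h1 h2
    have := logFac_ge_one t h1
    exact ENNReal.toReal_le_of_le_ofReal (by positivity) (hsup x t h1 (by linarith))
  have hlm : Measurable logFac := by unfold logFac; fun_prop
  have hgm : Measurable fun s : ℝ => s⁻¹ * logFac s ^ (-(α * r)) := measurable_inv.mul (hlm.pow_const _)
  refine ⟨T, hT, hT1, hfin, ⟨C, hC, hreal⟩, ?_⟩
  apply fixed_point n r hr φ hφ T (fun s => K * (s⁻¹ * logFac s ^ (-(α * r)))) (hgm.const_mul K) hfin
  · intro y s h1 h2
    have hL := logFac_ge_one s h1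
    have hLp : 0 < logFac s := by linarith
    have h3 : (2 * (hA n φ y s).toReal) ^ r ≤ (2 * C * (s ^ (-(n : ℝ) / 2) * logFac s ^ (-α))) ^ r := by
      apply Real.rpow_le_rpow (mul_nonneg (by norm_num) ENNReal.toReal_nonneg) _ hr.le
      linarith [hreal y s h1 h2]
    have h4 : (2 * C * (s ^ (-(n : ℝ) / 2) * logFac s ^ (-α))) ^ r = (2 * C) ^ r * (s⁻¹ * logFac s ^ (-(α * r))) := by
      rw [Real.mul_rpow (x := 2 * C) (by positivity) (by positivity),
        Real.mul_rpow (x := s ^ (-(n : ℝ) / 2)) (by positivity) (by positivity),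
        ← Real.rpow_mul h1.le, ← Real.rpow_mul hLp.le]
      congr 2
      · rw [show -(n : ℝ) / 2 * r = -1 by rw [hrdef]; field_simp, Real.rpow_neg_one]
      · congr 1; ring
    rw [h4] at h3
    rw [hK, mul_assoc]
    gcongr
  · have : ∀ s, ENNReal.ofReal (K * (s⁻¹ * logFac s ^ (-(α * r)))) = ENNReal.ofReal K * ENNReal.ofReal (s⁻¹ * logFac s ^ (-(α * r))) :=
      fun s => ENNReal.ofReal_mul hKpos.le
    simp_rw [this]
    rw [lintegral_const_mul _ hgm.ennreal_ofReal]
    calc _ ≤ ENNReal.ofReal K * ENNReal.ofReal (1 / (2 * K)) := by gcongr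
      _ = _ := by
        rw [← ENNReal.ofReal_mul hKpos.le]; congr 1; field_simp

theorem stmt1 (n : ℕ) (hn : 1 ≤ n) (p : ℝ) (hp : p = 1 + 2 / n)
    (α : ℝ) (hα : (n : ℝ) / 2 < α) :
    ∀ φ : EuclideanSpace ℝ (Fin n) → ℝ, LocallyIntegrable φ volume →
      zygNormUL n 1 α 1 φ < ⊤ →
      ∃ T > (0 : ℝ), ∃ u : EuclideanSpace ℝ (Fin n) → ℝ → ℝ,
        IsSolution n p T φ u ∧
        (⨆ t : Set.Ioo (0 : ℝ) T,
          zygNormUL n 1 ((n : ℝ) / 2) (T ^ ((1 : ℝ) / 2)) (fun x => u x t.1)) < ⊤ ∧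
        (⨆ t : Set.Ioo (0 : ℝ) T,
          ENNReal.ofReal (t.1 ^ ((n : ℝ) / 2) * logFac t.1 ^ ((n : ℝ) / 2)) *
            eLpNorm (fun x => u x t.1) ⊤ volume) < ⊤ := by
  intro φ₀ hloc hz
  obtain ⟨φ, hφs, hae⟩ := hloc.aestronglyMeasurable
  have hφ : Measurable φ := hφs.measurable
  set M := (zygNormUL n 1 α 1 φ₀).toReal with hMdef
  have hM : 0 ≤ M := ENNReal.toReal_nonneg
  have hMe : zygNormUL n 1 α 1 φ₀ = ENNReal.ofReal M := (ENNReal.ofReal_toReal hz.ne).symm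
  have hn0 : (0 : ℝ) < n := by exact_mod_cast hn
  have H : ∀ z s, 0 < s → ∀ E, MeasurableSet E → volume E = ENNReal.ofReal s →
      ∫⁻ x in E ∩ Metric.ball z 1, ENNReal.ofReal |φ x| ≤ ENNReal.ofReal (M * logFac s ^ (-α)) := by
    intro z s hs E hE hEs
    have hLp : 0 < logFac s := by linarith [logFac_ge_one s hs]
    have h1 : ENNReal.ofReal (logFac s) ^ α * ∫⁻ x in E ∩ Metric.ball z 1, ENNReal.ofReal |φ x| ≤ ENNReal.ofReal M := by
      rw [← hMe]
      unfold zygNormUL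
      refine le_trans ?_ (le_iSup _ z)
      unfold zygNorm
      refine le_trans ?_ (le_iSup _ (⟨s, hs⟩ : Set.Ioi (0 : ℝ)))
      simp only [div_one, ENNReal.rpow_one]
      gcongr
      refine le_trans ?_ (le_iSup _ (⟨E, hE, hEs⟩ : {E : Set (EuclideanSpace ℝ (Fin n)) //
          MeasurableSet E ∧ volume E = ENNReal.ofReal s}))
      dsimp only
      rw [← lintegral_indicator (hE.inter measurableSet_ball), ← lintegral_indicator hE]
      apply lintegral_mono_ae
      filter_upwards [hae] with x hx
      by_cases hxE : x ∈ E <;> by_cases hxB : x ∈ Metric.ball z 1 <;>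
        simp only [Set.indicator, Set.mem_inter_iff, hxE, hxB, hx, Real.rpow_one, and_true, and_false, if_true, if_false, le_refl, zero_le]
    rw [ENNReal.ofReal_rpow_of_pos hLp] at h1
    have hpos : 0 < logFac s ^ α := by positivity
    rw [Real.rpow_neg hLp.le, ← div_eq_mul_inv, ENNReal.ofReal_div_of_pos hpos,
      ENNReal.le_div_iff_mul_le (Or.inl (ENNReal.ofReal_pos.mpr hpos).ne') (Or.inl ENNReal.ofReal_ne_top), mul_comm]
    exact h1
  obtain ⟨T, hT, hT1, hfin, ⟨C, hC, hreal⟩, u, hum, hub, hui, hueq⟩ := core n hn φ hφ α M hα hM H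
  have hpr : p - 1 = 2 / n := by rw [hp]; ring
  refine ⟨T, hT, u, ⟨hum, ?_⟩, ?_, ?_⟩
  · have : (volume : Measure (EuclideanSpace ℝ (Fin n))).prod (volume.restrict (Set.Ioo 0 T)) =
        ((volume : Measure (EuclideanSpace ℝ (Fin n))).prod (volume : Measure ℝ)).restrict (Set.univ ×ˢ Set.Ioo 0 T) := by
      rw [← Measure.prod_restrict, Measure.restrict_univ]
    rw [this]
    apply ae_restrict_of_forall_mem (MeasurableSet.univ.prod measurableSet_Ioo)
    rintro ⟨x, t⟩ ⟨_, ht1, ht2⟩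
    simp only at ht1 ht2 ⊢
    have hG : (fun y => heatKernel n (x - y) t * φ y) =ᵐ[volume] fun y => heatKernel n (x - y) t * φ₀ y := by
      filter_upwards [hae] with y hy
      rw [hy]
    rw [hpr]
    refine ⟨(linP_integrable n φ hφ x t ht1 (hfin x t ht1 ht2)).congr hG, hui x t ht1 ht2, ?_⟩
    rw [← integral_congr_ae hG]
    exact hueq x t ht1 ht2
  · refine lt_of_le_of_lt (b := ENNReal.ofReal (2 * M)) ?_ ENNReal.ofReal_lt_top
    apply iSup_le; rintro ⟨t, ht1, ht2⟩
    apply iSup_le; intro z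
    apply iSup_le; rintro ⟨s, hs⟩
    have hs : 0 < s := hs
    simp only [div_one, ENNReal.rpow_one, ENNReal.mul_iSup]
    apply iSup_le; rintro ⟨E, hE, hEs⟩
    have hL := logFac_ge_one s hs
    have hLp : 0 < logFac s := by linarith
    have hTb : T ^ ((1 : ℝ) / 2) ≤ 1 := Real.rpow_le_one hT.le hT1 (by norm_num)
    have h1 := hA_zyg n φ hφ α M H t ht1 z s hs E hE hEs
    have h2 : ∫⁻ x in E, ENNReal.ofReal (|(Metric.ball z (T ^ ((1 : ℝ) / 2))).indicator (fun x => u x t) x| ^ (1 : ℝ)) ≤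
        ENNReal.ofReal 2 * ENNReal.ofReal (M * logFac s ^ (-α)) := by
      refine le_trans ?_ (mul_le_mul_right h1 _)
      rw [← lintegral_const_mul' _ _ ENNReal.ofReal_ne_top,
        ← lintegral_indicator (hE.inter measurableSet_ball), ← lintegral_indicator hE]
      apply lintegral_mono; intro x
      dsimp only
      by_cases hxE : x ∈ E
      · by_cases hxB : x ∈ Metric.ball z (T ^ ((1 : ℝ) / 2))
        · have hxB' := Metric.ball_subset_ball hTb hxB
          rw [Set.indicator_of_mem hxE, Set.indicator_of_mem hxB, Set.indicator_of_mem (show x ∈ E ∩ Metric.ball z 1 from ⟨hxE, hxB'⟩), Real.rpow_one]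
          conv_rhs => rw [← ENNReal.ofReal_toReal (hfin x t ht1 ht2).ne]
          rw [← ENNReal.ofReal_mul (by norm_num)]
          exact ENNReal.ofReal_le_ofReal (hub x t ht1 ht2)
        · rw [Set.indicator_of_mem hxE, Set.indicator_of_notMem hxB]
          simp
      · rw [Set.indicator_of_notMem hxE]; exact zero_le
    refine (mul_le_mul_right h2 _).trans ?_
    rw [ENNReal.ofReal_rpow_of_pos hLp, ← ENNReal.ofReal_mul (by norm_num), ← ENNReal.ofReal_mul (by positivity)]
    apply ENNReal.ofReal_le_ofReal
    have h3 : logFac s ^ ((n : ℝ) / 2) * logFac s ^ (-α) ≤ 1 := by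
      rw [← Real.rpow_add hLp]
      exact Real.rpow_le_one_of_one_le_of_nonpos hL (by linarith)
    nlinarith
  · refine lt_of_le_of_lt (b := ENNReal.ofReal (2 * C)) ?_ ENNReal.ofReal_lt_top
    apply iSup_le; rintro ⟨t, ht1, ht2⟩
    dsimp only
    have hL := logFac_ge_one t ht1
    have hLp : 0 < logFac t := by linarith
    have h1 : eLpNorm (fun x => u x t) ⊤ volume ≤ ENNReal.ofReal (2 * (C * (t ^ (-(n : ℝ) / 2) * logFac t ^ (-α)))) := by
      rw [eLpNorm_exponent_top]
      apply eLpNormEssSup_le_of_ae_bound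
      filter_upwards with x
      rw [Real.norm_eq_abs]
      linarith [hub x t ht1 ht2, hreal x t ht1 ht2]
    refine (mul_le_mul_right h1 _).trans ?_
    rw [← ENNReal.ofReal_mul (by positivity)]
    apply ENNReal.ofReal_le_ofReal
    have h3 : logFac t ^ ((n : ℝ) / 2) * logFac t ^ (-α) ≤ 1 := by
      rw [← Real.rpow_add hLp]
      exact Real.rpow_le_one_of_one_le_of_nonpos hL (by linarith)
    have h4 : t ^ ((n : ℝ) / 2) * t ^ (-(n : ℝ) / 2) = 1 := by
      rw [← Real.rpow_add ht1, show (n : ℝ) / 2 + -(n : ℝ) / 2 = 0 by ring, Real.rpow_zero]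
    calc _ = 2 * C * ((t ^ ((n : ℝ) / 2) * t ^ (-(n : ℝ) / 2)) * (logFac t ^ ((n : ℝ) / 2) * logFac t ^ (-α))) := by ring
      _ ≤ 2 * C := by rw [h4, one_mul]; nlinarith
end
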